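/- A smooth projective curve C of genus 5 is trigonal (admits a degree-3 map to P¹) if and only if it can be represented as a plane quintic with exactly one singularity of delta invariant 1 (i.e., a node or an ordinary cusp). -/

import Mathlib

open Polynomial IntermediateField

noncomputable section

/-- The globally regular (Kähler) differentials of a one-dimensional function field K/k:
those ω ∈ Ω_{K/k} which, for every valuation subring A of K containing k (i.e. every
k-subalgebra A of K such that for each nonzero z ∈ K either z or z⁻¹ lies in A), lie in
the image of Ω_{A/k} → Ω_{K/k}.  For the function field of a smooth projective curve C
over an algebraically closed field k this is H⁰(C, Ω¹_C), whose k-dimension is the genus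
of C. -/
def RegularDifferentials (k K : Type*) [Field k] [Field K] [Algebra k K] :
    Set (KaehlerDifferential k K) :=
  {ω | ∀ A : Subalgebra k K, (∀ z : K, z ≠ 0 → z ∈ A ∨ z⁻¹ ∈ A) →
    ω ∈ Set.range (KaehlerDifferential.map k k A K)}

/-- C (given by its function field K over k) has genus 5: the space of globally regular
differentials has k-dimension 5. -/
def HasGenusFive (k K : Type*) [Field k] [Field K] [Algebra k K] : Prop :=
  Module.rank k (Submodule.span k (RegularDifferentials k K)) = 5

/-- C (given by its function field K over k) is trigonal: it admits a degree-3 map to P¹,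
i.e. there is x ∈ K transcendental over k with [K : k(x)] = 3. -/
def Trigonal (k K : Type*) [Field k] [Field K] [Algebra k K] : Prop :=
  ∃ x : K, Transcendental k x ∧
    Module.finrank (IntermediateField.adjoin k ({x} : Set K)) K = 3

/-- Dehomogenization of a ternary form at Z = 1. -/
def dehomZ (k : Type*) [CommRing k] (F : MvPolynomial (Fin 3) k) :
    MvPolynomial (Fin 2) k :=
  MvPolynomial.aeval
    (fun i : Fin 3 =>
      if i = 0 then MvPolynomial.X 0 else if i = 1 then MvPolynomial.X 1 else 1) F

/-- The plane projective curve F = 0 is singular at the point with homogeneous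
coordinates p. -/
def IsSingAt (k : Type*) [CommRing k] (F : MvPolynomial (Fin 3) k) (p : Fin 3 → k) :
    Prop :=
  MvPolynomial.eval p F = 0 ∧ ∀ i, MvPolynomial.eval p (MvPolynomial.pderiv i F) = 0

/-- The affine plane curve f = 0 has a node (an ordinary double point, locally xy = 0) at
the origin: f has no terms of degree < 2 there (assumed via the singularity condition) and
its quadratic part is a product of two non-proportional linear forms. -/
def NodeAtOrigin (k : Type*) [CommRing k] (f : MvPolynomial (Fin 2) k) : Prop :=
  ∃ l₁ l₂ : MvPolynomial (Fin 2) k, l₁.IsHomogeneous 1 ∧ l₂.IsHomogeneous 1 ∧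
    l₁ ≠ 0 ∧ l₂ ≠ 0 ∧ MvPolynomial.homogeneousComponent 2 f = l₁ * l₂ ∧
    ∀ c : k, l₂ ≠ c • l₁

/-- The affine plane curve f = 0 has an ordinary cusp (locally y² = x³) at the origin:
its quadratic part is the square l² of a nonzero linear form (a double tangent line), and
l does not divide the cubic part. -/
def CuspAtOrigin (k : Type*) [CommRing k] (f : MvPolynomial (Fin 2) k) : Prop :=
  ∃ l : MvPolynomial (Fin 2) k, l.IsHomogeneous 1 ∧ l ≠ 0 ∧
    MvPolynomial.homogeneousComponent 2 f = l ^ 2 ∧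
    ¬ l ∣ MvPolynomial.homogeneousComponent 3 f

/-- C (given by its function field K over k) can be represented as a plane quintic with
precisely one singularity, of delta invariant 1: there is an irreducible ternary quintic
form F over k whose only singular point is (0 : 0 : 1) (after a choice of coordinates),
which is a node or an ordinary cusp of the affine curve f(x, y) = F(x, y, 1) = 0, and
whose field of rational functions is K, i.e. K = k(x, y) for some x, y ∈ K with
f(x, y) = 0. -/
def HasPlaneQuinticModel (k K : Type*) [Field k] [Field K] [Algebra k K] : Prop :=
  ∃ F : MvPolynomial (Fin 3) k, F.IsHomogeneous 5 ∧ Irreducible F ∧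
    IsSingAt k F ![0, 0, 1] ∧
    (∀ p : Fin 3 → k, p ≠ 0 → IsSingAt k F p → ∃ c : k, p = c • ![0, 0, 1]) ∧
    (NodeAtOrigin k (dehomZ k F) ∨ CuspAtOrigin k (dehomZ k F)) ∧
    ∃ x y : K, IntermediateField.adjoin k ({x, y} : Set K) = ⊤ ∧
      MvPolynomial.aeval ![x, y] (dehomZ k F) = 0

namespace Trig

variable {k K : Type*} [Field k] [Field K] [Algebra k K]

/-- valuation subalgebras -/
def IsVal (A : Subalgebra k K) : Prop := ∀ z : K, z ≠ 0 → z ∈ A ∨ z⁻¹ ∈ A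

/-- nonunits of a subalgebra -/
def NU (A : Subalgebra k K) (z : K) : Prop := z ∈ A ∧ (z = 0 ∨ z⁻¹ ∉ A)

lemma NU.mul_left {A : Subalgebra k K} {z w : K} (hw : w ∈ A) (hz : NU A z) : NU A (w * z) := by
  refine ⟨mul_mem hw hz.1, ?_⟩
  rcases hz.2 with h | h
  · left; simp [h]
  · by_cases hw0 : w = 0
    · left; simp [hw0]
    right
    intro h2
    apply h
    have : z⁻¹ = w * (w * z)⁻¹ := by
      rw [mul_inv]; field_simp
    rw [this]
    exact mul_mem hw h2

lemma NU.mul_right {A : Subalgebra k K} {z w : K} (hz : NU A z) (hw : w ∈ A) : NU A (z * w) := by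
  rw [mul_comm]; exact hz.mul_left hw

lemma NU.neg {A : Subalgebra k K} {z : K} (hz : NU A z) : NU A (-z) := by
  have := hz.mul_left (neg_mem (one_mem A)); simpa using this

lemma NU.add {A : Subalgebra k K} (hA : IsVal A) {z w : K} (hz : NU A z) (hw : NU A w) :
    NU A (z + w) := by
  by_cases hz0 : z = 0
  · simpa [hz0] using hw
  by_cases hw0 : w = 0
  · simpa [hw0] using hz
  rcases hA (z / w) (div_ne_zero hz0 hw0) with h | h
  · have : z + w = (z / w + 1) * w := by field_simp
    rw [this]
    exact hw.mul_left (add_mem h (one_mem A))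
  · have : z + w = ((z / w)⁻¹ + 1) * z := by field_simp; ring
    rw [this]
    exact hz.mul_left (add_mem h (one_mem A))

lemma NU.sub {A : Subalgebra k K} (hA : IsVal A) {z w : K} (hz : NU A z) (hw : NU A w) :
    NU A (z - w) := by
  rw [sub_eq_add_neg]; exact hz.add hA hw.neg

lemma not_NU_algebraMap {A : Subalgebra k K} {c : k} (h : NU A (algebraMap k K c)) : c = 0 := by
  rcases h.2 with h | h
  · simpa using h
  · exfalso; apply h
    rw [← map_inv₀]; exact A.algebraMap_mem _

lemma not_NU_one {A : Subalgebra k K} (h : NU A 1) : False := by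
  have : NU A (algebraMap k K 1) := by simpa using h
  simpa using not_NU_algebraMap this

lemma inv_mem_of_not_NU {A : Subalgebra k K} {z : K} (hz : z ∈ A) (h : ¬ NU A z) :
    z ≠ 0 ∧ z⁻¹ ∈ A := by
  unfold NU at h; push Not at h; exact h hz

lemma NU.prime {A : Subalgebra k K} {z w : K} (hz : z ∈ A) (hw : w ∈ A) (h : NU A (z * w)) :
    NU A z ∨ NU A w := by
  by_contra hh
  push Not at hh
  have h1 := inv_mem_of_not_NU hz hh.1
  have h2 := inv_mem_of_not_NU hw hh.2
  rcases h.2 with h | h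
  · exact (mul_ne_zero h1.1 h2.1) h
  · apply h; rw [mul_inv]; exact mul_mem h1.2 h2.2

lemma NU_of_inv_not_mem {A : Subalgebra k K} (hA : IsVal A) {z : K} (hz : z ∉ A) : NU A z⁻¹ := by
  have hz0 : z ≠ 0 := by rintro rfl; exact hz (zero_mem A)
  refine ⟨(hA z hz0).resolve_left hz, Or.inr (by simpa using hz)⟩

lemma aeval_mem (A : Subalgebra k K) {y : K} (hy : y ∈ A) (P : k[X]) : aeval y P ∈ A := by
  have h := (aeval (⟨y, hy⟩ : A) P).2
  have h2 : ((aeval (⟨y, hy⟩ : A) P : A) : K) = aeval y P :=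
    (Polynomial.aeval_algHom_apply A.val (⟨y, hy⟩ : A) P).symm
  rwa [h2] at h

lemma NU_root [IsAlgClosed k] {A : Subalgebra k K} {y : K} (hy : y ∈ A) :
    ∀ (n : ℕ) (P : k[X]), P.natDegree = n → P ≠ 0 → NU A (aeval y P) →
      ∃ c : k, NU A (y - algebraMap k K c) := by
  intro n
  induction n with
  | zero =>
    intro P hP hP0 h
    rw [Polynomial.eq_C_of_natDegree_eq_zero hP] at h hP0
    rw [aeval_C] at h
    have := not_NU_algebraMap h
    simp [this] at hP0
  | succ n ih =>
    intro P hP hP0 h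
    obtain ⟨c, hc⟩ := IsAlgClosed.exists_root P (by
      intro h0; rw [natDegree_eq_of_degree_eq_some (n := 0) h0] at hP; omega)
    obtain ⟨Q, rfl⟩ := dvd_iff_isRoot.mpr hc
    have hQ0 : Q ≠ 0 := right_ne_zero_of_mul hP0
    rw [natDegree_mul (X_sub_C_ne_zero c) hQ0, natDegree_X_sub_C] at hP
    rw [map_mul] at h
    rcases h.prime (aeval_mem A hy _) (aeval_mem A hy _) with h | h
    · exact ⟨c, by simpa using h⟩
    · exact ih Q (by omega) hQ0 h

lemma NU_congr {A : Subalgebra k K} {y : K} (hy : y ∈ A) {c : k}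
    (h : NU A (y - algebraMap k K c)) (P : k[X]) :
    NU A (aeval y P - algebraMap k K (P.eval c)) := by
  obtain ⟨Q, hQ⟩ := X_sub_C_dvd_sub_C_eval (p := P) (a := c)
  have := congrArg (aeval y) hQ
  simp only [map_sub, aeval_C, map_mul, aeval_X] at this
  rw [this]
  exact h.mul_right (aeval_mem A hy _)

/-- elements regular wherever `x` is regular -/
def O (x : K) : Subalgebra k K where
  carrier := {y | ∀ A : Subalgebra k K, IsVal A → x ∈ A → y ∈ A}
  mul_mem' ha hb := fun A hA hx => mul_mem (ha A hA hx) (hb A hA hx)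
  add_mem' ha hb := fun A hA hx => add_mem (ha A hA hx) (hb A hA hx)
  algebraMap_mem' r := fun A _ _ => A.algebraMap_mem r

lemma mem_O {x y : K} : y ∈ O (k := k) x ↔ ∀ A : Subalgebra k K, IsVal A → x ∈ A → y ∈ A := Iff.rfl

lemma self_mem_O (x : K) : x ∈ O (k := k) x := fun _ _ h => h

lemma ev_mem_O (x : K) (p : k[X]) : aeval x p ∈ O (k := k) x := aeval_mem _ (self_mem_O x) p

/-- quadratic integral elements -/
lemma quad_mem_O {x z u v : K} (hu : u ∈ O (k := k) x) (hv : v ∈ O (k := k) x)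
    (h : z * z = u + v * z) : z ∈ O (k := k) x := by
  intro A hA hx
  by_cases hz0 : z = 0
  · rw [hz0]; exact zero_mem A
  rcases hA z hz0 with h1 | h1
  · exact h1
  · have : z = u * z⁻¹ + v := by
      field_simp; linear_combination h
    rw [this]
    exact add_mem (mul_mem (hu A hA hx) h1) (hv A hA hx)

/-- conversion to valuation subrings -/
lemma integral_of_mem_all {s : Set K} {y : K}
    (h : ∀ A : Subalgebra k K, IsVal A → s ⊆ A → y ∈ A) : IsIntegral (Algebra.adjoin k s) y := by
  have key := iInf_valuationSubring_superset (K := K) (s := Set.range (algebraMap k K) ∪ s)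
  have hy : y ∈ (⨅ V : {V : ValuationSubring K //
      (Set.range (algebraMap k K) ∪ s) ⊆ V.toSubring}, V.1.toSubring) := by
    rw [Subring.mem_iInf]
    rintro ⟨V, hV⟩
    let A : Subalgebra k K :=
      { V.toSubring with algebraMap_mem' := fun r => hV (Or.inl ⟨r, rfl⟩) }
    exact h A (fun z _ => V.mem_or_inv_mem z) (fun z hz => hV (Or.inr hz))
  rw [key] at hy
  have hy2 : IsIntegral (Subring.closure (Set.range (algebraMap k K) ∪ s)) y := hy
  rw [← Algebra.adjoin_eq_ring_closure] at hy2
  exact hy2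

lemma const_of_mem [IsAlgClosed k] {x y : K} (hx : x ≠ 0) (h1 : y ∈ O (k := k) x) (h2 : y ∈ O (k := k) x⁻¹) :
    ∃ c : k, algebraMap k K c = y := by
  have h := integral_of_mem_all (k := k) (s := ∅) (y := y) (fun A hA _ => by
    rcases hA x hx with h | h
    · exact h1 A hA h
    · exact h2 A hA h)
  have h' : IsIntegral k y := by
    rw [Algebra.adjoin_empty] at h
    have : Algebra.IsIntegral k (⊥ : Subalgebra k K) :=
      Algebra.isIntegral_of_surjective (Algebra.bijective_algebraMap_iff.mpr (by
        ext z; simp [Algebra.mem_top])).2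
    exact isIntegral_trans y h
  exact minpoly.mem_range_of_degree_eq_one k y
    (IsAlgClosed.degree_eq_one_of_irreducible k (minpoly.irreducible h'))

end Trig

namespace Trig

variable {k K : Type*} [Field k] [Field K] [Algebra k K]

/-- the trigonality condition for `x` -/
def T3 (k : Type*) {K : Type*} [Field k] [Field K] [Algebra k K] (x : K) : Prop :=
  Transcendental k x ∧ Module.finrank (IntermediateField.adjoin k ({x} : Set K)) K = 3

lemma T3.ev_eq_zero {x : K} (h : T3 k x) {p : k[X]} (hp : aeval x p = 0) : p = 0 :=
  (transcendental_iff.mp h.1) p hp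

lemma T3.ev_ne {x : K} (h : T3 k x) {p : k[X]} (hp : p ≠ 0) : aeval x p ≠ 0 :=
  fun h2 => hp (h.ev_eq_zero h2)

lemma T3.ne_zero {x : K} (h : T3 k x) : x ≠ 0 := by
  rintro rfl; exact h.1 isAlgebraic_zero

lemma T3.sub_ne {x : K} (h : T3 k x) (c : k) : x - algebraMap k K c ≠ 0 := by
  have := h.ev_ne (X_sub_C_ne_zero c); simpa using this

lemma adjoin_inv (x : K) : IntermediateField.adjoin k ({x⁻¹} : Set K) =
    IntermediateField.adjoin k ({x} : Set K) := by
  apply le_antisymm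
  · rw [adjoin_simple_le_iff]
    exact inv_mem (mem_adjoin_simple_self k x)
  · rw [adjoin_simple_le_iff]
    have := inv_mem (mem_adjoin_simple_self k x⁻¹)
    simpa using this

lemma T3.inv {x : K} (h : T3 k x) : T3 k x⁻¹ := by
  refine ⟨?_, ?_⟩
  · intro h2; exact h.1 (IsAlgebraic.inv_iff.mp h2)
  · rw [adjoin_inv]; exact h.2

lemma mem_adjoin_frac {x : K} {y : K} (hy : y ∈ IntermediateField.adjoin k ({x} : Set K)) :
    ∃ r s : k[X], aeval x s ≠ 0 ∧ aeval x s * y = aeval x r := by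
  obtain ⟨r, s, h⟩ := (mem_adjoin_simple_iff k y).mp hy
  by_cases hs : aeval x s = 0
  · exact ⟨0, 1, by simp, by simp [h, hs]⟩
  · exact ⟨r, s, hs, by rw [h]; field_simp⟩

lemma T3.relation {x : K} (h : T3 k x) (y : Fin 4 → K) :
    ∃ p : Fin 4 → k[X], p ≠ 0 ∧ ∑ i, aeval x (p i) * y i = 0 := by
  have hfin : Module.Finite (IntermediateField.adjoin k ({x} : Set K)) K :=
    Module.finite_of_finrank_pos (by rw [h.2]; norm_num)
  have hli : ¬ LinearIndependent (IntermediateField.adjoin k ({x} : Set K)) y := by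
    intro hli
    have := hli.fintype_card_le_finrank
    rw [h.2] at this
    simp at this
  rw [Fintype.not_linearIndependent_iff] at hli
  obtain ⟨g, hg, i0, hi0⟩ := hli
  choose r s hs hrs using fun i => mem_adjoin_frac (g i).2
  refine ⟨fun i => r i * ∏ j ∈ Finset.univ.erase i, s j, ?_, ?_⟩
  · intro h0
    have := congrFun h0 i0
    simp only [Pi.zero_apply, mul_eq_zero] at this
    rcases this with h1 | h1
    · have h2 := hrs i0
      rw [h1, map_zero, mul_eq_zero] at h2
      rcases h2 with h2 | h2
      · exact hs _ h2
      · exact hi0 (Subtype.ext h2)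
    · rw [Finset.prod_eq_zero_iff] at h1
      obtain ⟨j, _, hj⟩ := h1
      apply hs j; rw [hj, map_zero]
  · have : ∀ i, aeval x (r i * ∏ j ∈ Finset.univ.erase i, s j) * y i =
      (∏ j, aeval x (s j)) * (g i • y i) := by
      intro i
      rw [map_mul, ← hrs, map_prod, ← Finset.mul_prod_erase Finset.univ (fun j => aeval x (s j))
        (Finset.mem_univ i)]
      rw [Algebra.smul_def]
      change _ = _ * ((g i : K) * y i)
      ring
    simp_rw [this]
    rw [← Finset.mul_sum, hg, mul_zero]

/-- a relation not vanishing at `c` -/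
lemma T3.relation_at {x : K} (h : T3 k x) (c : k) (y : Fin 4 → K) :
    ∃ p : Fin 4 → k[X], (∃ i, (p i).eval c ≠ 0) ∧ ∑ i, aeval x (p i) * y i = 0 := by
  obtain ⟨p, hp, hsum⟩ := h.relation y
  have key : ∀ (n : ℕ) (p : Fin 4 → k[X]), p ≠ 0 → ∑ i, aeval x (p i) * y i = 0 →
      ∑ i, (p i).natDegree ≤ n →
      ∃ p : Fin 4 → k[X], (∃ i, (p i).eval c ≠ 0) ∧ ∑ i, aeval x (p i) * y i = 0 := by
    intro n
    induction n with
    | zero =>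
      intro p hp hs hd
      refine ⟨p, ?_, hs⟩
      by_contra hcon
      push Not at hcon
      apply hp
      funext i
      have hi : (p i).natDegree = 0 := by
        have := Finset.single_le_sum (f := fun i => (p i).natDegree) (fun _ _ => Nat.zero_le _)
          (Finset.mem_univ i)
        omega
      have h2 := hcon i
      rw [eq_C_of_natDegree_eq_zero hi] at h2 ⊢
      simp only [eval_C] at h2
      simp [h2]
    | succ n ih =>
      intro p hp hs hd
      by_cases hcon : ∃ i, (p i).eval c ≠ 0
      · exact ⟨p, hcon, hs⟩
      push Not at hcon
      choose q hq using fun i => dvd_iff_isRoot.mpr (hcon i)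
      have hq0 : q ≠ 0 := by
        rintro rfl; apply hp; funext i; rw [hq i]; simp
      apply ih q hq0
      · have : ∑ i, aeval x (p i) * y i = (x - algebraMap k K c) * ∑ i, aeval x (q i) * y i := by
          rw [Finset.mul_sum]
          apply Finset.sum_congr rfl
          intro i _
          rw [hq i]; simp [mul_assoc]
        rw [this] at hs
        exact (mul_eq_zero.mp hs).resolve_left (h.sub_ne c)
      · have hle : ∀ i, (q i).natDegree ≤ (p i).natDegree := by
          intro i
          by_cases h0 : q i = 0
          · simp [h0]
          rw [hq i, natDegree_mul (X_sub_C_ne_zero c) h0]; omega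
        obtain ⟨i0, hi0⟩ := Function.ne_iff.mp hq0
        have : ∑ i, (q i).natDegree < ∑ i, (p i).natDegree := by
          apply Finset.sum_lt_sum (fun i _ => hle i) ⟨i0, Finset.mem_univ _, ?_⟩
          rw [hq i0, natDegree_mul (X_sub_C_ne_zero c) hi0, natDegree_X_sub_C]; omega
        omega
  exact key _ p hp hsum le_rfl

/-- Horner partial sums of a relation are regular -/
lemma horner {x z : K} {p : Fin 4 → k[X]}
    (h : ∑ i, aeval x (p i) * z ^ (i : ℕ) = 0) :
    aeval x (p 3) * z ∈ O (k := k) x ∧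
    aeval x (p 3) * z + aeval x (p 2) ∈ O (k := k) x ∧
    (aeval x (p 3) * z + aeval x (p 2)) * z ∈ O (k := k) x ∧
    (aeval x (p 3) * z + aeval x (p 2)) * z + aeval x (p 1) ∈ O (k := k) x ∧
    ((aeval x (p 3) * z + aeval x (p 2)) * z + aeval x (p 1)) * z = - aeval x (p 0) := by
  simp only [Fin.sum_univ_four, Fin.coe_ofNat_eq_mod] at h
  norm_num at h
  have hp : ∀ i, aeval x (p i) ∈ O (k := k) x := fun i => ev_mem_O x _
  have h1 : aeval x (p 3) * z ∈ O (k := k) x := by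
    intro A hA hx
    by_cases hz0 : z = 0
    · rw [hz0, mul_zero]; exact zero_mem _
    rcases hA z hz0 with hz | hz
    · exact mul_mem (hp 3 A hA hx) hz
    · have : aeval x (p 3) * z = - aeval x (p 2) - aeval x (p 1) * z⁻¹ - aeval x (p 0) * (z⁻¹ * z⁻¹) := by
        field_simp; linear_combination h
      rw [this]
      exact sub_mem (sub_mem (neg_mem (hp 2 A hA hx)) (mul_mem (hp 1 A hA hx) hz))
        (mul_mem (hp 0 A hA hx) (mul_mem hz hz))
  have h2 : (aeval x (p 3) * z + aeval x (p 2)) * z ∈ O (k := k) x := by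
    intro A hA hx
    by_cases hz0 : z = 0
    · rw [hz0, mul_zero]; exact zero_mem _
    rcases hA z hz0 with hz | hz
    · exact mul_mem (add_mem (mul_mem (hp 3 A hA hx) hz) (hp 2 A hA hx)) hz
    · have : (aeval x (p 3) * z + aeval x (p 2)) * z = - aeval x (p 1) - aeval x (p 0) * z⁻¹ := by
        field_simp; linear_combination h
      rw [this]
      exact sub_mem (neg_mem (hp 1 A hA hx)) (mul_mem (hp 0 A hA hx) hz)
  exact ⟨h1, add_mem h1 (hp 2), h2, add_mem h2 (hp 1), by linear_combination h⟩

lemma T3.clear {x : K} (h : T3 k x) (z : K) : ∃ D : k[X], D ≠ 0 ∧ aeval x D * z ∈ O (k := k) x := by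
  obtain ⟨p, hp, hs⟩ := h.relation (fun i => z ^ (i : ℕ))
  obtain ⟨h1, h2, h3, h4, h5⟩ := horner hs
  by_cases h30 : p 3 = 0
  · simp only [h30, map_zero, zero_mul, zero_add] at h3 h5
    by_cases h20 : p 2 = 0
    · simp only [h20, map_zero, zero_mul, zero_add] at h5
      by_cases h10 : p 1 = 0
      · simp only [h10, map_zero, zero_mul] at h5
        have h00 := h.ev_eq_zero (neg_eq_zero.mp h5.symm)
        exfalso; apply hp; funext i; fin_cases i <;> simp [*]
      · exact ⟨p 1, h10, by rw [h5]; exact neg_mem (ev_mem_O x _)⟩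
    · exact ⟨p 2, h20, h3⟩
  · exact ⟨p 3, h30, h1⟩

/-- elements of valuation rings are fractions of elements of `O x` -/
lemma T3.frac [IsAlgClosed k] {x : K} (h : T3 k x) {A : Subalgebra k K} (hA : IsVal A) (hx : x ∈ A) {z : K}
    (hz : z ∈ A) : ∃ n e : K, n ∈ O (k := k) x ∧ e ∈ O (k := k) x ∧ e ≠ 0 ∧ e⁻¹ ∈ A ∧ e * z = n := by
  have hrel : ∃ p : Fin 4 → k[X], (∃ i, ¬ NU A (aeval x (p i))) ∧
      ∑ i, aeval x (p i) * z ^ (i : ℕ) = 0 := by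
    by_cases hc : ∃ c : k, NU A (x - algebraMap k K c)
    · obtain ⟨c, hc⟩ := hc
      obtain ⟨p, ⟨i, hi⟩, hs⟩ := h.relation_at c (fun i => z ^ (i : ℕ))
      refine ⟨p, ⟨i, fun hN => hi ?_⟩, hs⟩
      have := hN.sub hA (NU_congr hx hc (p i))
      rw [sub_sub_cancel] at this
      exact not_NU_algebraMap this
    · obtain ⟨p, hp, hs⟩ := h.relation (fun i => z ^ (i : ℕ))
      obtain ⟨i, hi⟩ := Function.ne_iff.mp hp
      exact ⟨p, ⟨i, fun hN => hc (NU_root hx _ _ rfl hi hN)⟩, hs⟩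
  obtain ⟨p, ⟨i, hi⟩, hs⟩ := hrel
  obtain ⟨h1, h2, h3, h4, h5⟩ := horner hs
  by_cases n3 : NU A (aeval x (p 3))
  swap
  · obtain ⟨a, b⟩ := inv_mem_of_not_NU (aeval_mem A hx _) n3
    exact ⟨_, _, h1, ev_mem_O x _, a, b, rfl⟩
  by_cases n2 : NU A (aeval x (p 3) * z + aeval x (p 2))
  swap
  · obtain ⟨a, b⟩ := inv_mem_of_not_NU (h2 A hA hx) n2
    exact ⟨_, _, h3, h2, a, b, rfl⟩
  by_cases n1 : NU A ((aeval x (p 3) * z + aeval x (p 2)) * z + aeval x (p 1))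
  swap
  · obtain ⟨a, b⟩ := inv_mem_of_not_NU (h4 A hA hx) n1
    exact ⟨_, _, by rw [h5]; exact neg_mem (ev_mem_O x _), h4, a, b, rfl⟩
  exfalso
  apply hi
  have q2 := n2.sub hA (n3.mul_right hz)
  have q1 := n1.sub hA (n2.mul_right hz)
  have q0 := (n1.mul_right hz).neg
  rw [h5, neg_neg] at q0
  rw [add_sub_cancel_left] at q2 q1
  fin_cases i
  · exact q0
  · exact q1
  · exact q2
  · exact n3

lemma ev_reflect {x : K} (hx : x ≠ 0) {p : k[X]} {N : ℕ} (hp : p.natDegree ≤ N) :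
    aeval x⁻¹ (reflect N p) = aeval x p * x⁻¹ ^ N := by
  let _ := invertibleOfNonzero hx
  have := eval₂_reflect_mul_pow (algebraMap k K) x N p hp
  rw [invOf_eq_inv] at this
  rw [aeval_def, aeval_def, ← this, mul_assoc, ← mul_pow, mul_inv_cancel₀ hx, one_pow, mul_one]

lemma NU_sum {A : Subalgebra k K} (hA : IsVal A) {ι : Type*} (s : Finset ι) (f : ι → K)
    (h : ∀ i ∈ s, NU A (f i)) : NU A (∑ i ∈ s, f i) := by
  classical
  induction s using Finset.induction_on with
  | empty => exact ⟨zero_mem A, Or.inl rfl⟩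
  | insert a s ha ih =>
    rw [Finset.sum_insert ha]
    exact (h a (Finset.mem_insert_self a s)).add hA
      (ih fun i hi => h i (Finset.mem_insert_of_mem hi))

/-- the degree of an element of `O x` is bounded -/
lemma exists_deg {x y : K} (hx : x ≠ 0) (hy : y ∈ O (k := k) x) :
    ∃ n : ℕ, y * x⁻¹ ^ n ∈ O (k := k) x⁻¹ := by
  have hyint : IsIntegral (Algebra.adjoin k ({x} : Set K)) y :=
    integral_of_mem_all (fun A hA hs => hy A hA (hs rfl))
  obtain ⟨P, hP, hPy⟩ := hyint
  have hco : ∀ i, ∃ q : k[X], aeval x q = ((P.coeff i : Algebra.adjoin k ({x} : Set K)) : K) := by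
    intro i
    have h1 : ∀ z ∈ Algebra.adjoin k ({x} : Set K), ∃ q : k[X], aeval x q = z := by
      intro z hz
      rw [Algebra.adjoin_singleton_eq_range_aeval] at hz
      exact hz
    exact h1 _ (P.coeff i).2
  choose q hq using hco
  set m := P.natDegree with hm
  set n := ∑ i ∈ Finset.range m, (q i).natDegree with hn
  refine ⟨n, fun A hA hs => ?_⟩
  by_contra hcon
  have hw := NU_of_inv_not_mem hA hcon
  have hy0 : y ≠ 0 := by rintro rfl; apply hcon; rw [zero_mul]; exact zero_mem A
  set w := (y * x⁻¹ ^ n)⁻¹ with hwdef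
  have hyw : y * x⁻¹ ^ n * w = 1 := by rw [hwdef]; field_simp
  rw [eval₂_eq_sum_range, ← hm, Finset.sum_range_succ] at hPy
  have hlead : P.coeff m = 1 := hP
  rw [hlead] at hPy
  have hval : ∀ i, algebraMap (Algebra.adjoin k ({x} : Set K)) K (P.coeff i) = aeval x (q i) :=
    fun i => (hq i).symm
  simp only [hval, map_one, one_mul] at hPy
  have hsum : (∑ i ∈ Finset.range m, aeval x (q i) * x⁻¹ ^ (n * (m - i)) * w ^ (m - i)) = -1 := by
    have e1 : (x⁻¹ ^ n * w) ^ m * y ^ m = 1 := by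
      rw [← mul_pow, ← one_pow m]; congr 1; linear_combination hyw
    have e2 : ∀ i ∈ Finset.range m, aeval x (q i) * x⁻¹ ^ (n * (m - i)) * w ^ (m - i) =
        (x⁻¹ ^ n * w) ^ m * (aeval x (q i) * y ^ i) := by
      intro i hi
      have hi := Finset.mem_range.mp hi
      have : (x⁻¹ ^ n * w) ^ m * y ^ i = (x⁻¹ ^ n * w) ^ (m - i) := by
        have e3 : (x⁻¹ ^ n * w) ^ i * y ^ i = 1 := by
          rw [← mul_pow, ← one_pow i]; congr 1; linear_combination hyw
        conv_lhs => rw [← Nat.sub_add_cancel hi.le, pow_add]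
        rw [mul_assoc, e3, mul_one]
      rw [mul_left_comm, this, mul_pow, ← pow_mul]; ring
    rw [Finset.sum_congr rfl e2, ← Finset.mul_sum, eq_neg_of_add_eq_zero_left hPy, mul_neg, e1]
  apply not_NU_one (A := A)
  have : NU A (-1) := by
    rw [← hsum]
    apply NU_sum hA
    intro i hi
    have hi' := Finset.mem_range.mp hi
    apply NU.mul_left
    · rw [← ev_reflect hx]
      · exact aeval_mem A hs _
      · calc (q i).natDegree ≤ n := Finset.single_le_sum (f := fun i => (q i).natDegree)
              (fun _ _ => Nat.zero_le _) hi
          _ = n * 1 := (mul_one n).symm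
          _ ≤ n * (m - i) := Nat.mul_le_mul_left _ (by omega)
    · have : m - i = (m - i - 1) + 1 := by omega
      rw [this, pow_succ]
      exact hw.mul_left (pow_mem hw.1 _)
  simpa using this.neg

end Trig

namespace Trig

variable {k K : Type*} [Field k] [Field K] [Algebra k K]

/-- degree bounds -/
def Bd (m n N : ℕ) (p q r : k[X]) : Prop :=
  p.natDegree ≤ N ∧ (q = 0 ∨ q.natDegree + m ≤ N) ∧ (r = 0 ∨ r.natDegree + n ≤ N)

structure IsBas (k : Type*) {K : Type*} [Field k] [Field K] [Algebra k K]
    (x α β : K) (m n : ℕ) : Prop where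
  hα : α ∈ O (k := k) x
  hβ : β ∈ O (k := k) x
  hα' : α * x⁻¹ ^ m ∈ O (k := k) x⁻¹
  hβ' : β * x⁻¹ ^ n ∈ O (k := k) x⁻¹
  hm : 1 ≤ m
  hmn : m ≤ n
  span : ∀ y ∈ O (k := k) x, ∃ p q r : k[X], y = aeval x p + aeval x q * α + aeval x r * β
  deg : ∀ (p q r : k[X]) (j : ℕ), (aeval x p + aeval x q * α + aeval x r * β) * x⁻¹ ^ j ∈ O (k := k) x⁻¹ →
    Bd m n j p q r

lemma self_not_mem [IsAlgClosed k] {x : K} (h : T3 k x) : x ∉ O (k := k) x⁻¹ := by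
  intro hx
  obtain ⟨c, hc⟩ := const_of_mem h.ne_zero (self_mem_O x) hx
  exact h.sub_ne c (by rw [hc, sub_self])

lemma T3.exists_not_mem {x : K} (h : T3 k x) (u v : K) :
    ∃ y ∈ O (k := k) x, ∀ p q : k[X], y ≠ aeval x p * u + aeval x q * v := by
  classical
  by_contra hcon
  push Not at hcon
  have : (⊤ : Submodule (IntermediateField.adjoin k ({x} : Set K)) K) ≤
      Submodule.span _ (({u, v} : Finset K) : Set K) := by
    intro z _
    obtain ⟨D, hD, hDz⟩ := h.clear z
    obtain ⟨p, q, hpq⟩ := hcon _ hDz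
    have hD' := h.ev_ne hD
    have hmem : ∀ p : k[X], aeval x p ∈ IntermediateField.adjoin k ({x} : Set K) := fun p => by
      rw [mem_adjoin_simple_iff]; exact ⟨p, 1, by simp⟩
    have e : z = (⟨aeval x p / aeval x D, div_mem (hmem p) (hmem D)⟩ :
          IntermediateField.adjoin k ({x} : Set K)) • u +
        (⟨aeval x q / aeval x D, div_mem (hmem q) (hmem D)⟩ :
          IntermediateField.adjoin k ({x} : Set K)) • v := by
      simp only [Algebra.smul_def]
      change z = (aeval x p / aeval x D) * u + (aeval x q / aeval x D) * v
      field_simp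
      linear_combination hpq
    rw [e]
    refine add_mem (Submodule.smul_mem _ _ (Submodule.subset_span (by simp)))
      (Submodule.smul_mem _ _ (Submodule.subset_span (by simp)))
  have h1 := finrank_span_finset_le_card (R := IntermediateField.adjoin k ({x} : Set K)) ({u, v} : Finset K)
  rw [Set.finrank, top_le_iff.mp this, finrank_top, h.2] at h1
  classical
  have := Finset.card_le_two (a := u) (b := v)
  omega

lemma ev_split (s : K) (p : k[X]) :
    ∃ q : k[X], aeval s p = algebraMap k K (p.eval 0) + s * aeval s q := by
  refine ⟨divX p, ?_⟩
  conv_lhs => rw [← X_mul_divX_add p]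
  simp [coeff_zero_eq_eval_zero, add_comm]

lemma lead_split {x : K} (hx : x ≠ 0) {p : k[X]} {N : ℕ} (hp : p.natDegree ≤ N) :
    ∃ u ∈ O (k := k) x⁻¹, aeval x p * x⁻¹ ^ N = algebraMap k K (p.coeff N) + x⁻¹ * u := by
  obtain ⟨q, hq⟩ := ev_split x⁻¹ (reflect N p)
  refine ⟨aeval x⁻¹ q, ev_mem_O _ _, ?_⟩
  rw [← ev_reflect hx hp, hq, ← coeff_zero_eq_eval_zero, coeff_reflect]
  simp [revAt_le (Nat.zero_le N)]

lemma pow_cancel1 {x : K} (hx : x ≠ 0) (i : ℕ) : x ^ i * x⁻¹ ^ i = 1 := by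
  rw [← mul_pow, mul_inv_cancel₀ hx, one_pow]

lemma pow_cancel2 {x : K} (hx : x ≠ 0) {i j : ℕ} (h : i ≤ j) : x ^ (j - i) * x⁻¹ ^ j = x⁻¹ ^ i := by
  obtain ⟨l, rfl⟩ := Nat.exists_eq_add_of_le h
  rw [show i + l - i = l by omega, pow_add, mul_comm (x⁻¹ ^ i), ← mul_assoc, pow_cancel1 hx, one_mul]

lemma exists_bas [IsAlgClosed k] {x : K} (h : T3 k x) : ∃ (α β : K) (m n : ℕ), IsBas k x α β m n := by
  classical
  have hx := h.ne_zero
  have hsm : x⁻¹ ∈ O (k := k) x⁻¹ := self_mem_O _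
  have hC : ∀ c : k, algebraMap k K c ∈ O (k := k) x⁻¹ := fun c => (O x⁻¹).algebraMap_mem c
  have hC' : ∀ c : k, algebraMap k K c ∈ O (k := k) x := fun c => (O x).algebraMap_mem c
  have hxm : x ∈ O (k := k) x := self_mem_O _
  have ex1 : ∃ m : ℕ, ∃ y ∈ O (k := k) x, y * x⁻¹ ^ m ∈ O (k := k) x⁻¹ ∧
      ∀ p : k[X], y ≠ aeval x p := by
    obtain ⟨y, hy, hy2⟩ := h.exists_not_mem 1 0
    obtain ⟨m, hm⟩ := exists_deg hx hy
    exact ⟨m, y, hy, hm, fun p hp => hy2 p 0 (by simp [hp])⟩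
  obtain ⟨α, hα, hα', hα2⟩ := Nat.find_spec ex1
  have hαmin := fun j => Nat.find_min (H := ex1) (m := j)
  set m := Nat.find ex1
  have ex2 : ∃ n : ℕ, ∃ y ∈ O (k := k) x, y * x⁻¹ ^ n ∈ O (k := k) x⁻¹ ∧
      ∀ p q : k[X], y ≠ aeval x p + aeval x q * α := by
    obtain ⟨y, hy, hy2⟩ := h.exists_not_mem 1 α
    obtain ⟨m, hm⟩ := exists_deg hx hy
    exact ⟨m, y, hy, hm, fun p q hp => hy2 p q (by simp [hp])⟩
  obtain ⟨β, hβ, hβ', hβ2⟩ := Nat.find_spec ex2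
  have hβmin := fun j => Nat.find_min (H := ex2) (m := j)
  set n := Nat.find ex2
  have hm1 : 1 ≤ m := by
    by_contra hm0
    have hm0 : m = 0 := by omega
    rw [hm0, pow_zero, mul_one] at hα'
    obtain ⟨c, hc⟩ := const_of_mem hx hα hα'
    exact hα2 (C c) (by simp [hc])
  have hmn : m ≤ n := by
    by_contra hlt
    exact hαmin n (by omega) ⟨β, hβ, hβ', fun p hp => hβ2 p 0 (by simp [hp])⟩
  -- independence modulo `x⁻¹`
  have indep : ∀ (c0 c1 c2 : k) (w : K), w ∈ O (k := k) x⁻¹ →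
      algebraMap k K c0 + algebraMap k K c1 * (α * x⁻¹ ^ m) + algebraMap k K c2 * (β * x⁻¹ ^ n) = x⁻¹ * w →
      c0 = 0 ∧ c1 = 0 ∧ c2 = 0 := by
    intro c0 c1 c2 w hw heq
    have hc2 : c2 = 0 := by
      by_contra hc2
      have hc2' : algebraMap k K c2 ≠ 0 := by simpa using hc2
      refine hβmin (n - 1) (by omega)
        ⟨β + algebraMap k K (c1 / c2) * x ^ (n - m) * α + algebraMap k K (c0 / c2) * x ^ n, ?_, ?_, ?_⟩
      · exact add_mem (add_mem hβ (mul_mem (mul_mem (hC' _) (pow_mem hxm _)) hα))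
          (mul_mem (hC' _) (pow_mem hxm _))
      · have : (β + algebraMap k K (c1 / c2) * x ^ (n - m) * α + algebraMap k K (c0 / c2) * x ^ n) *
            x⁻¹ ^ (n - 1) = algebraMap k K c2⁻¹ * w := by
          have e1 := pow_cancel1 hx n
          have e2 := pow_cancel2 hx hmn
          have e3 : x⁻¹ ^ (n - 1) * x⁻¹ = x⁻¹ ^ n := by rw [← pow_succ]; congr 1; omega
          have e4 := mul_inv_cancel₀ hc2'
          have hs0 : x⁻¹ ≠ 0 := inv_ne_zero hx
          simp only [map_mul, map_inv₀, div_eq_mul_inv]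
          apply mul_left_cancel₀ (mul_ne_zero hs0 hc2')
          generalize (algebraMap k K c2)⁻¹ = i2 at e1 e2 e3 e4 heq ⊢
          generalize x⁻¹ = s at e1 e2 e3 e4 heq ⊢
          generalize algebraMap k K c0 = C0 at e1 e2 e3 e4 heq ⊢
          generalize algebraMap k K c1 = C1 at e1 e2 e3 e4 heq ⊢
          generalize algebraMap k K c2 = C2 at e1 e2 e3 e4 heq ⊢
          linear_combination C2 * (β + C1 * i2 * x ^ (n - m) * α + C0 * i2 * x ^ n) * e3 +
            (C1 * x ^ (n - m) * α + C0 * x ^ n) * s ^ n * e4 - s * w * e4 + C1 * α * e2 + C0 * e1 + heq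
        rw [this]
        exact mul_mem (hC _) hw
      · intro p q hpq
        apply hβ2 (p - C (c0 / c2) * X ^ n) (q - C (c1 / c2) * X ^ (n - m))
        simp only [map_sub, map_mul, aeval_C, map_pow, aeval_X]
        linear_combination hpq
    subst hc2
    have hc1 : c1 = 0 := by
      by_contra hc1
      have hc1' : algebraMap k K c1 ≠ 0 := by simpa using hc1
      refine hαmin (m - 1) (by omega)
        ⟨α + algebraMap k K (c0 / c1) * x ^ m, ?_, ?_, ?_⟩
      · exact add_mem hα (mul_mem (hC' _) (pow_mem hxm _))
      · have : (α + algebraMap k K (c0 / c1) * x ^ m) *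
            x⁻¹ ^ (m - 1) = algebraMap k K c1⁻¹ * w := by
          have e1 := pow_cancel1 hx m
          have e3 : x⁻¹ ^ (m - 1) * x⁻¹ = x⁻¹ ^ m := by rw [← pow_succ]; congr 1; omega
          have e4 := mul_inv_cancel₀ hc1'
          have hs0 : x⁻¹ ≠ 0 := inv_ne_zero hx
          simp only [map_mul, map_inv₀, div_eq_mul_inv, map_zero, zero_mul, add_zero] at heq ⊢
          apply mul_left_cancel₀ (mul_ne_zero hs0 hc1')
          generalize (algebraMap k K c1)⁻¹ = i2 at e1 e3 e4 heq ⊢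
          generalize x⁻¹ = s at e1 e3 e4 heq ⊢
          generalize algebraMap k K c0 = C0 at e1 e3 e4 heq ⊢
          generalize algebraMap k K c1 = C1 at e1 e3 e4 heq ⊢
          linear_combination C1 * (α + C0 * i2 * x ^ m) * e3 +
            (C0 * x ^ m) * s ^ m * e4 - s * w * e4 + C0 * e1 + heq
        rw [this]
        exact mul_mem (hC _) hw
      · intro p hpq
        apply hα2 (p - C (c0 / c1) * X ^ m)
        simp only [map_sub, map_mul, aeval_C, map_pow, aeval_X]
        linear_combination hpq
    subst hc1
    refine ⟨?_, rfl, rfl⟩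
    by_contra hc0
    have hc0' : algebraMap k K c0 ≠ 0 := by simpa using hc0
    apply self_not_mem h
    have : x = algebraMap k K c0⁻¹ * w := by
      simp only [map_zero, zero_mul, add_zero] at heq
      rw [map_inv₀]
      field_simp at heq ⊢
      linear_combination heq
    have hmem := mul_mem (hC c0⁻¹) hw
    rwa [← this] at hmem
  -- every element of `O x⁻¹` is congruent to a combination
  have modl : ∀ z ∈ O (k := k) x⁻¹, ∃ (c0 c1 c2 : k), ∃ w ∈ O (k := k) x⁻¹,
      z = algebraMap k K c0 + algebraMap k K c1 * (α * x⁻¹ ^ m) + algebraMap k K c2 * (β * x⁻¹ ^ n) + x⁻¹ * w := by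
    intro z hz
    obtain ⟨p, ⟨i, hi⟩, hsum⟩ := h.inv.relation_at 0 ![1, α * x⁻¹ ^ m, β * x⁻¹ ^ n, z]
    choose q hq using fun i => ev_split x⁻¹ (p i)
    simp only [Fin.sum_univ_four, Matrix.cons_val] at hsum
    rw [hq 0, hq 1, hq 2, hq 3] at hsum
    set w := - (aeval x⁻¹ (q 0) + aeval x⁻¹ (q 1) * (α * x⁻¹ ^ m) + aeval x⁻¹ (q 2) * (β * x⁻¹ ^ n) +
      aeval x⁻¹ (q 3) * z) with hw
    have hwm : w ∈ O (k := k) x⁻¹ := by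
      refine neg_mem (add_mem (add_mem (add_mem ?_ (mul_mem ?_ hα')) (mul_mem ?_ hβ')) (mul_mem ?_ hz)) <;>
        exact ev_mem_O _ _
    by_cases h3 : (p 3).eval 0 = 0
    · exfalso
      rw [h3] at hsum
      obtain ⟨a0, a1, a2⟩ := indep ((p 0).eval 0) ((p 1).eval 0) ((p 2).eval 0) w hwm (by
        rw [hw]; simp only [map_zero] at hsum; linear_combination hsum)
      apply hi
      fin_cases i
      · exact a0
      · exact a1
      · exact a2
      · exact h3
    · have h3' : algebraMap k K ((p 3).eval 0) ≠ 0 := by simpa using h3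
      refine ⟨- (p 0).eval 0 / (p 3).eval 0, - (p 1).eval 0 / (p 3).eval 0, - (p 2).eval 0 / (p 3).eval 0,
        algebraMap k K ((p 3).eval 0)⁻¹ * w, mul_mem (hC _) hwm, ?_⟩
      simp only [map_div₀, map_neg, map_inv₀]
      apply mul_left_cancel₀ h3'
      have e' : algebraMap k K ((p 3).eval 0) * (algebraMap k K ((p 3).eval 0))⁻¹ = 1 := by
        field_simp
      have hw2 : w = - (aeval x⁻¹ (q 0) + aeval x⁻¹ (q 1) * (α * x⁻¹ ^ m) + aeval x⁻¹ (q 2) * (β * x⁻¹ ^ n) +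
        aeval x⁻¹ (q 3) * z) := hw
      clear_value w
      simp only [div_eq_mul_inv]
      generalize (algebraMap k K ((p 3).eval 0))⁻¹ = i3 at hsum hw2 e' ⊢
      generalize algebraMap k K ((p 3).eval 0) = C3 at hsum hw2 e' ⊢
      generalize algebraMap k K ((p 2).eval 0) = C2 at hsum hw2 e' ⊢
      generalize algebraMap k K ((p 1).eval 0) = C1 at hsum hw2 e' ⊢
      generalize algebraMap k K ((p 0).eval 0) = C0 at hsum hw2 e' ⊢
      generalize β * x⁻¹ ^ n = B at hsum hw2 e' ⊢
      generalize α * x⁻¹ ^ m = A at hsum hw2 e' ⊢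
      generalize x⁻¹ = s at hsum hw2 e' ⊢
      linear_combination hsum - s * hw2 + (C0 + C1 * A + C2 * B - s * w) * e'
  refine ⟨α, β, m, n, hα, hβ, hα', hβ', hm1, hmn, ?_, ?_⟩
  · have key : ∀ (j : ℕ) (y : K), y ∈ O (k := k) x → y * x⁻¹ ^ j ∈ O (k := k) x⁻¹ →
        ∃ p q r : k[X], y = aeval x p + aeval x q * α + aeval x r * β := by
      intro j
      induction j using Nat.strong_induction_on with
      | _ j ih =>
        intro y hy hyj
        by_cases hjn : j < n
        · have := hβmin j hjn
          push Not at this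
          obtain ⟨p, q, hpq⟩ := this y hy hyj
          exact ⟨p, q, 0, by simp [hpq]⟩
        · obtain ⟨c0, c1, c2, w, hw, heq⟩ := modl _ hyj
          obtain ⟨p, q, r, hpqr⟩ := ih (j - 1) (by omega)
            (y - algebraMap k K c0 * x ^ j - algebraMap k K c1 * x ^ (j - m) * α -
              algebraMap k K c2 * x ^ (j - n) * β) (by
              refine sub_mem (sub_mem (sub_mem hy (mul_mem (hC' _) (pow_mem hxm _)))
                (mul_mem (mul_mem (hC' _) (pow_mem hxm _)) hα))
                (mul_mem (mul_mem (hC' _) (pow_mem hxm _)) hβ)) (by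
              have : (y - algebraMap k K c0 * x ^ j - algebraMap k K c1 * x ^ (j - m) * α -
                algebraMap k K c2 * x ^ (j - n) * β) * x⁻¹ ^ (j - 1) = w := by
                have e1 := pow_cancel1 hx j
                have e2 := pow_cancel2 hx (show n ≤ j by omega)
                have e5 := pow_cancel2 hx (show m ≤ j by omega)
                have e3 : x⁻¹ ^ (j - 1) * x⁻¹ = x⁻¹ ^ j := by rw [← pow_succ]; congr 1; omega
                have hs0 : x⁻¹ ≠ 0 := inv_ne_zero hx
                apply mul_left_cancel₀ hs0
                generalize x⁻¹ = s at e1 e2 e3 e5 heq ⊢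
                linear_combination (y - algebraMap k K c0 * x ^ j - algebraMap k K c1 * x ^ (j - m) * α -
                  algebraMap k K c2 * x ^ (j - n) * β) * e3 - algebraMap k K c0 * e1 -
                  algebraMap k K c1 * α * e5 - algebraMap k K c2 * β * e2 + heq
              rw [this]; exact hw)
          refine ⟨p + C c0 * X ^ j, q + C c1 * X ^ (j - m), r + C c2 * X ^ (j - n), ?_⟩
          simp only [map_add, map_mul, aeval_C, map_pow, aeval_X]
          linear_combination hpqr
    intro y hy
    obtain ⟨j, hj⟩ := exists_deg hx hy
    exact key j y hy hj
  · intro p q r j hj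
    have step : ∀ N, j < N → Bd m n N p q r → Bd m n (N - 1) p q r := by
      intro N hN hB
      obtain ⟨u0, hu0, e0⟩ := lead_split hx hB.1
      have e1 : ∃ c1 : k, ∃ u ∈ O (k := k) x⁻¹, aeval x q * α * x⁻¹ ^ N =
          algebraMap k K c1 * (α * x⁻¹ ^ m) + x⁻¹ * u ∧ (c1 = 0 → q = 0 ∨ q.natDegree + m ≤ N - 1) := by
        by_cases hq : q = 0
        · exact ⟨0, 0, zero_mem _, by simp [hq], fun _ => Or.inl hq⟩
        · have hqd := hB.2.1.resolve_left hq
          obtain ⟨u, hu, e⟩ := lead_split hx (p := q) (N := N - m) (by omega)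
          refine ⟨q.coeff (N - m), u * (α * x⁻¹ ^ m), mul_mem hu hα', ?_, ?_⟩
          · have : x⁻¹ ^ N = x⁻¹ ^ (N - m) * x⁻¹ ^ m := by rw [← pow_add]; congr 1; omega
            rw [this]
            linear_combination (α * x⁻¹ ^ m) * e
          · intro h0
            right
            have : q.natDegree ≠ N - m := by
              intro h1; rw [← h1] at h0; exact hq (leadingCoeff_eq_zero.mp h0)
            omega
      have e2 : ∃ c1 : k, ∃ u ∈ O (k := k) x⁻¹, aeval x r * β * x⁻¹ ^ N =
          algebraMap k K c1 * (β * x⁻¹ ^ n) + x⁻¹ * u ∧ (c1 = 0 → r = 0 ∨ r.natDegree + n ≤ N - 1) := by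
        by_cases hq : r = 0
        · exact ⟨0, 0, zero_mem _, by simp [hq], fun _ => Or.inl hq⟩
        · have hqd := hB.2.2.resolve_left hq
          obtain ⟨u, hu, e⟩ := lead_split hx (p := r) (N := N - n) (by omega)
          refine ⟨r.coeff (N - n), u * (β * x⁻¹ ^ n), mul_mem hu hβ', ?_, ?_⟩
          · have : x⁻¹ ^ N = x⁻¹ ^ (N - n) * x⁻¹ ^ n := by rw [← pow_add]; congr 1; omega
            rw [this]
            linear_combination (β * x⁻¹ ^ n) * e
          · intro h0
            right
            have : r.natDegree ≠ N - n := by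
              intro h1; rw [← h1] at h0; exact hq (leadingCoeff_eq_zero.mp h0)
            omega
      obtain ⟨c1, u1, hu1, e1, hc1⟩ := e1
      obtain ⟨c2, u2, hu2, e2, hc2⟩ := e2
      have hxN : x⁻¹ ^ N = x⁻¹ ^ j * x⁻¹ * x⁻¹ ^ (N - j - 1) := by
        rw [← pow_succ, ← pow_add]; congr 1; omega
      obtain ⟨a0, a1, a2⟩ := indep (p.coeff N) c1 c2
        ((aeval x p + aeval x q * α + aeval x r * β) * x⁻¹ ^ j * x⁻¹ ^ (N - j - 1) - u0 - u1 - u2)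
        (sub_mem (sub_mem (sub_mem (mul_mem hj (pow_mem hsm _)) hu0) hu1) hu2) (by
          linear_combination (-1) * (e0 + e1 + e2) +
            (aeval x p + aeval x q * α + aeval x r * β) * hxN)
      refine ⟨?_, hc1 a1, hc2 a2⟩
      have h1 := hB.1
      by_cases hp0 : p = 0
      · simp [hp0]
      have : p.natDegree ≠ N := by
        intro h1; rw [← h1] at a0; exact hp0 (leadingCoeff_eq_zero.mp a0)
      omega
    have desc : ∀ i, Bd m n (j + i) p q r → Bd m n j p q r := by
      intro i
      induction i with
      | zero => exact id
      | succ i ih => intro hB; exact ih (step (j + (i + 1)) (by omega) hB)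
    apply desc (p.natDegree + q.natDegree + r.natDegree + m + n)
    exact ⟨by omega, Or.inr (by omega), Or.inr (by omega)⟩

end Trig

namespace Trig

variable {k K : Type*} [Field k] [Field K] [Algebra k K]

structure Datum (k : Type*) {K : Type*} [Field k] [Field K] [Algebra k K]
    (x α β : K) (a b c d : k[X]) : Prop where
  t3 : T3 k x
  hα : α ∈ O (k := k) x
  hβ : β ∈ O (k := k) x
  rαβ : α * β = aeval x a * aeval x d
  rαα : α * α = - (aeval x a * aeval x c) + aeval x b * α + aeval x a * β
  rββ : β * β = - (aeval x d * aeval x b) + aeval x d * α + aeval x c * β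
  span : ∀ y ∈ O (k := k) x, ∃ p q r : k[X], y = aeval x p + aeval x q * α + aeval x r * β
  indep : ∀ p q r : k[X], aeval x p + aeval x q * α + aeval x r * β = 0 → p = 0 ∧ q = 0 ∧ r = 0

lemma Datum.swap {x α β : K} {a b c d : k[X]} (h : Datum k x α β a b c d) : Datum k x β α d c b a where
  t3 := h.t3
  hα := h.hβ
  hβ := h.hα
  rαβ := by rw [mul_comm, h.rαβ, mul_comm]
  rαα := by rw [h.rββ]; ring
  rββ := by rw [h.rαα]; ring
  span y hy := by
    obtain ⟨p, q, r, e⟩ := h.span y hy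
    exact ⟨p, r, q, by rw [e]; ring⟩
  indep p q r e := by
    obtain ⟨h1, h2, h3⟩ := h.indep p r q (by linear_combination e)
    exact ⟨h1, h3, h2⟩

lemma Datum.α_ne {x α β : K} {a b c d : k[X]} (h : Datum k x α β a b c d) : α ≠ 0 := by
  intro h0
  have := (h.indep 0 1 0 (by simp [h0])).2.1
  simp at this

lemma Datum.a_ne {x α β : K} {a b c d : k[X]} (h : Datum k x α β a b c d) : a ≠ 0 := by
  rintro rfl
  have h1 := h.rαα
  have h2 : α = aeval x b := by
    apply mul_left_cancel₀ h.α_ne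
    rw [h1]; simp; ring
  have := (h.indep (-b) 1 0 (by simp [h2])).2.1
  simp at this

lemma Datum.d_ne {x α β : K} {a b c d : k[X]} (h : Datum k x α β a b c d) : d ≠ 0 := h.swap.a_ne

/-- shift of the generator by a constant -/
lemma Datum.shift {x α β : K} {a b c d : k[X]} (h : Datum k x α β a b c d) (z : k) :
    Datum k x (α - aeval x (C z * a)) (β + algebraMap k K z * α + aeval x (C (z^2) * a - C z * b))
      a (b - C (3 * z) * a) (c - C (2 * z) * b + C (3 * z ^ 2) * a)
      (d - C z * c + C (z ^ 2) * b - C (z ^ 3) * a) where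
  t3 := h.t3
  hα := sub_mem h.hα (ev_mem_O _ _)
  hβ := add_mem (add_mem h.hβ (mul_mem ((O x).algebraMap_mem _) h.hα)) (ev_mem_O _ _)
  rαβ := by
    have h1 := h.rαβ
    have h2 := h.rαα
    simp only [map_sub, map_add, map_mul, aeval_C, map_pow]
    linear_combination h1 + algebraMap k K z * h2
  rαα := by
    have h1 := h.rαβ
    have h2 := h.rαα
    simp only [map_sub, map_add, map_mul, aeval_C, map_pow, map_ofNat]
    linear_combination h2
  rββ := by
    have h1 := h.rαβ
    have h2 := h.rαα
    have h3 := h.rββ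
    simp only [map_sub, map_add, map_mul, aeval_C, map_pow, map_ofNat]
    linear_combination h3 + 2 * algebraMap k K z * h1 + algebraMap k K z ^ 2 * h2
  span y hy := by
    obtain ⟨p, q, r, e⟩ := h.span y hy
    refine ⟨p + (q - C z * r) * (C z * a) - r * (C (z^2) * a - C z * b), q - C z * r, r, ?_⟩
    rw [e]
    simp only [map_sub, map_add, map_mul, aeval_C, map_pow]
    ring
  indep p q r e := by
    obtain ⟨h1, h2, h3⟩ := h.indep (p - q * (C z * a) + r * (C (z^2) * a - C z * b)) (q + C z * r) r (by
      simp only [map_sub, map_add, map_mul, aeval_C, map_pow] at e ⊢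
      linear_combination e)
    subst h3
    simp only [mul_zero, add_zero] at h2
    subst h2
    simp at h1
    exact ⟨h1, rfl, rfl⟩

structure Full (k : Type*) {K : Type*} [Field k] [Field K] [Algebra k K]
    (x α β : K) (m n : ℕ) (a b c d : k[X]) : Prop where
  dx : Datum k x α β a b c d
  bas : IsBas k x α β m n
  ha : a.natDegree + n ≤ 2 * m
  hb : b.natDegree ≤ m
  hc : c.natDegree ≤ n
  hd : d.natDegree + m ≤ 2 * n

lemma IsBas.indep {x α β : K} {m n : ℕ} (h : IsBas k x α β m n) (p q r : k[X])
    (e : aeval x p + aeval x q * α + aeval x r * β = 0) : p = 0 ∧ q = 0 ∧ r = 0 := by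
  have key : ∀ p q r : k[X], aeval x p + aeval x q * α + aeval x r * β = 0 → q = 0 ∧ r = 0 := by
    intro p q r e
    have := h.deg p q r 0 (by rw [e, zero_mul]; exact zero_mem _)
    have h1 := h.hm
    have h2 := h.hmn
    exact ⟨this.2.1.resolve_right (by omega), this.2.2.resolve_right (by omega)⟩
  obtain ⟨h1, h2⟩ := key p q r e
  refine ⟨?_, h1, h2⟩
  have := (key 0 p 0 (by
    subst h1 h2; simp at e; simp [e])).1
  exact this

lemma IsBas.shift {x α β : K} {m n : ℕ} (hx : x ≠ 0) (h : IsBas k x α β m n) (u v : k[X]) (hu : u.natDegree ≤ m)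
    (hv : v.natDegree ≤ n) : IsBas k x (α - aeval x u) (β - aeval x v) m n where
  hα := sub_mem h.hα (ev_mem_O _ _)
  hβ := sub_mem h.hβ (ev_mem_O _ _)
  hα' := by
    rw [sub_mul, ← ev_reflect hx hu]; exact sub_mem h.hα' (ev_mem_O _ _)
  hβ' := by
    rw [sub_mul, ← ev_reflect hx hv]; exact sub_mem h.hβ' (ev_mem_O _ _)
  hm := h.hm
  hmn := h.hmn
  span y hy := by
    obtain ⟨p, q, r, e⟩ := h.span y hy
    refine ⟨p + q * u + r * v, q, r, ?_⟩
    rw [e]; simp; ring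
  deg p q r j hj := by
    have := h.deg (p - q * u - r * v) q r j (by
      convert hj using 1; simp only [map_sub, map_mul]; ring)
    refine ⟨?_, this.2⟩
    have h1 : p = (p - q * u - r * v) + q * u + r * v := by ring
    rw [h1]
    refine natDegree_add_le_of_degree_le (natDegree_add_le_of_degree_le this.1 ?_) ?_
    · rcases this.2.1 with h | h
      · simp [h]
      · exact natDegree_mul_le.trans (by omega)
    · rcases this.2.2 with h | h
      · simp [h]
      · exact natDegree_mul_le.trans (by omega)

lemma exists_full [IsAlgClosed k] {x : K} (h : T3 k x) :
    ∃ (α β : K) (m n : ℕ) (a b c d : k[X]), Full k x α β m n a b c d := by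
  have hx := h.ne_zero
  obtain ⟨α0, β0, m, n, h0⟩ := exists_bas h
  obtain ⟨p, q, r, e⟩ := h0.span _ (mul_mem h0.hα h0.hβ)
  have hB := h0.deg p q r (m + n) (by
    rw [← e]
    have := mul_mem h0.hα' h0.hβ'
    convert this using 1; ring)
  have hr : r.natDegree ≤ m := by
    rcases hB.2.2 with h | h
    · simp [h]
    · omega
  have hq : q.natDegree ≤ n := by
    rcases hB.2.1 with h | h
    · simp [h]
    · omega
  have hb := h0.shift hx r q hr hq
  set α := α0 - aeval x r
  set β := β0 - aeval x q
  have eαβ : α * β = aeval x (p + r * q) := by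
    simp only [α, β, map_add, map_mul]
    linear_combination e
  set E := p + r * q
  obtain ⟨A0, A1, A2, eA⟩ := hb.span _ (mul_mem hb.hα hb.hα)
  obtain ⟨B0, B1, B2, eB⟩ := hb.span _ (mul_mem hb.hβ hb.hβ)
  have bA := hb.deg A0 A1 A2 (2 * m) (by
    rw [← eA]
    have := mul_mem hb.hα' hb.hα'
    convert this using 1; ring)
  have bB := hb.deg B0 B1 B2 (2 * n) (by
    rw [← eB]
    have := mul_mem hb.hβ' hb.hβ'
    convert this using 1; ring)
  obtain ⟨i1, i2, i3⟩ := hb.indep (A1 * E + A2 * B0) (A2 * B1 - E) (A0 + A2 * B2) (by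
    simp only [map_sub, map_add, map_mul]
    linear_combination (-β) * eA - aeval x A2 * eB + (α - aeval x A1) * eαβ)
  obtain ⟨j1, j2, j3⟩ := hb.indep (B1 * A0 + B2 * E) (B0 + B1 * A1) (B1 * A2 - E) (by
    simp only [map_sub, map_add, map_mul]
    linear_combination (-α) * eB - aeval x B1 * eA + (β - aeval x B2) * eαβ)
  have hE : E = A2 * B1 := by linear_combination - i2
  have hA0 : A0 = - (A2 * B2) := by linear_combination i3
  have hB0 : B0 = - (B1 * A1) := by linear_combination j2
  have D : Datum k x α β A2 A1 B2 B1 :=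
    { t3 := h
      hα := hb.hα
      hβ := hb.hβ
      rαβ := by rw [eαβ, hE, map_mul]
      rαα := by rw [eA, hA0]; simp
      rββ := by rw [eB, hB0]; simp
      span := hb.span
      indep := hb.indep }
  refine ⟨α, β, m, n, A2, A1, B2, B1, D, hb, ?_, ?_, ?_, ?_⟩
  · exact bA.2.2.resolve_left D.a_ne
  · rcases bA.2.1 with h | h
    · simp [h]
    · omega
  · rcases bB.2.2 with h | h
    · simp [h]
    · omega
  · exact bB.2.1.resolve_left D.d_ne

lemma bd_reflect {x : K} (hx : x ≠ 0) {q : k[X]} {m j : ℕ} (h : q = 0 ∨ q.natDegree + m ≤ j) :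
    ∃ q' : k[X], aeval x⁻¹ q' * x⁻¹ ^ m = aeval x q * x⁻¹ ^ j := by
  rcases h with rfl | h
  · exact ⟨0, by simp⟩
  · refine ⟨reflect (j - m) q, ?_⟩
    rw [ev_reflect hx (by omega), mul_assoc, ← pow_add]
    congr 3; omega

lemma Full.ds {x α β : K} {m n : ℕ} {a b c d : k[X]} (h : Full k x α β m n a b c d) :
    Datum k x⁻¹ (α * x⁻¹ ^ m) (β * x⁻¹ ^ n) (reflect (2 * m - n) a) (reflect m b) (reflect n c)
      (reflect (2 * n - m) d) := by
  have hx := h.dx.t3.ne_zero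
  have ha := h.ha
  have hb := h.hb
  have hc := h.hc
  have hd := h.hd
  have hm := h.bas.hm
  have hmn := h.bas.hmn
  have ea := ev_reflect hx (p := a) (N := 2 * m - n) (by omega)
  have eb := ev_reflect hx (p := b) (N := m) hb
  have ec := ev_reflect hx (p := c) (N := n) hc
  have ed := ev_reflect hx (p := d) (N := 2 * n - m) (by omega)
  have p1 : x⁻¹ ^ (2 * m - n) * x⁻¹ ^ n = x⁻¹ ^ m * x⁻¹ ^ m := by
    rw [← pow_add, ← pow_add]; congr 1; omega
  have p2 : x⁻¹ ^ (2 * n - m) * x⁻¹ ^ m = x⁻¹ ^ n * x⁻¹ ^ n := by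
    rw [← pow_add, ← pow_add]; congr 1; omega
  have p3 : x⁻¹ ^ (2 * m - n) * x⁻¹ ^ (2 * n - m) = x⁻¹ ^ m * x⁻¹ ^ n := by
    rw [← pow_add, ← pow_add]; congr 1; omega
  refine ⟨h.dx.t3.inv, h.bas.hα', h.bas.hβ', ?_, ?_, ?_, ?_, ?_⟩
  · rw [ea, ed]
    linear_combination (x⁻¹ ^ m * x⁻¹ ^ n) * h.dx.rαβ - aeval x a * aeval x d * p3
  · rw [ea, eb, ec]
    linear_combination (x⁻¹ ^ m * x⁻¹ ^ m) * h.dx.rαα + aeval x a * aeval x c * p1 - aeval x a * β * p1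
  · rw [ed, eb, ec]
    linear_combination (x⁻¹ ^ n * x⁻¹ ^ n) * h.dx.rββ + aeval x d * aeval x b * p2 - aeval x d * α * p2
  · intro y hy
    obtain ⟨j, hj⟩ := exists_deg (inv_ne_zero hx) hy
    rw [inv_inv] at hj
    obtain ⟨p, q, r, e⟩ := h.bas.span _ hj
    have ey : y = (aeval x p + aeval x q * α + aeval x r * β) * x⁻¹ ^ j := by
      rw [← e, mul_assoc, pow_cancel1 hx, mul_one]
    obtain ⟨b1, b2, b3⟩ := h.bas.deg p q r j (by rw [← ey]; exact hy)
    obtain ⟨q', hq'⟩ := bd_reflect hx b2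
    obtain ⟨r', hr'⟩ := bd_reflect hx b3
    refine ⟨reflect j p, q', r', ?_⟩
    rw [ev_reflect hx b1, ey]
    linear_combination (-α) * hq' - β * hr'
  · intro p q r e
    set N := p.natDegree + q.natDegree + r.natDegree
    have f1 := ev_reflect (inv_ne_zero hx) (p := p) (N := N) (by omega)
    have f2 := ev_reflect (inv_ne_zero hx) (p := q) (N := N) (by omega)
    have f3 := ev_reflect (inv_ne_zero hx) (p := r) (N := N) (by omega)
    rw [inv_inv] at f1 f2 f3
    have p4 : x ^ (n - m) * x⁻¹ ^ n = x⁻¹ ^ m := pow_cancel2 hx hmn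
    have p5 := pow_cancel1 hx n
    obtain ⟨i1, i2, i3⟩ := h.bas.indep (reflect N p * X ^ n) (reflect N q * X ^ (n - m)) (reflect N r) (by
      simp only [map_mul, map_pow, aeval_X, f1, f2, f3]
      apply mul_right_cancel₀ (pow_ne_zero n (inv_ne_zero hx))
      linear_combination x ^ N * e + aeval x⁻¹ p * x ^ N * p5 + aeval x⁻¹ q * x ^ N * α * p4)
    refine ⟨?_, ?_, ?_⟩
    · simpa using i1
    · simpa using i2
    · simpa using i3

end Trig

namespace Trig

variable {k K : Type*} [Field k] [Field K] [Algebra k K]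

lemma Datum.ns1 {x α β : K} {a b c d : k[X]} (h : Datum k x α β a b c d) (c0 : k)
    (h1 : a.eval c0 = 0) (h2 : a.derivative.eval c0 = 0) (h3 : b.eval c0 = 0) : False := by
  obtain ⟨a1, rfl⟩ := dvd_iff_isRoot.mpr h1
  obtain ⟨b1, rfl⟩ := dvd_iff_isRoot.mpr h3
  have h4 : a1.eval c0 = 0 := by simpa [derivative_mul] using h2
  obtain ⟨a2, rfl⟩ := dvd_iff_isRoot.mpr h4
  have ht := h.t3.sub_ne c0
  have hz : α / (x - algebraMap k K c0) ∈ O (k := k) x := by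
    refine quad_mem_O (u := aeval x a2 * (β - aeval x c)) (v := aeval x b1) ?_ ?_ ?_
    · exact mul_mem (ev_mem_O _ _) (sub_mem h.hβ (ev_mem_O _ _))
    · exact ev_mem_O _ _
    · have := h.rαα
      simp only [map_mul, map_sub, aeval_X, aeval_C] at this
      field_simp
      linear_combination this
  obtain ⟨p, q, r, e⟩ := h.span _ hz
  have := (h.indep ((X - C c0) * p) ((X - C c0) * q - 1) ((X - C c0) * r) (by
    simp only [map_mul, map_sub, aeval_X, aeval_C, map_one]
    rw [div_eq_iff ht] at e
    linear_combination -e)).2.1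
  have := congrArg (eval c0) this
  simp at this

lemma Datum.ns2 {x α β : K} {a b c d : k[X]} (h : Datum k x α β a b c d) (c0 z : k)
    (h1 : a.eval c0 * z ^ 3 - b.eval c0 * z ^ 2 + c.eval c0 * z - d.eval c0 = 0)
    (h2 : 3 * a.eval c0 * z ^ 2 - 2 * b.eval c0 * z + c.eval c0 = 0)
    (h3 : a.derivative.eval c0 * z ^ 3 - b.derivative.eval c0 * z ^ 2 + c.derivative.eval c0 * z
      - d.derivative.eval c0 = 0) : False := by
  refine (h.shift z).swap.ns1 c0 ?_ ?_ ?_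
  · simp; linear_combination -h1
  · simp only [derivative_add, derivative_sub, derivative_C_mul, eval_add, eval_sub, eval_mul, eval_C]
    linear_combination -h3
  · simp; linear_combination h2

lemma Datum.prim [IsAlgClosed k] {x α β : K} {a b c d : k[X]} (h : Datum k x α β a b c d) (c0 : k)
    (ha : a.eval c0 = 0) (hb : b.eval c0 = 0) (hc : c.eval c0 = 0) (hd : d.eval c0 = 0) : False := by
  set g : k[X] := C (a.derivative.eval c0) * X ^ 3 - C (b.derivative.eval c0) * X ^ 2 +
    C (c.derivative.eval c0) * X - C (d.derivative.eval c0) with hg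
  by_cases hdeg : g.degree = 0
  · have h3 : g.coeff 3 = 0 := coeff_eq_zero_of_degree_lt (by rw [hdeg]; norm_num)
    have : a.derivative.eval c0 = 0 := by
      simpa [hg, coeff_X, coeff_C] using h3
    exact h.ns1 c0 ha this hb
  · obtain ⟨z, hz⟩ := IsAlgClosed.exists_root g hdeg
    refine h.ns2 c0 z (by simp [ha, hb, hc, hd]) (by simp [ha, hb, hc]) ?_
    simpa [hg] using hz

lemma Datum.bezout [IsAlgClosed k] {x α β : K} {a b c d : k[X]} (h : Datum k x α β a b c d) :
    ∃ u v w t : k[X], u * a + v * b + w * c + t * d = 1 := by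
  set I : Ideal k[X] := Ideal.span {a, b, c, d}
  obtain ⟨g, hg⟩ := (inferInstance : I.IsPrincipal)
  have hI : ∀ y, y ∈ I ↔ g ∣ y := fun y => by rw [hg]; exact Ideal.mem_span_singleton
  have ga := (hI a).mp (Ideal.subset_span (by simp))
  have gb := (hI b).mp (Ideal.subset_span (by simp))
  have gc := (hI c).mp (Ideal.subset_span (by simp))
  have gd := (hI d).mp (Ideal.subset_span (by simp))
  have hdeg : g.degree = 0 := by
    by_contra hdeg
    obtain ⟨z, hz⟩ := IsAlgClosed.exists_root g hdeg
    exact h.prim z (hz.dvd ga) (hz.dvd gb) (hz.dvd gc) (hz.dvd gd)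
  have h1 : (1 : k[X]) ∈ I := (hI 1).mpr (isUnit_iff_degree_eq_zero.mpr hdeg).dvd
  simp only [I, Ideal.mem_span_insert, Ideal.mem_span_singleton'] at h1
  obtain ⟨u, _, ⟨v, _, ⟨w, _, ⟨t, rfl⟩, rfl⟩, rfl⟩, e⟩ := h1
  exact ⟨u, v, w, t, by rw [e]; ring⟩

/-- datum in terms of a cubic generator -/
structure TD (k : Type*) {K : Type*} [Field k] [Field K] [Algebra k K]
    (x θ : K) (a b c d : k[X]) : Prop where
  ne : θ ≠ 0
  dat : Datum k x (aeval x a * θ) (aeval x a * θ ^ 2 - aeval x b * θ + aeval x c) a b c d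

lemma Datum.td {x α β : K} {a b c d : k[X]} (h : Datum k x α β a b c d) :
    TD k x (α / aeval x a) a b c d := by
  have ha := h.t3.ev_ne h.a_ne
  refine ⟨div_ne_zero h.α_ne ha, ?_⟩
  have h1 : aeval x a * (α / aeval x a) = α := by field_simp
  have h2 : aeval x a * (α / aeval x a) ^ 2 - aeval x b * (α / aeval x a) + aeval x c = β := by
    have := h.rαα
    field_simp
    linear_combination this
  rw [h1, h2]; exact h

namespace TD
variable {x θ : K} {a b c d : k[X]}

lemma root (h : TD k x θ a b c d) :
    aeval x a * θ ^ 3 - aeval x b * θ ^ 2 + aeval x c * θ - aeval x d = 0 := by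
  have ha := h.dat.t3.ev_ne h.dat.a_ne
  have := h.dat.rαβ
  apply mul_left_cancel₀ ha
  linear_combination this

lemma swap (h : TD k x θ a b c d) : TD k x θ⁻¹ d c b a := by
  refine ⟨inv_ne_zero h.ne, ?_⟩
  have h0 := h.ne
  have hr := h.root
  have h1 : aeval x d * θ⁻¹ = aeval x a * θ ^ 2 - aeval x b * θ + aeval x c := by
    field_simp; linear_combination -hr
  have h2 : aeval x d * θ⁻¹ ^ 2 - aeval x c * θ⁻¹ + aeval x b = aeval x a * θ := by
    field_simp; linear_combination -hr
  rw [h1, h2]; exact h.dat.swap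

lemma indep (h : TD k x θ a b c d) (p q r : k[X]) (e : aeval x p + aeval x q * θ + aeval x r * θ ^ 2 = 0) :
    p = 0 ∧ q = 0 ∧ r = 0 := by
  have ha := h.dat.a_ne
  obtain ⟨h1, h2, h3⟩ := h.dat.indep (a * a * p - a * r * c) (a * q + r * b) (a * r) (by
    simp only [map_sub, map_add, map_mul]
    linear_combination aeval x a * aeval x a * e)
  have hr : r = 0 := by simpa [ha] using h3
  subst hr
  have hq : q = 0 := by simpa [ha] using h2
  subst hq
  have hp : p = 0 := by simpa [ha] using h1
  exact ⟨hp, rfl, rfl⟩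

lemma span (h : TD k x θ a b c d) (y : K) (hy : y ∈ O (k := k) x) :
    ∃ p q r : k[X], y = aeval x p + aeval x q * θ + aeval x r * (aeval x a * θ ^ 2) := by
  obtain ⟨p, q, r, e⟩ := h.dat.span y hy
  refine ⟨p + r * c, q * a - r * b, r, ?_⟩
  rw [e]; simp only [map_sub, map_add, map_mul]; ring

end TD

/-- first conductor-type characterization -/
lemma TD.mem_iff [IsAlgClosed k] {x θ : K} {a b c d : k[X]} (h : TD k x θ a b c d) {e : K}
    (he : ∀ A : Subalgebra k K, IsVal A → x ∈ A → (θ ∈ A → e ∈ A) ∧ (θ⁻¹ ∈ A → e * θ⁻¹ ∈ A)) :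
    ∃ p q r : k[X], e = aeval x p + aeval x q * θ + aeval x r * (aeval x a * θ ^ 2) := by
  have h0 := h.ne
  have key : ∀ w : K, w ∈ O (k := k) x → w * θ ∈ O (k := k) x → e * w ∈ O (k := k) x := by
    intro w hw1 hw2 A hA hx
    obtain ⟨i1, i2⟩ := he A hA hx
    rcases hA θ h0 with ht | ht
    · exact mul_mem (i1 ht) (hw1 A hA hx)
    · have := mul_mem (i2 ht) (hw2 A hA hx)
      convert this using 1; field_simp
  have hα := h.dat.hα
  have hβ := h.dat.hβ
  have hr := h.root
  have k1 := key (aeval x a) (ev_mem_O _ _) hα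
  have k2 := key (aeval x a * θ - aeval x b) (sub_mem hα (ev_mem_O _ _)) (by
    have := sub_mem hβ (ev_mem_O x c)
    convert this using 1; ring)
  have k3 := key (aeval x a * θ ^ 2 - aeval x b * θ + aeval x c) hβ (by
    have := ev_mem_O x d
    convert this using 1; linear_combination hr)
  obtain ⟨u, v, w, t, huv⟩ := h.dat.bezout
  have huv' := congrArg (aeval x) huv
  simp only [map_add, map_mul, map_one] at huv'
  -- e = P + Q θ with P, Q in O x
  obtain ⟨P, hP, Q, hQ, hPQ⟩ : ∃ P ∈ O (k := k) x, ∃ Q ∈ O (k := k) x, e = P + Q * θ := by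
    refine ⟨aeval x u * (e * aeval x a) - aeval x v * (e * (aeval x a * θ - aeval x b)) +
        aeval x w * (e * (aeval x a * θ ^ 2 - aeval x b * θ + aeval x c)), ?_,
      aeval x v * (e * aeval x a) - aeval x w * (e * (aeval x a * θ - aeval x b)) +
        aeval x t * (e * (aeval x a * θ ^ 2 - aeval x b * θ + aeval x c)), ?_, ?_⟩
    · exact add_mem (sub_mem (mul_mem (ev_mem_O _ _) k1) (mul_mem (ev_mem_O _ _) k2)) (mul_mem (ev_mem_O _ _) k3)
    · exact add_mem (sub_mem (mul_mem (ev_mem_O _ _) k1) (mul_mem (ev_mem_O _ _) k2)) (mul_mem (ev_mem_O _ _) k3)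
    · linear_combination (-e) * huv' - aeval x t * e * hr
  obtain ⟨p, q, r, eP⟩ := h.dat.span P hP
  obtain ⟨p', q', r', eQ⟩ := h.dat.span Q hQ
  refine ⟨p + r * c + r' * d, q * a - r * b + p', r + q', ?_⟩
  rw [hPQ, eP, eQ]
  simp only [map_sub, map_add, map_mul]
  linear_combination aeval x r' * hr

end Trig

namespace Trig

variable {k K : Type*} [Field k] [Field K] [Algebra k K]

/-- shorthand for the universal derivation -/
abbrev dd (k : Type*) {K : Type*} [Field k] [Field K] [Algebra k K] (z : K) : KaehlerDifferential k K :=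
  KaehlerDifferential.D k K z

def Reg (A : Subalgebra k K) (ω : KaehlerDifferential k K) : Prop :=
  ω ∈ Set.range (KaehlerDifferential.map k k A K)

lemma Reg.smul {A : Subalgebra k K} {ω : KaehlerDifferential k K} (h : Reg A ω) {u : K} (hu : u ∈ A) :
    Reg A (u • ω) := by
  obtain ⟨η, rfl⟩ := h
  exact ⟨(⟨u, hu⟩ : A) • η, by rw [map_smul]; rfl⟩

lemma Reg.add {A : Subalgebra k K} {ω ω' : KaehlerDifferential k K} (h : Reg A ω) (h' : Reg A ω') :
    Reg A (ω + ω') := by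
  obtain ⟨η, rfl⟩ := h
  obtain ⟨η', rfl⟩ := h'
  exact ⟨η + η', by rw [map_add]⟩

lemma Reg.D {A : Subalgebra k K} {z : K} (h : z ∈ A) : Reg A (dd k z) :=
  ⟨KaehlerDifferential.D k A ⟨z, h⟩, by rw [KaehlerDifferential.map_D]; rfl⟩

/-- `y` is good if its differential is in `A dx + A dθ`. -/
def Good (A : Subalgebra k K) (x θ : K) (ω : KaehlerDifferential k K) : Prop :=
  ∃ u ∈ A, ∃ v ∈ A, ω = u • dd k x + v • dd k θ

lemma Good.add {A : Subalgebra k K} {x θ : K} {ω ω' : KaehlerDifferential k K} (h : Good A x θ ω)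
    (h' : Good A x θ ω') : Good A x θ (ω + ω') := by
  obtain ⟨u, hu, v, hv, rfl⟩ := h
  obtain ⟨u', hu', v', hv', rfl⟩ := h'
  exact ⟨u + u', add_mem hu hu', v + v', add_mem hv hv', by module⟩

lemma Good.smul {A : Subalgebra k K} {x θ : K} {ω : KaehlerDifferential k K} (h : Good A x θ ω)
    {w : K} (hw : w ∈ A) : Good A x θ (w • ω) := by
  obtain ⟨u, hu, v, hv, rfl⟩ := h
  exact ⟨w * u, mul_mem hw hu, w * v, mul_mem hw hv, by module⟩

lemma Good.mul {A : Subalgebra k K} {x θ y z : K} (hy : y ∈ A) (hz : z ∈ A) (h : Good A x θ (dd k y))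
    (h' : Good A x θ (dd k z)) : Good A x θ (dd k (y * z)) := by
  have : dd k (y * z) = y • dd k z + z • dd k y := by simp [dd]
  rw [this]
  exact (h'.smul hy).add (h.smul hz)

lemma Good.ev {A : Subalgebra k K} {x θ : K} (hx : x ∈ A) (p : k[X]) : Good A x θ (dd k (aeval x p)) :=
  ⟨aeval x (derivative p), aeval_mem A hx _, 0, zero_mem _, by
    rw [dd, Derivation.map_aeval]; simp⟩

lemma TD.good [IsAlgClosed k] {x θ : K} {a b c d : k[X]} (h : TD k x θ a b c d) {A : Subalgebra k K}
    (hA : IsVal A) (hx : x ∈ A) (hθ : θ ∈ A) {z : K} (hz : z ∈ A) : Good A x θ (dd k z) := by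
  have gθ : Good A x θ (dd k θ) := ⟨0, zero_mem _, 1, one_mem _, by simp⟩
  have hO : ∀ y ∈ O (k := k) x, Good A x θ (dd k y) := by
    intro y hy
    obtain ⟨p, q, r, rfl⟩ := h.span y hy
    rw [dd, map_add, map_add]
    have gp := aeval_mem A hx
    refine (Good.add (Good.ev hx p) (Good.mul (gp q) hθ (Good.ev hx q) gθ)).add ?_
    refine Good.mul (gp r) (mul_mem (gp a) (pow_mem hθ 2)) (Good.ev hx r) ?_
    refine Good.mul (gp a) (pow_mem hθ 2) (Good.ev hx a) ?_
    rw [pow_two]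
    exact Good.mul hθ hθ gθ gθ
  obtain ⟨n, e, hn, he, he0, heA, hen⟩ := h.dat.t3.frac hA hx hz
  have h1 : dd k n = e • dd k z + z • dd k e := by rw [← hen]; simp [dd]
  have h2 : dd k z = e⁻¹ • (dd k n + (-z) • dd k e) := by
    rw [h1]
    match_scalars
    · field_simp
    · ring
  rw [h2]
  exact ((hO n hn).add ((hO e he).smul (neg_mem hz))).smul heA

lemma TD.good_of_reg [IsAlgClosed k] {x θ : K} {a b c d : k[X]} (h : TD k x θ a b c d) {A : Subalgebra k K}
    (hA : IsVal A) (hx : x ∈ A) (hθ : θ ∈ A) {ω : KaehlerDifferential k K} (hω : Reg A ω) : Good A x θ ω := by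
  obtain ⟨η, rfl⟩ := hω
  have : η ∈ Submodule.span A (Set.range (KaehlerDifferential.D k A)) := by
    rw [KaehlerDifferential.span_range_derivation]; trivial
  induction this using Submodule.span_induction with
  | mem η hη =>
    obtain ⟨z, rfl⟩ := hη
    rw [KaehlerDifferential.map_D]
    exact h.good hA hx hθ z.2
  | zero => rw [map_zero]; exact ⟨0, zero_mem _, 0, zero_mem _, by simp⟩
  | add η η' _ _ h1 h2 => rw [map_add]; exact h1.add h2
  | smul r η _ h1 =>
    rw [map_smul]
    exact h1.smul r.2

lemma top_val : IsVal (⊤ : Subalgebra k K) := fun _ _ => Or.inl trivial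

lemma TD.omega [IsAlgClosed k] {x θ : K} {a b c d : k[X]} (h : TD k x θ a b c d)
    (ω : KaehlerDifferential k K) : ∃ u v : K, ω = u • dd k x + v • dd k θ := by
  have : ω ∈ Submodule.span K (Set.range (KaehlerDifferential.D k K)) := by
    rw [KaehlerDifferential.span_range_derivation]; trivial
  induction this using Submodule.span_induction with
  | mem η hη =>
    obtain ⟨z, rfl⟩ := hη
    obtain ⟨u, _, v, _, e⟩ := h.good top_val trivial trivial (z := z) trivial
    exact ⟨u, v, e⟩
  | zero => exact ⟨0, 0, by simp⟩
  | add η η' _ _ h1 h2 =>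
    obtain ⟨u, v, rfl⟩ := h1
    obtain ⟨u', v', rfl⟩ := h2
    exact ⟨u + u', v + v', by module⟩
  | smul r η _ h1 =>
    obtain ⟨u, v, rfl⟩ := h1
    exact ⟨r * u, r * v, by module⟩

def fx (x θ : K) (a b c d : k[X]) : K :=
  aeval x (derivative a) * θ ^ 3 - aeval x (derivative b) * θ ^ 2 + aeval x (derivative c) * θ -
    aeval x (derivative d)

def dl (x θ : K) (a b c : k[X]) : K :=
  3 * aeval x a * θ ^ 2 - 2 * aeval x b * θ + aeval x c

lemma TD.rel {x θ : K} {a b c d : k[X]} (h : TD k x θ a b c d) :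
    fx x θ a b c d • dd k x + dl x θ a b c • dd k θ = 0 := by
  have h1 := congrArg (KaehlerDifferential.D k K) h.root
  simp only [map_add, map_sub, map_zero, Derivation.leibniz, Derivation.leibniz_pow, Derivation.map_aeval] at h1
  rw [← h1]
  simp only [fx, dl, dd]
  module

lemma TD.dl_swap {x θ : K} {a b c d : k[X]} (h : TD k x θ a b c d) :
    dl x θ⁻¹ d c b = dl x θ a b c * θ⁻¹ := by
  have h0 := h.ne
  have := h.root
  simp only [dl]
  field_simp
  linear_combination (-3) * this

/-- residues -/
def Red (A : Subalgebra k K) (u : K) (c : k) : Prop := NU A (u - algebraMap k K c)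

lemma Red.mem {A : Subalgebra k K} {u : K} {c : k} (h : Red A u c) : u ∈ A := by
  have := add_mem h.1 (A.algebraMap_mem c); simpa using this

lemma Red.add {A : Subalgebra k K} (hA : IsVal A) {u v : K} {c e : k} (h : Red A u c) (h' : Red A v e) :
    Red A (u + v) (c + e) := by
  have := NU.add hA h h'
  unfold Red; rw [map_add]; convert this using 1; ring

lemma Red.sub {A : Subalgebra k K} (hA : IsVal A) {u v : K} {c e : k} (h : Red A u c) (h' : Red A v e) :
    Red A (u - v) (c - e) := by
  have := NU.sub hA h h'
  unfold Red; rw [map_sub]; convert this using 1; ring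

lemma Red.mul {A : Subalgebra k K} (hA : IsVal A) {u v : K} {c e : k} (h : Red A u c) (h' : Red A v e) :
    Red A (u * v) (c * e) := by
  have := NU.add hA (NU.mul_left h.mem h') (NU.mul_left (A.algebraMap_mem e) h)
  unfold Red; rw [map_mul]; convert this using 1; ring

lemma Red.pow {A : Subalgebra k K} (hA : IsVal A) {u : K} {c : k} (h : Red A u c) (n : ℕ) :
    Red A (u ^ n) (c ^ n) := by
  induction n with
  | zero => exact ⟨by simp, Or.inl (by simp)⟩
  | succ n ih => rw [pow_succ, pow_succ]; exact ih.mul hA h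

lemma Red.natCast {A : Subalgebra k K} (n : k) : Red A (algebraMap k K n) n :=
  ⟨by simp, Or.inl (by simp)⟩

lemma Red.zero_of_NU {A : Subalgebra k K} (hA : IsVal A) {u : K} {c : k} (h : Red A u c) (hu : NU A u) : c = 0 := by
  have := NU.sub hA hu h
  simp only [sub_sub_cancel] at this
  exact not_NU_algebraMap this

lemma TD.units [IsAlgClosed k] {x θ : K} {a b c d : k[X]} (h : TD k x θ a b c d) {A : Subalgebra k K}
    (hA : IsVal A) (hx : x ∈ A) (hθ : θ ∈ A) (hδ : dl x θ a b c ≠ 0) (h1 : NU A (dl x θ a b c))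
    (h2 : NU A (fx x θ a b c d)) : False := by
  have hc : ∃ c0 : k, Red A x c0 := by
    by_contra hno
    rcases h1.2 with h1 | h1
    · exact hδ h1
    · apply h1
      obtain ⟨D, hD, hDz⟩ := h.dat.t3.clear (dl x θ a b c)⁻¹
      have hDu : ¬ NU A (aeval x D) := fun hn => hno (NU_root hx _ D rfl hD hn)
      obtain ⟨hD0, hDA⟩ := inv_mem_of_not_NU (aeval_mem A hx D) hDu
      have := mul_mem hDA (hDz A hA hx)
      rwa [inv_mul_cancel_left₀ hD0] at this
  obtain ⟨c0, rx⟩ := hc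
  have rp : ∀ p : k[X], Red A (aeval x p) (p.eval c0) := fun p => NU_congr hx rx p
  have hz : ∃ z : k, Red A θ z := by
    set g : k[X] := C (a.eval c0) * X ^ 3 - C (b.eval c0) * X ^ 2 + C (c.eval c0) * X - C (d.eval c0) with hg
    refine NU_root hθ _ g rfl ?_ ?_
    · intro h0
      refine h.dat.prim c0 ?_ ?_ ?_ ?_
      · have := congrArg (coeff · 3) h0; simpa [hg, coeff_X, coeff_C] using this
      · have := congrArg (coeff · 2) h0; simpa [hg, coeff_X, coeff_C] using this
      · have := congrArg (coeff · 1) h0; simpa [hg, coeff_X, coeff_C] using this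
      · have := congrArg (coeff · 0) h0; simpa [hg, coeff_X, coeff_C] using this
    · have e : aeval θ g = - ((aeval x a - algebraMap k K (a.eval c0)) * θ ^ 3 -
        (aeval x b - algebraMap k K (b.eval c0)) * θ ^ 2 + (aeval x c - algebraMap k K (c.eval c0)) * θ -
        (aeval x d - algebraMap k K (d.eval c0))) := by
        simp only [hg, map_add, map_sub, map_mul, aeval_C, aeval_X, map_pow]
        linear_combination h.root
      rw [e]
      refine NU.neg (NU.sub hA (NU.add hA (NU.sub hA ?_ ?_) ?_) (rp d))
      · exact NU.mul_right (rp a) (pow_mem hθ 3)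
      · exact NU.mul_right (rp b) (pow_mem hθ 2)
      · exact NU.mul_right (rp c) hθ
  obtain ⟨z, rz⟩ := hz
  have e3 : (3 : K) = algebraMap k K 3 := (map_ofNat (algebraMap k K) 3).symm
  have e2 : (2 : K) = algebraMap k K 2 := (map_ofNat (algebraMap k K) 2).symm
  have r3 : Red A (3 : K) (3 : k) := by rw [e3]; exact Red.natCast 3
  have r2 : Red A (2 : K) (2 : k) := by rw [e2]; exact Red.natCast 2
  refine h.dat.ns2 c0 z ?_ ?_ ?_
  · refine Red.zero_of_NU hA (((((rp a).mul hA (rz.pow hA 3)).sub hA ((rp b).mul hA (rz.pow hA 2))).add hA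
      ((rp c).mul hA rz)).sub hA (rp d)) ?_
    rw [h.root]; exact ⟨zero_mem _, Or.inl rfl⟩
  · exact Red.zero_of_NU hA (((((r3.mul hA (rp a)).mul hA (rz.pow hA 2)).sub hA ((r2.mul hA (rp b)).mul hA rz)).add hA
      (rp c))) h1
  · exact Red.zero_of_NU hA (((((rp _).mul hA (rz.pow hA 3)).sub hA ((rp _).mul hA (rz.pow hA 2))).add hA
      ((rp _).mul hA rz)).sub hA (rp _)) h2

lemma fx_mem {A : Subalgebra k K} {x θ : K} (hx : x ∈ A) (hθ : θ ∈ A) (a b c d : k[X]) : fx x θ a b c d ∈ A := by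
  have g := aeval_mem A hx
  exact sub_mem (add_mem (sub_mem (mul_mem (g _) (pow_mem hθ _)) (mul_mem (g _) (pow_mem hθ _))) (mul_mem (g _) hθ)) (g _)

lemma dl_mem {A : Subalgebra k K} {x θ : K} (hx : x ∈ A) (hθ : θ ∈ A) (a b c : k[X]) : dl x θ a b c ∈ A := by
  have g := aeval_mem A hx
  exact add_mem (sub_mem (mul_mem (mul_mem (ofNat_mem A 3) (g _)) (pow_mem hθ _)) (mul_mem (mul_mem (ofNat_mem A 2) (g _)) hθ)) (g _)

/-- local description of regular differentials -/
lemma TD.reg_iff1 [IsAlgClosed k] {x θ : K} {a b c d : k[X]} (h : TD k x θ a b c d) {A : Subalgebra k K}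
    (hA : IsVal A) (hx : x ∈ A) (hθ : θ ∈ A) (hδ : dl x θ a b c ≠ 0) (hdx : dd k x ≠ 0) (w : K) :
    Reg A (w • dd k x) ↔ w * dl x θ a b c ∈ A := by
  have hrel := h.rel
  have hfx := fx_mem hx hθ a b c d
  have hdl := dl_mem hx hθ a b c
  have hdθ : dd k θ = (-(fx x θ a b c d) / dl x θ a b c) • dd k x := by
    have : dd k θ = (dl x θ a b c)⁻¹ • (fx x θ a b c d • dd k x + dl x θ a b c • dd k θ) +
        (-(fx x θ a b c d) / dl x θ a b c) • dd k x := by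
      match_scalars
      · field_simp
      · field_simp; ring
    rw [hrel] at this; simpa using this
  constructor
  · intro hr
    obtain ⟨u, hu, v, hv, e⟩ := h.good_of_reg hA hx hθ hr
    rw [hdθ, smul_smul, ← add_smul] at e
    have e2 : w = u + v * (-(fx x θ a b c d) / dl x θ a b c) := by
      have : (w - (u + v * (-(fx x θ a b c d) / dl x θ a b c))) • dd k x = 0 := by
        rw [sub_smul, e, sub_self]
      exact sub_eq_zero.mp ((smul_eq_zero.mp this).resolve_right hdx)
    have e3 : w * dl x θ a b c = u * dl x θ a b c - v * fx x θ a b c d := by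
      rw [e2]; field_simp; ring
    rw [e3]
    exact sub_mem (mul_mem hu hdl) (mul_mem hv hfx)
  · intro hw
    by_cases h1 : NU A (dl x θ a b c)
    · by_cases h2 : NU A (fx x θ a b c d)
      · exact (h.units hA hx hθ hδ h1 h2).elim
      · obtain ⟨hf0, hfA⟩ := inv_mem_of_not_NU hfx h2
        have e : w • dd k x = (-(w * dl x θ a b c * (fx x θ a b c d)⁻¹)) • dd k θ := by
          rw [hdθ, smul_smul]; congr 1; field_simp
        rw [e]
        exact (Reg.D hθ).smul (neg_mem (mul_mem hw hfA))
    · obtain ⟨hf0, hfA⟩ := inv_mem_of_not_NU hdl h1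
      have e : w = w * dl x θ a b c * (dl x θ a b c)⁻¹ := by field_simp
      rw [e]
      exact (Reg.D hx).smul (mul_mem hw hfA)

def Econd (k : Type*) {K : Type*} [Field k] [Field K] [Algebra k K] (x θ e : K) : Prop :=
  ∀ A : Subalgebra k K, IsVal A → x ∈ A → (θ ∈ A → e ∈ A) ∧ (θ⁻¹ ∈ A → e * θ⁻¹ ∈ A)

lemma TD.reg_iff [IsAlgClosed k] {x θ : K} {a b c d : k[X]} (h : TD k x θ a b c d)
    (hδ : dl x θ a b c ≠ 0) (hdx : dd k x ≠ 0) (w : K) :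
    (∀ A : Subalgebra k K, IsVal A → x ∈ A → Reg A (w • dd k x)) ↔ Econd k x θ (w * dl x θ a b c) := by
  have hs := h.dl_swap
  have hδ' : dl x θ⁻¹ d c b ≠ 0 := by rw [hs]; exact mul_ne_zero hδ (inv_ne_zero h.ne)
  constructor
  · intro hr A hA hx
    refine ⟨fun hθ => (h.reg_iff1 hA hx hθ hδ hdx w).mp (hr A hA hx), fun hθ => ?_⟩
    have := (h.swap.reg_iff1 hA hx hθ hδ' hdx w).mp (hr A hA hx)
    rwa [hs, ← mul_assoc] at this
  · intro he A hA hx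
    rcases hA θ h.ne with hθ | hθ
    · exact (h.reg_iff1 hA hx hθ hδ hdx w).mpr ((he A hA hx).1 hθ)
    · refine (h.swap.reg_iff1 hA hx hθ hδ' hdx w).mpr ?_
      rw [hs, ← mul_assoc]; exact (he A hA hx).2 hθ

end Trig

namespace Trig

variable {k K : Type*} [Field k] [Field K] [Algebra k K]

/-- Both charts at once -/
structure Two (k : Type*) {K : Type*} [Field k] [Field K] [Algebra k K]
    (x θ : K) (m n : ℕ) (a b c d : k[X]) : Prop where
  hm : 1 ≤ m
  hmn : m ≤ n
  ha : a.natDegree + n ≤ 2 * m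
  hb : b.natDegree ≤ m
  hc : c.natDegree ≤ n
  hd : d.natDegree + m ≤ 2 * n
  tx : TD k x θ a b c d
  ts : TD k x⁻¹ (θ * x⁻¹ ^ (n - m)) (reflect (2 * m - n) a) (reflect m b) (reflect n c)
      (reflect (2 * n - m) d)

lemma Full.two {x α β : K} {m n : ℕ} {a b c d : k[X]} (h : Full k x α β m n a b c d) :
    Two k x (α / aeval x a) m n a b c d where
  hm := h.bas.hm
  hmn := h.bas.hmn
  ha := h.ha
  hb := h.hb
  hc := h.hc
  hd := h.hd
  tx := h.dx.td
  ts := by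
    have := h.ds.td
    have ha := h.ha
    have hmn := h.bas.hmn
    have hx := h.dx.t3.ne_zero
    have ha0 := h.dx.t3.ev_ne h.dx.a_ne
    have e : α * x⁻¹ ^ m / aeval x⁻¹ (reflect (2 * m - n) a) = α / aeval x a * x⁻¹ ^ (n - m) := by
      rw [ev_reflect hx (by omega)]
      have e2 : x⁻¹ ^ m = x⁻¹ ^ (n - m) * x⁻¹ ^ (2 * m - n) := by rw [← pow_add]; congr 1; omega
      rw [e2]
      have := pow_ne_zero (2 * m - n) (inv_ne_zero hx)
      generalize x⁻¹ ^ (2 * m - n) = S at *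
      field_simp
    rwa [e] at this

namespace Two
variable {x θ : K} {m n : ℕ} {a b c d : k[X]}

lemma dl_s (h : Two k x θ m n a b c d) :
    dl x⁻¹ (θ * x⁻¹ ^ (n - m)) (reflect (2 * m - n) a) (reflect m b) (reflect n c) = dl x θ a b c * x⁻¹ ^ n := by
  have hx := h.tx.dat.t3.ne_zero
  have ha := h.ha
  have hmn := h.hmn
  unfold dl
  rw [ev_reflect hx (p := a) (by omega), ev_reflect hx h.hb, ev_reflect hx h.hc]
  have p1 : x⁻¹ ^ (2 * m - n) * (x⁻¹ ^ (n - m)) ^ 2 = x⁻¹ ^ n := by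
    rw [← pow_mul, ← pow_add]; congr 1; omega
  have p2 : x⁻¹ ^ m * x⁻¹ ^ (n - m) = x⁻¹ ^ n := by
    rw [← pow_add]; congr 1; omega
  linear_combination (3 * aeval x a * θ ^ 2) * p1 - (2 * aeval x b * θ) * p2

lemma dinv (hx : x ≠ 0) : dd k x = (-(x ^ 2)) • dd k x⁻¹ := by
  rw [dd, dd, Derivation.leibniz_inv, smul_smul]
  have : -x ^ 2 * -x⁻¹ ^ 2 = 1 := by field_simp
  rw [this, one_smul]

lemma deg_cmp {p P : k[X]} {N i j : ℕ} (hP : P.natDegree ≤ N) (e : p * X ^ (i + N) = P * X ^ j) :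
    p = 0 ∨ p.natDegree + i ≤ j := by
  by_cases hp : p = 0
  · exact Or.inl hp
  right
  have h1 := congrArg natDegree e
  rw [natDegree_mul_X_pow _ hp] at h1
  have h2 : (P * X ^ j).natDegree ≤ P.natDegree + j := natDegree_mul_le.trans (by simp)
  omega

lemma reg_iff [IsAlgClosed k] (h : Two k x θ m n a b c d) (hδ : dl x θ a b c ≠ 0) (hdx : dd k x ≠ 0) (w : K) :
    w • dd k x ∈ RegularDifferentials k K ↔
      ∃ p q : k[X], (p = 0 ∨ p.natDegree + 2 ≤ n) ∧ (q = 0 ∨ q.natDegree + 2 ≤ m) ∧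
        w * dl x θ a b c = aeval x p + aeval x q * θ := by
  have hx := h.tx.dat.t3.ne_zero
  have hmn := h.hmn
  have hs0 : x⁻¹ ≠ 0 := inv_ne_zero hx
  have hds : dd k x⁻¹ ≠ 0 := by
    intro h0; apply hdx; rw [dinv hx, h0, smul_zero]
  have hδs : dl x⁻¹ (θ * x⁻¹ ^ (n - m)) (reflect (2 * m - n) a) (reflect m b) (reflect n c) ≠ 0 := by
    rw [h.dl_s]; exact mul_ne_zero hδ (pow_ne_zero _ hs0)
  have hwds : w • dd k x = (-(w * x ^ 2)) • dd k x⁻¹ := by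
    conv_lhs => rw [dinv hx, smul_smul]
    congr 1; ring
  have i1 := h.tx.reg_iff hδ hdx w
  have i2 := h.ts.reg_iff hδs hds (-(w * x ^ 2))
  rw [← hwds, h.dl_s] at i2
  have hreg : w • dd k x ∈ RegularDifferentials k K ↔
      Econd k x θ (w * dl x θ a b c) ∧
      Econd k x⁻¹ (θ * x⁻¹ ^ (n - m)) (-(w * x ^ 2) * (dl x θ a b c * x⁻¹ ^ n)) := by
    rw [← i1, ← i2]
    constructor
    · intro hr
      exact ⟨fun A hA _ => hr A hA, fun A hA _ => hr A hA⟩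
    · rintro ⟨h1, h2⟩ A hA
      rcases hA x hx with hxA | hxA
      · exact h1 A hA hxA
      · exact h2 A hA hxA
  rw [hreg]
  set e := w * dl x θ a b c with he
  have he2 : -(w * x ^ 2) * (dl x θ a b c * x⁻¹ ^ n) = -(e * (x ^ 2 * x⁻¹ ^ n)) := by rw [he]; ring
  rw [he2]
  constructor
  · rintro ⟨E1, E2⟩
    obtain ⟨p, q, r, e1⟩ := h.tx.mem_iff E1
    obtain ⟨p', q', r', e2⟩ := h.ts.mem_iff E2
    set N := p'.natDegree + q'.natDegree + r'.natDegree
    have f1 := ev_reflect hs0 (p := p') (N := N) (by omega)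
    have f2 := ev_reflect hs0 (p := q') (N := N) (by omega)
    have f3 := ev_reflect hs0 (p := r') (N := N) (by omega)
    rw [inv_inv] at f1 f2 f3
    have p1 : x⁻¹ ^ (2 * m - n) * (x⁻¹ ^ (n - m)) ^ 2 = x⁻¹ ^ n := by
      have := h.ha
      rw [← pow_mul, ← pow_add]; congr 1; omega
    have p2 : x ^ m * x⁻¹ ^ m = 1 := pow_cancel1 hx m
    have p3 := pow_cancel1 hx n
    have p4 : x⁻¹ ^ n = x⁻¹ ^ (n - m) * x⁻¹ ^ m := by
      rw [← pow_add]; congr 1; omega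
    rw [ev_reflect hx (p := a) (by have := h.ha; omega)] at e2
    obtain ⟨i1, i2, i3⟩ := h.tx.indep (p * X ^ (2 + N) + reflect N p' * X ^ n) (q * X ^ (2 + N) + reflect N q' * X ^ m)
      ((r * X ^ (2 + N) + reflect N r') * a) (by
      simp only [map_mul, map_add, map_pow, aeval_X, f1, f2, f3]
      apply mul_right_cancel₀ (pow_ne_zero n hs0)
      generalize x⁻¹ ^ (2 * m - n) = S1 at *
      generalize x⁻¹ ^ (n - m) = S2 at *
      generalize x⁻¹ ^ n = S3 at *
      generalize x⁻¹ ^ m = S4 at *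
      linear_combination (- x ^ N * x ^ 2 * S3) * e1 - x ^ N * e2 + aeval x⁻¹ p' * x ^ N * p3
        + aeval x⁻¹ q' * x ^ N * θ * S2 * p2  - aeval x⁻¹ r' * aeval x a * x ^ N * θ ^ 2 * p1
        + aeval x⁻¹ q' * x ^ N * x ^ m * θ * p4)
    have hN : ∀ P : k[X], P.natDegree ≤ N → (- reflect N P).natDegree ≤ N := fun P hP => by
      rw [natDegree_neg]
      exact (natDegree_reflect_le (N := N)).trans (by simp [hP])
    have ha0 := h.tx.dat.a_ne
    have hr0 : r = 0 := by
      have := deg_cmp (p := r) (P := - reflect N r') (N := N) (i := 2) (j := 0) (hN _ (by omega)) (by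
        have := (mul_eq_zero.mp i3).resolve_right ha0
        linear_combination this)
      exact this.resolve_right (by omega)
    refine ⟨p, q, deg_cmp (P := - reflect N p') (N := N) (hN _ (by omega)) (by linear_combination i1),
      deg_cmp (P := - reflect N q') (N := N) (hN _ (by omega)) (by linear_combination i2), ?_⟩
    rw [e1, hr0]; simp
  · rintro ⟨p, q, hp, hq, e1⟩
    refine ⟨?_, ?_⟩
    · intro A hA hxA
      have g := aeval_mem A hxA
      rw [e1]
      refine ⟨fun hθ => add_mem (g _) (mul_mem (g _) hθ), fun hθ => ?_⟩
      have : (aeval x p + aeval x q * θ) * θ⁻¹ = aeval x p * θ⁻¹ + aeval x q := by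
        have := h.tx.ne; field_simp
      rw [this]
      exact add_mem (mul_mem (g _) hθ) (g _)
    · have key : ∀ (p : k[X]) (n : ℕ), (p = 0 ∨ p.natDegree + 2 ≤ n) → ∃ p' : k[X], aeval x p * (x ^ 2 * x⁻¹ ^ n) = aeval x⁻¹ p' := by
        intro p n hp
        obtain ⟨p', hp'⟩ := bd_reflect hx (m := 2) (j := n) hp
        refine ⟨p', ?_⟩
        have := pow_cancel1 hx 2
        linear_combination (-(x ^ 2)) * hp' + aeval x⁻¹ p' * this
      obtain ⟨p', hp'⟩ := key p n hp
      obtain ⟨q', hq'⟩ := key q m hq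
      have p4 : x⁻¹ ^ n = x⁻¹ ^ (n - m) * x⁻¹ ^ m := by
        rw [← pow_add]; congr 1; omega
      have e2 : -(e * (x ^ 2 * x⁻¹ ^ n)) = -(aeval x⁻¹ p' + aeval x⁻¹ q' * (θ * x⁻¹ ^ (n - m))) := by
        rw [e1, ← hp', ← hq']
        linear_combination (-(aeval x q * θ * x ^ 2)) * p4
      intro A hA hxA
      have g := aeval_mem A hxA
      rw [e2]
      refine ⟨fun hθ => neg_mem (add_mem (g _) (mul_mem (g _) hθ)), fun hθ => ?_⟩
      have h0 := h.ts.ne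
      generalize θ * x⁻¹ ^ (n - m) = T at *
      have : -(aeval x⁻¹ p' + aeval x⁻¹ q' * T) * T⁻¹ = -(aeval x⁻¹ p' * T⁻¹ + aeval x⁻¹ q') := by
        field_simp
      rw [this]
      exact neg_mem (add_mem (mul_mem (g _) hθ) (g _))

lemma degLT {p : k[X]} {n : ℕ} : (p = 0 ∨ p.natDegree + 2 ≤ n) ↔ p ∈ degreeLT k (n - 1) := by
  rw [mem_degreeLT]
  by_cases hp : p = 0
  · simp [hp]
  · rw [degree_eq_natDegree hp]
    simp only [hp, false_or, Nat.cast_lt]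
    omega

lemma genus_sep [IsAlgClosed k] (h : Two k x θ m n a b c d) (hδ : dl x θ a b c ≠ 0) (hg : HasGenusFive k K) :
    m + n = 7 := by
  have hm := h.hm
  have hmn := h.hmn
  -- every differential is a multiple of dx
  have hω : ∀ ω : KaehlerDifferential k K, ∃ w : K, ω = w • dd k x := by
    intro ω
    obtain ⟨u, v, rfl⟩ := h.tx.omega ω
    have hrel := h.tx.rel
    refine ⟨u + v * (-(fx x θ a b c d) / dl x θ a b c), ?_⟩
    have : u • dd k x + v • dd k θ = (v * (dl x θ a b c)⁻¹) • (fx x θ a b c d • dd k x + dl x θ a b c • dd k θ) +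
        (u + v * (-(fx x θ a b c d) / dl x θ a b c)) • dd k x := by
      match_scalars
      · field_simp; ring
      · field_simp
    rw [hrel] at this; simpa using this
  have hdx : dd k x ≠ 0 := by
    intro h0
    have hall : ∀ ω : KaehlerDifferential k K, ω = 0 := fun ω => by
      obtain ⟨w, rfl⟩ := hω ω; rw [h0, smul_zero]
    unfold HasGenusFive at hg
    have : Submodule.span k (RegularDifferentials k K) = ⊥ := by
      rw [Submodule.span_eq_bot]; intro ω _; exact hall ω
    rw [this] at hg
    simp at hg
  let Φ : (degreeLT k (n - 1) × degreeLT k (m - 1)) →ₗ[k] KaehlerDifferential k K :=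
    { toFun := fun pq => ((aeval x (pq.1 : k[X]) + aeval x (pq.2 : k[X]) * θ) / dl x θ a b c) • dd k x
      map_add' := by
        rintro ⟨p, q⟩ ⟨p', q'⟩
        simp only [Prod.fst_add, Prod.snd_add, Submodule.coe_add, map_add]
        rw [← add_smul]; congr 1; ring
      map_smul' := by
        rintro r ⟨p, q⟩
        simp only [Prod.smul_fst, Prod.smul_snd, Submodule.coe_smul, map_smul, RingHom.id_apply]
        rw [← smul_assoc]; congr 1
        simp only [Algebra.smul_def]; ring }
  have hinj : Function.Injective Φ := by
    rw [← LinearMap.ker_eq_bot, LinearMap.ker_eq_bot']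
    rintro ⟨⟨p, hp⟩, ⟨q, hq⟩⟩ he
    have he : ((aeval x p + aeval x q * θ) / dl x θ a b c) • dd k x = 0 := he
    have h1 := (smul_eq_zero.mp he).resolve_right hdx
    have h2 := (div_eq_zero_iff.mp h1).resolve_right hδ
    obtain ⟨rfl, rfl, _⟩ := h.tx.indep p q 0 (by simp [h2])
    rfl
  have hrange : RegularDifferentials k K = (LinearMap.range Φ : Set (KaehlerDifferential k K)) := by
    ext ω
    obtain ⟨w, rfl⟩ := hω ω
    rw [h.reg_iff hδ hdx w]
    constructor
    · rintro ⟨p, q, hp, hq, e⟩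
      refine ⟨(⟨p, degLT.mp hp⟩, ⟨q, degLT.mp hq⟩), ?_⟩
      change ((aeval x p + aeval x q * θ) / dl x θ a b c) • dd k x = _
      rw [← e, mul_div_cancel_right₀ _ hδ]
    · rintro ⟨⟨⟨p, hp⟩, ⟨q, hq⟩⟩, e⟩
      have e : ((aeval x p + aeval x q * θ) / dl x θ a b c) • dd k x = w • dd k x := e
      refine ⟨p, q, degLT.mpr hp, degLT.mpr hq, ?_⟩
      have : ((aeval x p + aeval x q * θ) / dl x θ a b c - w) • dd k x = 0 := by rw [sub_smul, e, sub_self]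
      have := sub_eq_zero.mp ((smul_eq_zero.mp this).resolve_right hdx)
      rw [← this]; field_simp
  unfold HasGenusFive at hg
  rw [hrange, Submodule.span_eq] at hg
  have e1 := (LinearEquiv.ofInjective Φ hinj).finrank_eq
  have e2 : Module.finrank k (LinearMap.range Φ) = 5 := by
    rw [Module.finrank, hg]; simp
  have e3 := ((degreeLTEquiv k (n - 1)).prodCongr (degreeLTEquiv k (m - 1))).finrank_eq
  rw [e1, e2] at e3
  simp at e3
  omega

end Two
end Trig

namespace Trig

variable {k K : Type*} [Field k] [Field K] [Algebra k K]

lemma TD.mem_of_reg [IsAlgClosed k] {x θ : K} {a b c d : k[X]} (h : TD k x θ a b c d)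
    (hdx : dd k x = 0) (hθ : dd k θ ≠ 0) {w : K}
    (hr : ∀ A : Subalgebra k K, IsVal A → x ∈ A → Reg A (w • dd k θ)) : w ∈ O (k := k) x := by
  intro A hA hx
  rcases hA θ h.ne with ht | ht
  · obtain ⟨u, hu, v, hv, e⟩ := h.good_of_reg hA hx ht (hr A hA hx)
    rw [hdx, smul_zero, zero_add] at e
    have : (w - v) • dd k θ = 0 := by rw [sub_smul, e, sub_self]
    rw [sub_eq_zero.mp ((smul_eq_zero.mp this).resolve_right hθ)]
    exact hv
  · obtain ⟨u, hu, v, hv, e⟩ := h.swap.good_of_reg hA hx ht (hr A hA hx)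
    rw [hdx, smul_zero, zero_add, dd, dd, Derivation.leibniz_inv, smul_smul] at e
    have : (w - v * -θ⁻¹ ^ 2) • dd k θ = 0 := by rw [sub_smul, e, sub_self]
    rw [sub_eq_zero.mp ((smul_eq_zero.mp this).resolve_right hθ)]
    exact mul_mem hv (neg_mem (pow_mem ht 2))

namespace Two
variable {x θ : K} {m n : ℕ} {a b c d : k[X]}

lemma fx_ne [IsAlgClosed k] (h : Two k x θ m n a b c d) (hδ : dl x θ a b c = 0) : fx x θ a b c d ≠ 0 := by
  intro hf
  obtain ⟨h1, h2, h3⟩ := h.tx.indep c (-2 * b) (3 * a) (by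
    rw [← hδ]; simp only [dl, map_mul, map_neg, map_ofNat]; ring)
  have ha := h.tx.dat.a_ne
  have h3k : (3 : k[X]) = 0 := (mul_eq_zero.mp h3).resolve_right ha
  have hb : b = 0 := by linear_combination h2 + b * h3k
  subst hb h1
  obtain ⟨c0, hc0⟩ : ∃ c0, a.eval c0 ≠ 0 := by
    by_contra hno
    push Not at hno
    exact ha (Polynomial.funext (fun r => by simp [hno r]))
  obtain ⟨z, hz⟩ := IsAlgClosed.exists_pow_nat_eq (d.eval c0 / a.eval c0) (n := 3) (by norm_num)
  have hz' : a.eval c0 * z ^ 3 = d.eval c0 := by rw [hz]; field_simp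
  have hr := h.tx.root
  have hw : derivative a * d = a * derivative d := by
    have : aeval x (derivative a * d - a * derivative d) = 0 := by
      simp only [fx, map_zero, derivative_zero, zero_mul, sub_zero, add_zero] at hf hr
      simp only [map_sub, map_mul]
      linear_combination aeval x a * hf - aeval x (derivative a) * hr
    exact sub_eq_zero.mp (h.tx.dat.t3.ev_eq_zero this)
  have hw' := congrArg (eval c0) hw
  simp only [eval_mul] at hw'
  have h3' : (3 : k) = 0 := by simpa using congrArg (eval 0) h3k
  refine h.tx.dat.ns2 c0 z ?_ ?_ ?_
  · simp [hz']
  · simp [h3']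
  · simp only [derivative_zero, eval_zero, zero_mul, sub_zero, add_zero]
    apply mul_left_cancel₀ hc0
    linear_combination hw' + eval c0 (derivative a) * hz'

lemma genus_insep [IsAlgClosed k] (h : Two k x θ m n a b c d) (hδ : dl x θ a b c = 0) (hg : HasGenusFive k K) :
    False := by
  have hx := h.tx.dat.t3.ne_zero
  have hf := h.fx_ne hδ
  have hdx : dd k x = 0 := by
    have := h.tx.rel
    rw [hδ, zero_smul, add_zero] at this
    exact (smul_eq_zero.mp this).resolve_left hf
  have hds : dd k x⁻¹ = 0 := by
    rw [dd, Derivation.leibniz_inv]; rw [dd] at hdx; rw [hdx, smul_zero]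
  have hω : ∀ ω : KaehlerDifferential k K, ∃ w : K, ω = w • dd k θ := by
    intro ω
    obtain ⟨u, v, rfl⟩ := h.tx.omega ω
    exact ⟨v, by rw [hdx, smul_zero, zero_add]⟩
  have hsub : RegularDifferentials k K ⊆ Submodule.span k {dd k θ} := by
    intro ω hreg
    obtain ⟨w, rfl⟩ := hω ω
    by_cases hθ : dd k θ = 0
    · rw [hθ, smul_zero]; exact zero_mem _
    have m1 : w ∈ O (k := k) x := h.tx.mem_of_reg hdx hθ (fun A hA _ => hreg A hA)
    have e : dd k (θ * x⁻¹ ^ (n - m)) = x⁻¹ ^ (n - m) • dd k θ := by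
      rw [dd, Derivation.leibniz, Derivation.leibniz_pow]
      rw [dd] at hds
      rw [hds]; simp
    have hs : x⁻¹ ^ (n - m) ≠ 0 := pow_ne_zero _ (inv_ne_zero hx)
    have e2 : w • dd k θ = (w * x ^ (n - m)) • dd k (θ * x⁻¹ ^ (n - m)) := by
      rw [e, smul_smul, mul_assoc, pow_cancel1 hx, mul_one]
    have m2 : w * x ^ (n - m) ∈ O (k := k) x⁻¹ := h.ts.mem_of_reg hds (by
      rw [e]; exact smul_ne_zero hs hθ) (fun A hA _ => by rw [← e2]; exact hreg A hA)
    have m3 : w ∈ O (k := k) x⁻¹ := by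
      have := mul_mem m2 (pow_mem (self_mem_O (k := k) x⁻¹) (n - m))
      rwa [mul_assoc, pow_cancel1 hx, mul_one] at this
    obtain ⟨c, rfl⟩ := const_of_mem hx m1 m3
    rw [algebraMap_smul]
    exact Submodule.smul_mem _ _ (Submodule.mem_span_singleton_self _)
  have hle := Submodule.rank_mono (Submodule.span_le.mpr hsub)
  unfold HasGenusFive at hg
  rw [hg] at hle
  have := hle.trans (rank_span_le _)
  rw [Cardinal.mk_singleton] at this
  norm_num at this

lemma three_four [IsAlgClosed k] (h : Two k x θ m n a b c d) (hg : HasGenusFive k K) : m = 3 ∧ n = 4 := by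
  have h1 := h.genus_sep (fun hδ => h.genus_insep hδ hg) hg
  have := h.hmn
  have := h.ha
  omega

end Two

lemma exists_two [IsAlgClosed k] (ht : Trigonal k K) (hg : HasGenusFive k K) :
    ∃ (x θ : K) (a b c d : k[X]), Two k x θ 3 4 a b c d := by
  obtain ⟨x, hx⟩ := ht
  obtain ⟨α, β, m, n, a, b, c, d, h⟩ := exists_full (k := k) (x := x) hx
  obtain ⟨rfl, rfl⟩ := h.two.three_four hg
  exact ⟨x, _, a, b, c, d, h.two⟩

end Trig

namespace Trig

variable {k K : Type*} [Field k] [Field K] [Algebra k K]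

/-- degree `N` homogenization of `p`, evaluated at `X, Y`. -/
def hm {R : Type*} [CommRing R] [Algebra k R] (N : ℕ) (p : k[X]) (X Y : R) : R :=
  ∑ i ∈ Finset.range (N + 1), algebraMap k R (p.coeff i) * (X ^ i * Y ^ (N - i))

section hm
variable {R S : Type*} [CommRing R] [Algebra k R] [CommRing S] [Algebra k S]

lemma hm_map (f : R →ₐ[k] S) (N : ℕ) (p : k[X]) (X Y : R) : f (hm N p X Y) = hm N p (f X) (f Y) := by
  simp [hm, map_sum]

lemma hm_scale (N : ℕ) (p : k[X]) (t X Y : R) : hm N p (t * X) (t * Y) = t ^ N * hm N p X Y := by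
  unfold hm
  rw [Finset.mul_sum]
  refine Finset.sum_congr rfl (fun i hi => ?_)
  have : i ≤ N := by simp at hi; omega
  have e : t ^ N = t ^ i * t ^ (N - i) := by rw [← pow_add]; congr 1; omega
  rw [e, mul_pow, mul_pow]; ring

lemma hm_one {N : ℕ} {p : k[X]} (hp : p.natDegree ≤ N) (X : R) : hm N p X 1 = aeval X p := by
  rw [aeval_eq_sum_range' (n := N + 1) (by omega)]
  unfold hm
  refine Finset.sum_congr rfl (fun i _ => ?_)
  rw [one_pow, mul_one, Algebra.smul_def]

lemma hm_flip (N : ℕ) (p : k[X]) (X Y : R) : hm N p X Y = hm N (reflect N p) Y X := by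
  unfold hm
  rw [← Finset.sum_range_reflect]
  refine Finset.sum_congr rfl (fun i hi => ?_)
  have : i ≤ N := by simp at hi; omega
  rw [show N + 1 - 1 - i = N - i by omega, coeff_reflect, revAt_le this, show N - (N - i) = i by omega]
  ring

lemma hm_at {N : ℕ} {p : k[X]} (hp : p.natDegree ≤ N) (t X : R) : hm N p (t * X) t = t ^ N * aeval X p := by
  have := hm_scale N p t X 1
  rwa [mul_one, hm_one hp] at this
end hm

lemma hm_homog {σ : Type*} (N : ℕ) (p : k[X]) (i j : σ) :
    (hm N p (MvPolynomial.X i) (MvPolynomial.X j) : MvPolynomial σ k).IsHomogeneous N := by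
  unfold hm
  refine MvPolynomial.IsHomogeneous.sum _ _ _ (fun l hl => ?_)
  have hl : l ≤ N := by simp at hl; omega
  have h1 : (MvPolynomial.X i ^ l * MvPolynomial.X j ^ (N - l) : MvPolynomial σ k).IsHomogeneous N := by
    have := ((MvPolynomial.isHomogeneous_X k i).pow l).mul ((MvPolynomial.isHomogeneous_X k j).pow (N - l))
    convert this using 1; omega
  have := (MvPolynomial.isHomogeneous_C σ (p.coeff l)).mul h1
  rw [zero_add] at this
  exact this

lemma hm_pderiv {σ : Type*} {N : ℕ} {p : k[X]} (hp : p.natDegree ≤ N) (hN : 1 ≤ N) {i j : σ} (hij : i ≠ j)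
    (P : σ → k) (c0 : k) (hP : P i = P j * c0) :
    MvPolynomial.eval P (MvPolynomial.pderiv i (hm N p (MvPolynomial.X i) (MvPolynomial.X j) : MvPolynomial σ k)) =
      P j ^ (N - 1) * (derivative p).eval c0 := by
  have hd : (derivative p).natDegree < N + 1 := by
    have := natDegree_derivative_le p; omega
  classical
  rw [derivative_eval, sum_over_range' _ (by simp) (N + 1) (by omega), Finset.mul_sum]
  simp only [hm, map_sum]
  refine Finset.sum_congr rfl (fun l hl => ?_)
  have hl : l ≤ N := by simp at hl; omega
  rw [MvPolynomial.algebraMap_eq, MvPolynomial.pderiv_C_mul, Derivation.leibniz, Derivation.leibniz_pow,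
    Derivation.leibniz_pow, MvPolynomial.pderiv_X_self, MvPolynomial.pderiv_X_of_ne hij.symm]
  simp only [smul_zero, zero_add, smul_eq_mul, mul_one, nsmul_eq_mul, map_mul, map_pow, MvPolynomial.eval_C,
    MvPolynomial.eval_X, map_natCast, hP, MvPolynomial.smul_eval, map_add, mul_zero, map_zero]
  rcases Nat.eq_zero_or_pos l with rfl | hpos
  · simp
  · have e : P j ^ (N - 1) = P j ^ (l - 1) * P j ^ (N - l) := by rw [← pow_add]; congr 1; omega
    rw [e, mul_pow]; ring

lemma hm_pderiv_of_ne {σ : Type*} {N : ℕ} {p : k[X]} {i j l : σ} (hi : i ≠ l) (hj : j ≠ l) :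
    MvPolynomial.pderiv l (hm N p (MvPolynomial.X i) (MvPolynomial.X j) : MvPolynomial σ k) = 0 := by
  classical
  simp only [hm, map_sum]
  refine Finset.sum_eq_zero (fun t _ => ?_)
  rw [MvPolynomial.algebraMap_eq, MvPolynomial.pderiv_C_mul, Derivation.leibniz, Derivation.leibniz_pow,
    Derivation.leibniz_pow, MvPolynomial.pderiv_X_of_ne hi, MvPolynomial.pderiv_X_of_ne hj]
  simp

open MvPolynomial in
/-- The quintic -/
def qF (i j : Fin 3) (a b c d : k[X]) : MvPolynomial (Fin 3) k :=
  hm 2 a (X i) (X j) * X 2 ^ 3 - hm 3 b (X i) (X j) * X 2 ^ 2 + hm 4 c (X i) (X j) * X 2 - hm 5 d (X i) (X j)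

lemma qF_flip (i j : Fin 3) (a b c d : k[X]) :
    qF i j a b c d = qF j i (reflect 2 a) (reflect 3 b) (reflect 4 c) (reflect 5 d) := by
  unfold qF
  rw [hm_flip 2 a, hm_flip 3 b, hm_flip 4 c, hm_flip 5 d]

lemma qF_homog (i j : Fin 3) (a b c d : k[X]) : (qF i j a b c d).IsHomogeneous 5 := by
  have hZ := MvPolynomial.isHomogeneous_X k (2 : Fin 3)
  refine MvPolynomial.IsHomogeneous.sub (MvPolynomial.IsHomogeneous.add (MvPolynomial.IsHomogeneous.sub ?_ ?_) ?_) ?_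
  · exact (hm_homog 2 a i j).mul (hZ.pow 3)
  · exact (hm_homog 3 b i j).mul (hZ.pow 2)
  · exact (hm_homog 4 c i j).mul hZ
  · exact hm_homog 5 d i j

lemma hm_eval {σ : Type*} {N : ℕ} {p : k[X]} (hp : p.natDegree ≤ N) (i j : σ)
    (P : σ → k) (c0 : k) (hP : P i = P j * c0) :
    MvPolynomial.eval P (hm N p (MvPolynomial.X i) (MvPolynomial.X j) : MvPolynomial σ k) =
      P j ^ N * p.eval c0 := by
  have h1 := hm_map (MvPolynomial.aeval P : MvPolynomial σ k →ₐ[k] k) N p (MvPolynomial.X i) (MvPolynomial.X j)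
  rw [MvPolynomial.aeval_X, MvPolynomial.aeval_X, hP, hm_at hp] at h1
  rw [← MvPolynomial.coe_aeval_eq_eval]
  rw [coe_aeval_eq_eval] at h1
  exact h1

/-- evaluation of the quintic and of its derivatives -/
lemma qF_eval {i j : Fin 3} {a b c d : k[X]} (ha : a.natDegree ≤ 2) (hb : b.natDegree ≤ 3)
    (hc : c.natDegree ≤ 4) (hd : d.natDegree ≤ 5) (P : Fin 3 → k) (c0 z : k) (h1 : P i = P j * c0) (h2 : P 2 = P j * z) :
    MvPolynomial.eval P (qF i j a b c d) =
      P j ^ 5 * (a.eval c0 * z ^ 3 - b.eval c0 * z ^ 2 + c.eval c0 * z - d.eval c0) := by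
  simp only [qF, map_sub, map_add, map_mul, map_pow, MvPolynomial.eval_X, hm_eval ha i j P c0 h1,
    hm_eval hb i j P c0 h1, hm_eval hc i j P c0 h1, hm_eval hd i j P c0 h1, h2]
  ring

lemma qF_evalX {i j : Fin 3} (hij : i ≠ j) (hi : i ≠ 2) {a b c d : k[X]} (ha : a.natDegree ≤ 2) (hb : b.natDegree ≤ 3)
    (hc : c.natDegree ≤ 4) (hd : d.natDegree ≤ 5) (P : Fin 3 → k) (c0 : k) (h1 : P i = P j * c0) :
    MvPolynomial.eval P (MvPolynomial.pderiv i (qF i j a b c d)) =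
      P j * (derivative a).eval c0 * P 2 ^ 3 - P j ^ 2 * (derivative b).eval c0 * P 2 ^ 2 +
      P j ^ 3 * (derivative c).eval c0 * P 2 - P j ^ 4 * (derivative d).eval c0 := by
  have hZ : MvPolynomial.pderiv i (MvPolynomial.X 2 : MvPolynomial (Fin 3) k) = 0 := MvPolynomial.pderiv_X_of_ne hi.symm
  simp only [qF, map_sub, map_add, map_mul, map_pow, MvPolynomial.eval_X, Derivation.leibniz, Derivation.leibniz_pow,
    hZ, smul_zero, zero_add, smul_eq_mul,
    hm_pderiv ha (by norm_num) hij P c0 h1,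
    hm_pderiv hb (by norm_num) hij P c0 h1, hm_pderiv hc (by norm_num) hij P c0 h1,
    hm_pderiv hd (by norm_num) hij P c0 h1]
  norm_num
  ring

lemma qF_evalZ {i j : Fin 3} (hi : i ≠ 2) (hj : j ≠ 2) {a b c d : k[X]} (ha : a.natDegree ≤ 2) (hb : b.natDegree ≤ 3)
    (hc : c.natDegree ≤ 4) (P : Fin 3 → k) (c0 : k) (h1 : P i = P j * c0) :
    MvPolynomial.eval P (MvPolynomial.pderiv 2 (qF i j a b c d)) =
      3 * P j ^ 2 * a.eval c0 * P 2 ^ 2 - 2 * P j ^ 3 * b.eval c0 * P 2 + P j ^ 4 * c.eval c0 := by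
  simp only [qF, map_sub, map_add, map_mul, map_pow, MvPolynomial.eval_X, Derivation.leibniz, Derivation.leibniz_pow,
    hm_pderiv_of_ne hi hj, MvPolynomial.pderiv_X_self, smul_zero, add_zero, smul_eq_mul, hm_eval ha i j P c0 h1,
    hm_eval hb i j P c0 h1, hm_eval hc i j P c0 h1, map_nsmul, nsmul_eq_mul, map_one, mul_one, map_natCast]
  norm_num
  ring

/-- no singular points in a chart -/
lemma Datum.no_sing {x α β : K} {a b c d : k[X]} (h : Datum k x α β a b c d)
    {i j : Fin 3} (hij : i ≠ j) (hi : i ≠ 2) (hj : j ≠ 2) (ha : a.natDegree ≤ 2) (hb : b.natDegree ≤ 3)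
    (hc : c.natDegree ≤ 4) (hd : d.natDegree ≤ 5) (P : Fin 3 → k) (hP : P j ≠ 0)
    (hs : IsSingAt k (qF i j a b c d) P) : False := by
  have h1 : P i = P j * (P i / P j) := by field_simp
  have h2 : P 2 = P j * (P 2 / P j) := by field_simp
  have e1 := hs.1
  have e2 := hs.2 i
  have e3 := hs.2 2
  rw [qF_eval ha hb hc hd P _ _ h1 h2] at e1
  rw [qF_evalX hij hi ha hb hc hd P _ h1] at e2
  rw [qF_evalZ hi hj ha hb hc P _ h1] at e3
  generalize P i / P j = c0 at *
  generalize P 2 / P j = z at *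
  rw [h2] at e2 e3
  refine h.ns2 c0 z ?_ ?_ ?_
  · exact (mul_eq_zero.mp e1).resolve_left (pow_ne_zero _ hP)
  · apply mul_left_cancel₀ (pow_ne_zero 4 hP); linear_combination e3
  · apply mul_left_cancel₀ (pow_ne_zero 4 hP); linear_combination e2

end Trig

namespace Trig

variable {k K : Type*} [Field k] [Field K] [Algebra k K]

lemma qF_sing0 {a b c d : k[X]} (ha : a.natDegree ≤ 2) (hb : b.natDegree ≤ 3)
    (hc : c.natDegree ≤ 4) (hd : d.natDegree ≤ 5) : IsSingAt k (qF 0 1 a b c d) ![0, 0, 1] := by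
  refine ⟨?_, ?_⟩
  · have h1 : (![0, 0, 1] : Fin 3 → k) 0 = (![0, 0, 1] : Fin 3 → k) 1 * 0 := by simp
    simp only [qF, map_sub, map_add, map_mul, map_pow, hm_eval ha 0 1 _ _ h1, hm_eval hb 0 1 _ _ h1,
      hm_eval hc 0 1 _ _ h1, hm_eval hd 0 1 _ _ h1]
    simp
  · intro i
    fin_cases i
    · rw [show (⟨0, _⟩ : Fin 3) = 0 from rfl]
      rw [qF_evalX (by decide) (by decide) ha hb hc hd _ 0 (by simp)]
      simp
    · rw [show (⟨1, _⟩ : Fin 3) = 1 from rfl]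
      rw [qF_flip]
      rw [qF_evalX (by decide) (by decide) (natDegree_reflect_le.trans (by simpa)) (natDegree_reflect_le.trans (by simpa))
        (natDegree_reflect_le.trans (by simpa)) (natDegree_reflect_le.trans (by simpa)) _ 0 (by simp)]
      simp
    · rw [show (⟨2, _⟩ : Fin 3) = 2 from rfl]
      rw [qF_evalZ (by decide) (by decide) ha hb hc _ 0 (by simp)]
      simp

lemma reflect_deg {N : ℕ} {p : k[X]} (h : p.natDegree ≤ N) : (reflect N p).natDegree ≤ N :=
  natDegree_reflect_le.trans (by simpa)

lemma Two.only_sing {x θ : K} {a b c d : k[X]} (h : Two k x θ 3 4 a b c d)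
    (p : Fin 3 → k) (hs : IsSingAt k (qF 0 1 a b c d) p) : ∃ c : k, p = c • ![0, 0, 1] := by
  have ha : a.natDegree ≤ 2 := by have := h.ha; omega
  have hb := h.hb
  have hc := h.hc
  have hd : d.natDegree ≤ 5 := by have := h.hd; omega
  by_cases h1 : p 1 = 0
  swap
  · exact (h.tx.dat.no_sing (by decide) (by decide) (by decide) ha hb hc hd p h1 hs).elim
  by_cases h0 : p 0 = 0
  swap
  · rw [qF_flip] at hs
    exact (h.ts.dat.no_sing (by decide) (by decide) (by decide) (reflect_deg ha) (reflect_deg hb) (reflect_deg hc)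
      (reflect_deg hd) p h0 hs).elim
  refine ⟨p 2, ?_⟩
  ext i; fin_cases i <;> simp [h0, h1]

lemma dehom_qF (a b c d : k[X]) : dehomZ k (qF 0 1 a b c d) =
    hm 2 a (MvPolynomial.X 0) (MvPolynomial.X 1) - hm 3 b (MvPolynomial.X 0) (MvPolynomial.X 1) +
    hm 4 c (MvPolynomial.X 0) (MvPolynomial.X 1) - hm 5 d (MvPolynomial.X 0) (MvPolynomial.X 1) := by
  simp [dehomZ, qF, hm_map]

lemma hcomp {n m : ℕ} {f : MvPolynomial (Fin 2) k} (h : f.IsHomogeneous m) :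
    MvPolynomial.homogeneousComponent n f = if n = m then f else 0 := by
  rw [MvPolynomial.homogeneousComponent_of_mem ((MvPolynomial.mem_homogeneousSubmodule m f).mpr h)]

lemma dehom_comp2 (a b c d : k[X]) : MvPolynomial.homogeneousComponent 2 (dehomZ k (qF 0 1 a b c d)) =
    hm 2 a (MvPolynomial.X 0) (MvPolynomial.X 1) := by
  rw [dehom_qF]
  simp [hcomp (hm_homog _ _ _ _)]

lemma dehom_comp3 (a b c d : k[X]) : MvPolynomial.homogeneousComponent 3 (dehomZ k (qF 0 1 a b c d)) =
    - hm 3 b (MvPolynomial.X 0) (MvPolynomial.X 1) := by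
  rw [dehom_qF]
  simp [hcomp (hm_homog _ _ _ _)]

lemma quad_factor [IsAlgClosed k] (a2 a1 a0 : k) : ∃ u1 v1 u2 v2 : k,
    a2 = u1 * u2 ∧ a1 = u1 * v2 + u2 * v1 ∧ a0 = v1 * v2 := by
  by_cases h : a2 = 0
  · exact ⟨0, 1, a1, a0, by simp [h], by simp, by simp⟩
  · obtain ⟨r, hr⟩ := IsAlgClosed.exists_root (C a2 * X ^ 2 + C a1 * X + C a0) (by
      rw [degree_quadratic h]; decide)
    have hr : a2 * r ^ 2 + a1 * r + a0 = 0 := by simpa using hr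
    exact ⟨1, -r, a2, a2 * r + a1, by ring, by ring, by linear_combination hr⟩

/-- linear forms -/
def lin (u v : k) : MvPolynomial (Fin 2) k := MvPolynomial.C u * MvPolynomial.X 0 + MvPolynomial.C v * MvPolynomial.X 1

lemma lin_homog (u v : k) : (lin u v).IsHomogeneous 1 := by
  have h (u : k) (i : Fin 2) := (MvPolynomial.isHomogeneous_C (Fin 2) u).mul (MvPolynomial.isHomogeneous_X k i)
  exact (h u 0).add (h v 1)

lemma lin_zero {u v : k} (h : lin u v = 0) : u = 0 ∧ v = 0 := by
  have h1 := congrArg (MvPolynomial.eval ![1, 0]) h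
  have h2 := congrArg (MvPolynomial.eval ![0, 1]) h
  simp [lin] at h1 h2
  exact ⟨h1, h2⟩

lemma hm2_eq (a : k[X]) : (hm 2 a (MvPolynomial.X 0) (MvPolynomial.X 1) : MvPolynomial (Fin 2) k) =
    MvPolynomial.C (a.coeff 2) * MvPolynomial.X 0 ^ 2 + MvPolynomial.C (a.coeff 1) * (MvPolynomial.X 0 * MvPolynomial.X 1) +
    MvPolynomial.C (a.coeff 0) * MvPolynomial.X 1 ^ 2 := by
  simp [hm, Finset.sum_range_succ, MvPolynomial.algebraMap_eq]; ring

lemma Two.node_or_cusp [IsAlgClosed k] {x θ : K} {a b c d : k[X]} (h : Two k x θ 3 4 a b c d) :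
    NodeAtOrigin k (dehomZ k (qF 0 1 a b c d)) ∨ CuspAtOrigin k (dehomZ k (qF 0 1 a b c d)) := by
  have ha : a.natDegree ≤ 2 := by have := h.ha; omega
  have hb := h.hb
  have ha0 := h.tx.dat.a_ne
  obtain ⟨u1, v1, u2, v2, e2, e1, e0⟩ := quad_factor (a.coeff 2) (a.coeff 1) (a.coeff 0)
  have hf : (Trig.hm 2 a (MvPolynomial.X 0) (MvPolynomial.X 1) : MvPolynomial (Fin 2) k) = lin u1 v1 * lin u2 v2 := by
    rw [hm2_eq, e2, e1, e0, lin, lin]; simp only [map_add, map_mul]; ring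
  have haC : a = C (a.coeff 2) * X ^ 2 + C (a.coeff 1) * X + C (a.coeff 0) := by
    conv_lhs => rw [a.as_sum_range_C_mul_X_pow' (n := 3) (by omega)]
    simp [Finset.sum_range_succ]; ring
  have hn0 : (Trig.hm 2 a (MvPolynomial.X 0) (MvPolynomial.X 1) : MvPolynomial (Fin 2) k) ≠ 0 := by
    intro h0
    apply ha0
    rw [hf] at h0
    rw [haC, e2, e1, e0]
    rcases mul_eq_zero.mp h0 with h0 | h0 <;> obtain ⟨rfl, rfl⟩ := lin_zero h0 <;> simp
  rw [hf] at hn0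
  obtain ⟨n1, n2⟩ := mul_ne_zero_iff.mp hn0
  by_cases hc : ∀ c : k, lin u2 v2 ≠ c • lin u1 v1
  · left
    exact ⟨_, _, lin_homog _ _, lin_homog _ _, n1, n2, by rw [dehom_comp2, hf], hc⟩
  right
  push Not at hc
  obtain ⟨s, hs⟩ := hc
  obtain ⟨r, hr⟩ := IsAlgClosed.exists_pow_nat_eq s (n := 2) (by norm_num)
  have hsq : (Trig.hm 2 a (MvPolynomial.X 0) (MvPolynomial.X 1) : MvPolynomial (Fin 2) k) = lin (r * u1) (r * v1) ^ 2 := by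
    rw [hf, hs, ← hr]; simp only [lin, map_mul, MvPolynomial.smul_eq_C_mul, map_pow]; ring
  generalize r * u1 = u at hsq
  generalize r * v1 = v at hsq
  have hl0 : lin u v ≠ 0 := by
    intro h0; rw [h0, hf] at hsq; exact hn0 (by rw [hsq]; simp)
  refine ⟨lin u v, lin_homog _ _, hl0, by rw [dehom_comp2, hsq], ?_⟩
  rw [dehom_comp3]
  rintro ⟨m, hm'⟩
  have hev := congrArg (MvPolynomial.eval ![-v, u]) hm'
  have hl : MvPolynomial.eval ![-v, u] (lin u v) = 0 := by simp [lin]; ring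
  rw [map_mul, hl, zero_mul, map_neg, neg_eq_zero] at hev
  have hae := fun P : Fin 2 → k => congrArg (MvPolynomial.eval P) hsq
  have c2 : a.coeff 2 = u ^ 2 := by
    have := hae ![1, 0]; rw [hm2_eq] at this; simpa [lin] using this
  have c0 : a.coeff 0 = v ^ 2 := by
    have := hae ![0, 1]; rw [hm2_eq] at this; simpa [lin] using this
  have c1 : a.coeff 1 = 2 * u * v := by
    have := hae ![1, 1]; rw [hm2_eq] at this; simp [lin] at this
    rw [c2, c0] at this; linear_combination this
  by_cases hu : u = 0
  · subst hu
    have hv : v ≠ 0 := by rintro rfl; exact hl0 (by simp [lin])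
    rw [hm_flip, hm_eval (reflect_deg hb) 1 0 _ 0 (by simp)] at hev
    have hev : (reflect 3 b).eval 0 = 0 := by simpa [hv] using hev
    refine h.ts.dat.ns1 0 ?_ ?_ hev
    · rw [← coeff_zero_eq_eval_zero, coeff_reflect]; simp [c2, revAt_le]
    · rw [← coeff_zero_eq_eval_zero, coeff_derivative, coeff_reflect]; simp [c1, revAt_le]
  · rw [hm_eval hb 0 1 _ (-v / u) (by simp; field_simp)] at hev
    have hev : b.eval (-v / u) = 0 := by simpa [hu] using hev
    refine h.tx.dat.ns1 (-v / u) ?_ ?_ hev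
    · rw [haC, c2, c1, c0]; simp; field_simp; ring
    · rw [haC, c2, c1, c0]; simp [derivative_pow]; field_simp; try ring

lemma Two.point [IsAlgClosed k] {x θ : K} {a b c d : k[X]} (h : Two k x θ 3 4 a b c d) :
    MvPolynomial.aeval ![θ⁻¹ * x, θ⁻¹] (dehomZ k (qF 0 1 a b c d)) = 0 := by
  have ha : a.natDegree ≤ 2 := by have := h.ha; omega
  have hb := h.hb
  have hc := h.hc
  have hd : d.natDegree ≤ 5 := by have := h.hd; omega
  have h0 := h.tx.ne
  rw [dehom_qF]
  simp only [map_sub, map_add, hm_map, MvPolynomial.aeval_X]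
  simp only [Matrix.cons_val_zero, Matrix.cons_val_one]
  rw [hm_at ha, hm_at hb, hm_at hc, hm_at hd]
  have := h.tx.root
  have e : (θ⁻¹) * θ = 1 := inv_mul_cancel₀ h0
  have e2 : θ⁻¹ ^ 2 = θ⁻¹ ^ 5 * θ ^ 3 := by field_simp
  have e3 : θ⁻¹ ^ 3 = θ⁻¹ ^ 5 * θ ^ 2 := by field_simp
  have e4 : θ⁻¹ ^ 4 = θ⁻¹ ^ 5 * θ := by field_simp
  rw [e2, e3, e4]
  linear_combination θ⁻¹ ^ 5 * this

lemma aeval_mem_IF (L : IntermediateField k K) {x : K} (hx : x ∈ L) (p : k[X]) : aeval x p ∈ L := by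
  have : aeval x p ∈ Algebra.adjoin k ({x} : Set K) := by
    rw [Algebra.adjoin_singleton_eq_range_aeval]; exact ⟨p, rfl⟩
  exact (Algebra.adjoin_le (S := L.toSubalgebra) (by simpa using hx)) this

lemma TD.gen [IsAlgClosed k] {x θ : K} {a b c d : k[X]} (h : TD k x θ a b c d) :
    IntermediateField.adjoin k ({θ⁻¹ * x, θ⁻¹} : Set K) = ⊤ := by
  rw [eq_top_iff]
  intro z _
  set L := IntermediateField.adjoin k ({θ⁻¹ * x, θ⁻¹} : Set K)
  have m1 : θ⁻¹ * x ∈ L := IntermediateField.subset_adjoin _ _ (by simp)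
  have m2 : θ⁻¹ ∈ L := IntermediateField.subset_adjoin _ _ (by simp)
  have m3 : θ ∈ L := by simpa using inv_mem m2
  have m4 : x ∈ L := by
    have := mul_mem m3 m1
    rwa [mul_inv_cancel_left₀ h.ne] at this
  obtain ⟨D, hD, hz⟩ := h.dat.t3.clear z
  obtain ⟨p, q, r, e⟩ := h.span _ hz
  have hD' := h.dat.t3.ev_ne hD
  have hp := aeval_mem_IF L m4
  have : z = (aeval x D)⁻¹ * (aeval x p + aeval x q * θ + aeval x r * (aeval x a * θ ^ 2)) := by
    rw [← e, inv_mul_cancel_left₀ hD']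
  rw [this]
  exact mul_mem (inv_mem (hp D)) (add_mem (add_mem (hp p) (mul_mem (hp q) m3))
    (mul_mem (hp r) (mul_mem (hp a) (pow_mem m3 2))))

end Trig

namespace Trig

variable {k K : Type*} [Field k] [Field K] [Algebra k K]

/-- ternary forms as polynomials in the last variable -/
def eZ (k : Type*) [Field k] : MvPolynomial (Fin 3) k ≃ₐ[k] (MvPolynomial (Fin 2) k)[X] :=
  (MvPolynomial.renameEquiv k (finSuccEquivLast (n := 2))).trans (MvPolynomial.optionEquivLeft k (Fin 2))

lemma eZ_X2 : eZ k (MvPolynomial.X 2) = X := by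
  have : finSuccEquivLast (2 : Fin 3) = none := finSuccEquivLast_last
  simp [eZ, this]

lemma eZ_X0 : eZ k (MvPolynomial.X 0) = C (MvPolynomial.X 0) := by
  have : finSuccEquivLast (0 : Fin 3) = some 0 := finSuccEquivLast_castSucc 0
  simp [eZ, this]

lemma eZ_X1 : eZ k (MvPolynomial.X 1) = C (MvPolynomial.X 1) := by
  have : finSuccEquivLast (1 : Fin 3) = some 1 := finSuccEquivLast_castSucc 1
  simp [eZ, this]

/-- the ring map `X₀ ↦ xU, X₁ ↦ U`. -/
def phi (k : Type*) {K : Type*} [Field k] [Field K] [Algebra k K] (x : K) : MvPolynomial (Fin 2) k →ₐ[k] K[X] :=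
  MvPolynomial.aeval ![C x * X, X]

def psi (k : Type*) [Field k] : MvPolynomial (Fin 2) k →ₐ[k] k[X][X] :=
  MvPolynomial.aeval ![C X * X, X]

lemma phi_eq (x : K) (g : MvPolynomial (Fin 2) k) : phi k x g = (psi k g).map (aeval x : k[X] →ₐ[k] K).toRingHom := by
  have : phi k x = (mapAlgHom (aeval x : k[X] →ₐ[k] K)).comp (psi k) := by
    apply MvPolynomial.algHom_ext
    intro i
    fin_cases i <;> simp [phi, psi]
  rw [this]; rfl

lemma psi_eval (p q : k) (g : MvPolynomial (Fin 2) k) :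
    ((psi k g).eval (C q)).eval p = MvPolynomial.eval ![p * q, q] g := by
  have : (aeval p : k[X] →ₐ[k] k).comp (((aeval (C q : k[X]) : k[X][X] →ₐ[k[X]] k[X]).restrictScalars k).comp (psi k)) =
      MvPolynomial.aeval ![p * q, q] := by
    apply MvPolynomial.algHom_ext
    intro i
    fin_cases i
    · simp [psi]; ring
    · simp [psi]
  have h := DFunLike.congr_fun this g
  simpa [coe_aeval_eq_eval, MvPolynomial.coe_aeval_eq_eval] using h

lemma psi_inj [Infinite k] {g : MvPolynomial (Fin 2) k} (h : psi k g = 0) : g = 0 := by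
  have : MvPolynomial.X 1 * g = 0 := by
    apply MvPolynomial.funext
    intro P
    by_cases hq : P 1 = 0
    · simp [hq]
    · have := psi_eval (P 0 / P 1) (P 1) g
      rw [h, div_mul_cancel₀ _ hq] at this
      have e : P = ![P 0, P 1] := by ext i; fin_cases i <;> rfl
      rw [e]
      simp at this
      simp [← this]
  exact (mul_eq_zero.mp this).resolve_left (MvPolynomial.X_ne_zero 1)

lemma phi_inj [Infinite k] {x : K} (hx : Transcendental k x) {g : MvPolynomial (Fin 2) k} (h : phi k x g = 0) : g = 0 := by
  rw [phi_eq] at h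
  apply psi_inj
  ext1 n
  have := congrArg (fun p => coeff p n) h
  simp only [coeff_map, coeff_zero] at this
  exact (transcendental_iff.mp hx) _ this

/-- `X₀ ↦ xU, X₁ ↦ U, Z ↦ θU`. -/
def Phi (k : Type*) {K : Type*} [Field k] [Field K] [Algebra k K] (x θ : K) : (MvPolynomial (Fin 2) k)[X] →+* K[X] :=
  eval₂RingHom (phi k x).toRingHom (C θ * X)

lemma Phi_C (x θ : K) (g : MvPolynomial (Fin 2) k) : Phi k x θ (C g) = phi k x g := by simp [Phi]
lemma Phi_X (x θ : K) : Phi k x θ X = C θ * X := by simp [Phi]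

lemma Phi_indep [Infinite k] {x θ : K} (hx : Transcendental k x)
    (hi : ∀ p q r : k[X], aeval x p + aeval x q * θ + aeval x r * θ ^ 2 = 0 → p = 0 ∧ q = 0 ∧ r = 0)
    {G : (MvPolynomial (Fin 2) k)[X]} (hG : G.natDegree ≤ 2) (h : Phi k x θ G = 0) : G = 0 := by
  have hG2 : G = C (G.coeff 2) * X ^ 2 + C (G.coeff 1) * X + C (G.coeff 0) := by
    conv_lhs => rw [G.as_sum_range_C_mul_X_pow' (n := 3) (by omega)]
    simp [Finset.sum_range_succ]; ring
  rw [hG2] at h ⊢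
  generalize G.coeff 2 = g2 at *
  generalize G.coeff 1 = g1 at *
  generalize G.coeff 0 = g0 at *
  simp only [map_add, map_mul, map_pow, Phi_C, Phi_X] at h
  have h' : phi k x g0 + C θ * (phi k x g1 * X) + C (θ ^ 2) * (phi k x g2 * X ^ 2) = 0 := by
    rw [← h]; simp only [map_pow]; ring
  have e1 : phi k x g1 * X = (psi k g1 * X).map (aeval x : k[X] →ₐ[k] K).toRingHom := by
    rw [phi_eq]; simp
  have e2 : phi k x g2 * X ^ 2 = (psi k g2 * X ^ 2).map (aeval x : k[X] →ₐ[k] K).toRingHom := by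
    rw [phi_eq]; simp
  rw [phi_eq, e1, e2] at h'
  have key : ∀ n, (psi k g0).coeff n = 0 ∧ (psi k g1 * X).coeff n = 0 ∧ (psi k g2 * X ^ 2).coeff n = 0 := by
    intro n
    have := congrArg (fun p => coeff p n) h'
    simp only [coeff_add, coeff_C_mul, coeff_map, coeff_zero] at this
    refine hi _ _ _ ?_
    rw [← this]
    simp only [AlgHom.toRingHom_eq_coe, RingHom.coe_coe]
    ring
  have z0 : g0 = 0 := psi_inj (by ext1 n; simpa using (key n).1)
  have z1 : g1 = 0 := by
    have : psi k g1 * X = 0 := by ext1 n; exact (key n).2.1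
    exact psi_inj ((mul_eq_zero.mp this).resolve_right X_ne_zero)
  have z2 : g2 = 0 := by
    have : psi k g2 * X ^ 2 = 0 := by ext1 n; exact (key n).2.2
    exact psi_inj ((mul_eq_zero.mp this).resolve_right (pow_ne_zero 2 X_ne_zero))
  simp [z0, z1, z2]

lemma cubic_coeffs {R : Type*} [CommRing R] (p q r s : R) :
    (C p * X ^ 3 + C q * X ^ 2 + C r * X + C s).coeff 0 = s ∧ (C p * X ^ 3 + C q * X ^ 2 + C r * X + C s).coeff 1 = r ∧
    (C p * X ^ 3 + C q * X ^ 2 + C r * X + C s).coeff 2 = q ∧ (C p * X ^ 3 + C q * X ^ 2 + C r * X + C s).coeff 3 = p := by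
  exact ⟨@Cubic.coeff_eq_d R ⟨p, q, r, s⟩ _, @Cubic.coeff_eq_c R ⟨p, q, r, s⟩ _, @Cubic.coeff_eq_b R ⟨p, q, r, s⟩ _,
    @Cubic.coeff_eq_a R ⟨p, q, r, s⟩ _⟩

lemma eZ_qF (a b c d : k[X]) : eZ k (qF 0 1 a b c d) =
    C (hm 2 a (MvPolynomial.X 0) (MvPolynomial.X 1)) * X ^ 3 + C (-hm 3 b (MvPolynomial.X 0) (MvPolynomial.X 1)) * X ^ 2 +
    C (hm 4 c (MvPolynomial.X 0) (MvPolynomial.X 1)) * X + C (-hm 5 d (MvPolynomial.X 0) (MvPolynomial.X 1)) := by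
  have h : ∀ (N : ℕ) (p : k[X]), eZ k (hm N p (MvPolynomial.X 0) (MvPolynomial.X 1)) =
      C (hm N p (MvPolynomial.X 0) (MvPolynomial.X 1)) := by
    intro N p
    have e1 := hm_map (eZ k).toAlgHom N p (MvPolynomial.X 0) (MvPolynomial.X 1)
    have e2 := hm_map ((Algebra.ofId (MvPolynomial (Fin 2) k) (MvPolynomial (Fin 2) k)[X]).restrictScalars k)
      N p (MvPolynomial.X 0) (MvPolynomial.X 1)
    have e1' : eZ k (hm N p (MvPolynomial.X 0) (MvPolynomial.X 1)) =
      hm N p (eZ k (MvPolynomial.X 0)) (eZ k (MvPolynomial.X 1)) := e1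
    have e2' : (C (hm N p (MvPolynomial.X 0) (MvPolynomial.X 1)) : (MvPolynomial (Fin 2) k)[X]) =
      hm (R := (MvPolynomial (Fin 2) k)[X]) N p (C (MvPolynomial.X 0)) (C (MvPolynomial.X 1)) := e2
    rw [e1', e2', eZ_X0, eZ_X1]
  simp only [qF, map_add, map_sub, map_mul, map_pow, eZ_X2, h, map_neg]
  ring

lemma phi_hm {N : ℕ} {p : k[X]} (hp : p.natDegree ≤ N) (x : K) :
    phi k x (hm N p (MvPolynomial.X 0) (MvPolynomial.X 1)) = X ^ N * C (aeval x p) := by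
  have := hm_at (R := K[X]) hp X (C x)
  rw [hm_map]
  simp only [phi, MvPolynomial.aeval_X, Matrix.cons_val_zero, Matrix.cons_val_one]
  rw [mul_comm (C x), this]
  congr 1
  have := aeval_algHom_apply ((Algebra.ofId K K[X]).restrictScalars k) x p
  exact this

lemma TD.Phi_root {x θ : K} {a b c d : k[X]} (h : TD k x θ a b c d) (ha : a.natDegree ≤ 2) (hb : b.natDegree ≤ 3)
    (hc : c.natDegree ≤ 4) (hd : d.natDegree ≤ 5) : Phi k x θ (eZ k (qF 0 1 a b c d)) = 0 := by
  rw [eZ_qF]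
  simp only [map_add, map_mul, map_pow, Phi_C, Phi_X, map_neg, phi_hm ha, phi_hm hb, phi_hm hc, phi_hm hd]
  have := congrArg (fun z => (X ^ 5 * C z : K[X])) h.root
  simp only [map_sub, map_add, map_mul, map_pow, map_zero, mul_zero] at this
  linear_combination this

/-- a common factor of the coefficients is constant along lines -/
lemma Datum.line [IsAlgClosed k] {x α β : K} {a b c d : k[X]} (h : Datum k x α β a b c d)
    (i j : Fin 2) (hij : i ≠ j) (ha : a.natDegree ≤ 2) (hb : b.natDegree ≤ 3)
    (hc : c.natDegree ≤ 4) (hd : d.natDegree ≤ 5) {g : MvPolynomial (Fin 2) k}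
    (h1 : g ∣ hm 2 a (MvPolynomial.X i) (MvPolynomial.X j)) (h2 : g ∣ hm 3 b (MvPolynomial.X i) (MvPolynomial.X j))
    (h3 : g ∣ hm 4 c (MvPolynomial.X i) (MvPolynomial.X j)) (h4 : g ∣ hm 5 d (MvPolynomial.X i) (MvPolynomial.X j))
    (q : k) (hq : q ≠ 0) : ∃ r : k, r ≠ 0 ∧ ∀ P : Fin 2 → k, P j = q → MvPolynomial.eval P g = r := by
  let f : MvPolynomial (Fin 2) k →ₐ[k] k[X] := MvPolynomial.aeval (fun l => if l = i then C q * X else C q)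
  have fi : f (MvPolynomial.X i) = C q * X := by simp [f]
  have fj : f (MvPolynomial.X j) = C q := by simp [f, hij.symm]
  have key : ∀ N p, p.natDegree ≤ N → g ∣ hm N p (MvPolynomial.X i) (MvPolynomial.X j) → f g ∣ p := by
    intro N p hp hg
    have := map_dvd f hg
    rw [hm_map, fi, fj, hm_at hp, aeval_X_left_apply, ← C_pow] at this
    exact (IsUnit.dvd_mul_left (isUnit_C.mpr (pow_ne_zero _ hq).isUnit)).mp this
  obtain ⟨u, v, w, t, e⟩ := h.bezout
  have h1' : f g ∣ 1 := by
    rw [← e]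
    exact dvd_add (dvd_add (dvd_add ((key _ _ ha h1).mul_left _) ((key _ _ hb h2).mul_left _))
      ((key _ _ hc h3).mul_left _)) ((key _ _ hd h4).mul_left _)
  obtain ⟨r, hr, hr2⟩ := Polynomial.isUnit_iff.mp (isUnit_of_dvd_one h1')
  refine ⟨r, hr.ne_zero, fun P hP => ?_⟩
  have : (aeval (P i / q) : k[X] →ₐ[k] k).comp f = MvPolynomial.aeval P := by
    apply MvPolynomial.algHom_ext
    intro l
    by_cases hl : l = i
    · subst hl; simp [f]; field_simp
    · have : l = j := by omega
      subst this; simp [f, hl, hP]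
  have e2 := DFunLike.congr_fun this g
  rw [AlgHom.comp_apply, ← hr2] at e2
  simp [MvPolynomial.coe_aeval_eq_eval] at e2
  exact e2.symm

lemma Two.irred [IsAlgClosed k] {x θ : K} {a b c d : k[X]} (h : Two k x θ 3 4 a b c d) :
    Irreducible (qF 0 1 a b c d) := by
  have hinf : Infinite k := IsAlgClosed.instInfinite
  have ha : a.natDegree ≤ 2 := by have := h.ha; omega
  have hb := h.hb
  have hc := h.hc
  have hd : d.natDegree ≤ 5 := by have := h.hd; omega
  rw [← MulEquiv.irreducible_iff (eZ k)]
  have hroot := h.tx.Phi_root ha hb hc hd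
  have hdeg : (eZ k (qF 0 1 a b c d)).natDegree ≤ 3 := by rw [eZ_qF]; exact natDegree_cubic_le
  have hne : eZ k (qF 0 1 a b c d) ≠ 0 := by
    intro h0
    rw [eZ_qF] at h0
    have h3 := congrArg (fun p => coeff p 3) h0
    simp only [(cubic_coeffs _ _ _ _).2.2.2, coeff_zero] at h3
    have := phi_hm ha x
    rw [h3, map_zero] at this
    have := this.symm
    rcases mul_eq_zero.mp this with h5 | h5
    · exact pow_ne_zero _ X_ne_zero h5
    · exact h.tx.dat.t3.ev_ne h.tx.dat.a_ne (by simpa using h5)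
  have main : ∀ G H, eZ k (qF 0 1 a b c d) = G * H → Phi k x θ G = 0 → IsUnit H := by
    intro G H e hG
    have hG0 : G ≠ 0 := by rintro rfl; rw [zero_mul] at e; exact hne e
    have hH0 : H ≠ 0 := by rintro rfl; rw [mul_zero] at e; exact hne e
    have hG3 : 3 ≤ G.natDegree := by
      by_contra hlt
      exact hG0 (Phi_indep h.tx.dat.t3.1 (fun p q r => h.tx.indep p q r) (by omega) hG)
    rw [e, natDegree_mul hG0 hH0] at hdeg
    obtain ⟨g, rfl⟩ := natDegree_eq_zero.mp (show H.natDegree = 0 by omega)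
    have hdvd := C_dvd_iff_dvd_coeff g (eZ k (qF 0 1 a b c d)) |>.mp ⟨G, by rw [e, mul_comm]⟩
    rw [eZ_qF] at hdvd
    have d3 := hdvd 3
    have d2 := hdvd 2
    have d1 := hdvd 1
    have d0 := hdvd 0
    rw [(cubic_coeffs _ _ _ _).2.2.2] at d3
    rw [(cubic_coeffs _ _ _ _).2.2.1, dvd_neg] at d2
    rw [(cubic_coeffs _ _ _ _).2.1] at d1
    rw [(cubic_coeffs _ _ _ _).1, dvd_neg] at d0
    have l1 := h.tx.dat.line 0 1 (by decide) ha hb hc hd d3 d2 d1 d0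
    rw [hm_flip] at d0 d1 d2 d3
    have l2 := h.ts.dat.line 1 0 (by decide) (reflect_deg ha) (reflect_deg hb) (reflect_deg hc) (reflect_deg hd) d3 d2 d1 d0
    obtain ⟨r, hr, hr2⟩ := l2 1 one_ne_zero
    have : MvPolynomial.X 0 * MvPolynomial.X 1 * (g - MvPolynomial.C r) = 0 := by
      apply MvPolynomial.funext
      intro P
      by_cases h1 : P 1 = 0
      · simp [h1]
      obtain ⟨s, hs, hs2⟩ := l1 (P 1) h1
      have e1 := hs2 P rfl
      have e2 := hs2 ![1, P 1] rfl
      have e3 := hr2 ![1, P 1] rfl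
      simp [e1, ← e2, e3]
    have hg : g = MvPolynomial.C r := by
      rcases mul_eq_zero.mp this with h5 | h5
      · rcases mul_eq_zero.mp h5 with h5 | h5
        · exact (MvPolynomial.X_ne_zero _ h5).elim
        · exact (MvPolynomial.X_ne_zero _ h5).elim
      · exact sub_eq_zero.mp h5
    rw [hg]
    exact isUnit_C.mpr (hr.isUnit.map MvPolynomial.C)
  refine ⟨?_, ?_⟩
  · intro hu
    have := hu.map (Phi k x θ)
    rw [hroot] at this
    exact not_isUnit_zero this
  · intro G H e
    rw [e, map_mul] at hroot
    rcases mul_eq_zero.mp hroot with h0 | h0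
    · exact Or.inr (main G H e h0)
    · exact Or.inl (main H G (by rw [e, mul_comm]) h0)

theorem model_of_trigonal [IsAlgClosed k] (ht : Trigonal k K) (hg : HasGenusFive k K) : HasPlaneQuinticModel k K := by
  obtain ⟨x, θ, a, b, c, d, h⟩ := exists_two ht hg
  have ha : a.natDegree ≤ 2 := by have := h.ha; omega
  have hb := h.hb
  have hc := h.hc
  have hd : d.natDegree ≤ 5 := by have := h.hd; omega
  exact ⟨qF 0 1 a b c d, qF_homog _ _ _ _ _ _, h.irred, qF_sing0 ha hb hc hd, fun p _ hp => h.only_sing p hp,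
    h.node_or_cusp, θ⁻¹ * x, θ⁻¹, h.tx.gen, h.point⟩

end Trig

namespace Trig

variable {k K : Type*} [Field k] [Field K] [Algebra k K]

lemma aeval_scale {σ R : Type*} [CommRing R] [Algebra k R] {F : MvPolynomial σ k} {n : ℕ} (hF : F.IsHomogeneous n)
    (c : R) (v : σ → R) : MvPolynomial.aeval (fun i => c * v i) F = c ^ n * MvPolynomial.aeval v F := by
  rw [MvPolynomial.aeval_def, MvPolynomial.aeval_def, MvPolynomial.eval₂_eq, MvPolynomial.eval₂_eq, Finset.mul_sum]
  refine Finset.sum_congr rfl (fun d hd => ?_)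
  have h1 := hF (MvPolynomial.mem_support_iff.mp hd)
  have h2 : ∑ i ∈ d.support, d i = n := by
    rw [← h1, Finsupp.weight_apply]; simp [Finsupp.sum]
  simp only [mul_pow, Finset.prod_mul_distrib]
  rw [Finset.prod_pow_eq_pow_sum, h2]
  ring

lemma dehom_eq {R : Type*} [CommRing R] [Algebra k R] (x y : R) (F : MvPolynomial (Fin 3) k) :
    MvPolynomial.aeval ![x, y] (dehomZ k F) = MvPolynomial.aeval ![x, y, 1] F := by
  have : (MvPolynomial.aeval ![x, y]).comp (MvPolynomial.aeval (R := k)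
    (fun i : Fin 3 =>
      if i = 0 then (MvPolynomial.X 0 : MvPolynomial (Fin 2) k) else if i = 1 then MvPolynomial.X 1 else 1)) =
      MvPolynomial.aeval ![x, y, 1] := by
    apply MvPolynomial.algHom_ext
    intro i; fin_cases i <;> simp
  exact DFunLike.congr_fun this F

lemma dehom_eval1 (F : MvPolynomial (Fin 3) k) : dehomZ k F = (eZ k F).eval 1 := by
  have : (MvPolynomial.aeval (R := k)
    (fun i : Fin 3 =>
      if i = 0 then (MvPolynomial.X 0 : MvPolynomial (Fin 2) k) else if i = 1 then MvPolynomial.X 1 else 1)) =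
      ((aeval (1 : MvPolynomial (Fin 2) k) :
        (MvPolynomial (Fin 2) k)[X] →ₐ[MvPolynomial (Fin 2) k] _).restrictScalars k).comp (eZ k).toAlgHom := by
    apply MvPolynomial.algHom_ext
    intro i; fin_cases i
    · simp [eZ_X0]
    · simp [eZ_X1]
    · simp [eZ_X2]
  have := DFunLike.congr_fun this F
  exact this

lemma Phi_eZ (x θ : K) (F : MvPolynomial (Fin 3) k) :
    Phi k x θ (eZ k F) = MvPolynomial.aeval (![C x * X, X, C θ * X] : Fin 3 → K[X]) F := by
  have key : ∀ F : MvPolynomial (Fin 3) k, ((Phi k x θ).comp (eZ k).toRingEquiv.toRingHom) F =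
      (MvPolynomial.aeval (![C x * X, X, C θ * X] : Fin 3 → K[X])).toRingHom F := by
    intro F
    refine DFunLike.congr_fun ?_ F
    apply MvPolynomial.ringHom_ext
    · intro r
      have : eZ k (MvPolynomial.C r) = C (MvPolynomial.C r) := (eZ k).commutes r
      simp [this, Phi_C, phi]
    · intro i; fin_cases i
      · simp [eZ_X0, Phi_C, phi]
      · simp [eZ_X1, Phi_C, phi]
      · simp [eZ_X2, Phi_X]
  exact key F

lemma eZ_eq (F : MvPolynomial (Fin 3) k) :
    eZ k F = MvPolynomial.finSuccEquiv k 2 (MvPolynomial.rename (![1, 2, 0] : Fin 3 → Fin 3) F) := by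
  have : (eZ k).toAlgHom = (MvPolynomial.finSuccEquiv k 2).toAlgHom.comp
      (MvPolynomial.rename (![1, 2, 0] : Fin 3 → Fin 3)) := by
    apply MvPolynomial.algHom_ext
    intro i; fin_cases i
    · have := MvPolynomial.finSuccEquiv_X_succ (R := k) (n := 2) (j := 0)
      simp [eZ_X0]; exact this.symm
    · have := MvPolynomial.finSuccEquiv_X_succ (R := k) (n := 2) (j := 1)
      simp [eZ_X1]; exact this.symm
    · have := MvPolynomial.finSuccEquiv_X_zero (R := k) (n := 2)
      simp [eZ_X2, this]
  exact DFunLike.congr_fun this F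

lemma eZ_homog {F : MvPolynomial (Fin 3) k} {n : ℕ} (hF : F.IsHomogeneous n) (i j : ℕ) (h : i + j = n) :
    ((eZ k F).coeff i).IsHomogeneous j := by
  rw [eZ_eq]
  exact (hF.rename_isHomogeneous (f := ![1, 2, 0])).finSuccEquiv_coeff_isHomogeneous i j h

lemma eZ_deg {F : MvPolynomial (Fin 3) k} {n : ℕ} (hF : F.IsHomogeneous n) : (eZ k F).natDegree ≤ n := by
  rw [eZ_eq, MvPolynomial.natDegree_finSuccEquiv]
  exact (MvPolynomial.degreeOf_le_totalDegree _ _).trans (hF.rename_isHomogeneous (f := ![1, 2, 0])).totalDegree_le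

lemma sing_eval (F : MvPolynomial (Fin 3) k) : MvPolynomial.eval ![0, 0, 1] F = MvPolynomial.eval 0 (dehomZ k F) := by
  have := dehom_eq (R := k) 0 0 F
  have e : (![0, 0] : Fin 2 → k) = 0 := by ext i; fin_cases i <;> rfl
  rw [e] at this
  simpa [MvPolynomial.aeval_eq_eval] using this.symm

lemma sing_pderiv (i : Fin 2) (F : MvPolynomial (Fin 3) k) :
    MvPolynomial.eval ![0, 0, 1] (MvPolynomial.pderiv i.castSucc F) =
      MvPolynomial.eval 0 (MvPolynomial.pderiv i (dehomZ k F)) := by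
  induction F using MvPolynomial.induction_on with
  | C a => simp [dehomZ, MvPolynomial.algebraMap_eq]
  | add p q hp hq => 
    have : dehomZ k (p + q) = dehomZ k p + dehomZ k q := by simp [dehomZ]
    rw [this]; simp [hp, hq]
  | mul_X p j hp =>
    have : dehomZ k (p * MvPolynomial.X j) = dehomZ k p * dehomZ k (MvPolynomial.X j) := by simp [dehomZ]
    rw [this]
    have e := sing_eval p
    simp only [Derivation.leibniz, map_add, smul_eq_mul, map_mul, hp, e]
    fin_cases i <;> fin_cases j <;> simp [dehomZ, Pi.single_apply]

lemma dehom_component {F : MvPolynomial (Fin 3) k} (hF : F.IsHomogeneous 5) (i j : ℕ) (h : i + j = 5) :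
    MvPolynomial.homogeneousComponent j (dehomZ k F) = (eZ k F).coeff i := by
  rw [dehom_eval1, eval_eq_sum_range' (n := 6) (by have := eZ_deg hF; omega), map_sum]
  rw [Finset.sum_eq_single i]
  · rw [one_pow, mul_one, hcomp (eZ_homog hF i j h), if_pos rfl]
  · intro l hl hne
    have hl : l < 6 := by simpa using hl
    rw [one_pow, mul_one, hcomp (eZ_homog hF l (5 - l) (by omega)), if_neg (by omega)]
  · intro hi; simp at hi; omega

lemma eZ_cubic {F : MvPolynomial (Fin 3) k} (hF : F.IsHomogeneous 5) (hs : IsSingAt k F ![0, 0, 1])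
    (h2 : MvPolynomial.homogeneousComponent 2 (dehomZ k F) ≠ 0) :
    (eZ k F).natDegree = 3 ∧ (eZ k F).coeff 3 ≠ 0 := by
  have c3 : (eZ k F).coeff 3 ≠ 0 := by rwa [← dehom_component hF 3 2 rfl]
  have c5 : (eZ k F).coeff 5 = 0 := by
    rw [← dehom_component hF 5 0 rfl, MvPolynomial.homogeneousComponent_zero]
    have := hs.1
    rw [sing_eval, MvPolynomial.eval_zero] at this
    rw [MvPolynomial.constantCoeff_eq] at this
    rw [this, map_zero]
  have c4 : (eZ k F).coeff 4 = 0 := by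
    rw [← dehom_component hF 4 1 rfl]
    ext m
    rw [MvPolynomial.coeff_homogeneousComponent]
    split_ifs with hm
    · obtain ⟨i, rfl⟩ := Finsupp.sum_eq_one_iff m |>.mp hm
      have := hs.2 i.castSucc
      rw [sing_pderiv, MvPolynomial.eval_zero, MvPolynomial.constantCoeff_eq,
        MvPolynomial.coeff_pderiv] at this
      simpa using this
    · simp
  refine ⟨le_antisymm ?_ (le_natDegree_of_ne_zero c3), c3⟩
  rw [natDegree_le_iff_coeff_eq_zero]
  intro n hn
  by_cases h5 : 5 < n
  · exact coeff_eq_zero_of_natDegree_lt ((eZ_deg hF).trans_lt h5)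
  · obtain rfl | rfl : n = 4 ∨ n = 5 := by omega
    · exact c4
    · exact c5

/-- Bezout over the fraction field -/
lemma gauss_bezout {R : Type*} [CommRing R] [IsDomain R] [NormalizedGCDMonoid R] {F H : R[X]} (hF : Irreducible F)
    (hH : H ≠ 0) (hd : H.natDegree < F.natDegree) : ∃ (u v : R[X]) (D : R), D ≠ 0 ∧ u * F + v * H = C D := by
  have hp : F.IsPrimitive := hF.isPrimitive (by omega)
  let L := FractionRing R
  have hinj : Function.Injective (algebraMap R L) := IsFractionRing.injective R L
  have hirr := (hp.irreducible_iff_irreducible_map_fraction_map (K := L)).mp hF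
  have hH' : H.map (algebraMap R L) ≠ 0 := (Polynomial.map_ne_zero_iff hinj).mpr hH
  have hnd : ¬ F.map (algebraMap R L) ∣ H.map (algebraMap R L) := by
    intro h
    have := natDegree_le_of_dvd h hH'
    rw [natDegree_map_eq_of_injective hinj, natDegree_map_eq_of_injective hinj] at this
    omega
  obtain ⟨u, v, e⟩ := (hirr.coprime_iff_not_dvd.mpr hnd)
  obtain ⟨b, hb, hb'⟩ := IsLocalization.integerNormalization_spec (nonZeroDivisors R) u
  obtain ⟨c, hc, hc'⟩ := IsLocalization.integerNormalization_spec (nonZeroDivisors R) v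
  refine ⟨C c * IsLocalization.integerNormalization (nonZeroDivisors R) u,
    C b * IsLocalization.integerNormalization (nonZeroDivisors R) v, b * c,
    mul_ne_zero (nonZeroDivisors.ne_zero hb) (nonZeroDivisors.ne_zero hc), ?_⟩
  apply Polynomial.map_injective _ hinj
  simp only [Polynomial.map_add, Polynomial.map_mul, hb', hc', map_C, map_mul]
  rw [Algebra.smul_def, Algebra.smul_def, Polynomial.algebraMap_apply, Polynomial.algebraMap_apply]
  linear_combination (C (algebraMap R L b) * C (algebraMap R L c)) * e

end Trig

namespace Trig

variable {k K : Type*} [Field k] [Field K] [Algebra k K]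

lemma not_line [IsAlgClosed k] {F : MvPolynomial (Fin 3) k} (hF : F.IsHomogeneous 5) (hirr : Irreducible F)
    {w : K} (hw : Transcendental k w) (α β : k) (l w0 : MvPolynomial (Fin 3) k) (hl : l.IsHomogeneous 1)
    (h0 : l ∣ MvPolynomial.X 0 - MvPolynomial.C α * w0) (h1 : l ∣ MvPolynomial.X 1 - MvPolynomial.C β * w0)
    (hz : MvPolynomial.aeval ![algebraMap k K α * w, algebraMap k K β * w] (dehomZ k F) = 0) : False := by
  have hinf : Infinite k := IsAlgClosed.instInfinite
  -- vanishing along the line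
  have hv : ∀ s : k, MvPolynomial.eval ![α * s, β * s, 1] F = 0 := by
    intro s
    let f : k[X] := MvPolynomial.aeval (![C α * X, C β * X, 1] : Fin 3 → k[X]) F
    have e1 : aeval w f = 0 := by
      rw [dehom_eq] at hz
      rw [← hz]
      have : (aeval w : k[X] →ₐ[k] K).comp (MvPolynomial.aeval (![C α * X, C β * X, 1] : Fin 3 → k[X])) =
        MvPolynomial.aeval ![algebraMap k K α * w, algebraMap k K β * w, 1] := by
        apply MvPolynomial.algHom_ext
        intro i; fin_cases i <;> simp
      exact DFunLike.congr_fun this F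
    have e2 : f = 0 := (transcendental_iff.mp hw) f e1
    have : (aeval s : k[X] →ₐ[k] k).comp (MvPolynomial.aeval (![C α * X, C β * X, 1] : Fin 3 → k[X])) =
        MvPolynomial.aeval ![α * s, β * s, 1] := by
        apply MvPolynomial.algHom_ext
        intro i; fin_cases i <;> simp
    have e3 := DFunLike.congr_fun this F
    rw [AlgHom.comp_apply] at e3
    change aeval s f = _ at e3
    rw [e2, map_zero] at e3
    rw [← MvPolynomial.aeval_eq_eval]
    exact e3.symm
  let σ3 : MvPolynomial (Fin 3) k →ₐ[k] MvPolynomial (Fin 3) k :=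
    MvPolynomial.aeval ![MvPolynomial.C α * MvPolynomial.X 0, MvPolynomial.C β * MvPolynomial.X 0, MvPolynomial.X 2]
  have hσ : σ3 F = 0 := by
    have : MvPolynomial.X 2 * σ3 F = 0 := by
      apply MvPolynomial.funext
      intro P
      by_cases h2 : P 2 = 0
      · simp [h2]
      have e : (MvPolynomial.aeval P : _ →ₐ[k] k).comp σ3 = MvPolynomial.aeval
          (fun i => P 2 * (![α * (P 0 / P 2), β * (P 0 / P 2), 1] : Fin 3 → k) i) := by
        apply MvPolynomial.algHom_ext
        intro i; fin_cases i
        · simp [σ3]; field_simp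
        · simp [σ3]; field_simp
        · simp [σ3]
      have e4 := hv (P 0 / P 2)
      have e5 : MvPolynomial.eval P (σ3 F) = 0 := by
        have e6 : MvPolynomial.aeval P (σ3 F) = _ := DFunLike.congr_fun e F
        rw [aeval_scale hF, MvPolynomial.aeval_eq_eval, MvPolynomial.aeval_eq_eval] at e6
        refine e6.trans ?_
        rw [show _ = _ from e4, mul_zero]
      simp [e5]
    exact (mul_eq_zero.mp this).resolve_left (MvPolynomial.X_ne_zero _)
  have hdvd : l ∣ F := by
    rw [← Ideal.mem_span_singleton, ← Ideal.Quotient.eq_zero_iff_mem]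
    let mk := Ideal.Quotient.mkₐ k (Ideal.span {l})
    have hmk : ∀ z, l ∣ z → mk z = 0 := fun z hz =>
      Ideal.Quotient.eq_zero_iff_mem.mpr (Ideal.mem_span_singleton.mpr hz)
    have e : mk = (MvPolynomial.aeval ![mk w0, 0, mk (MvPolynomial.X 2)]).comp σ3 := by
      apply MvPolynomial.algHom_ext
      intro i; fin_cases i
      · have := hmk _ h0
        rw [map_sub, map_mul, sub_eq_zero] at this
        simp [σ3]
        rw [this, ← MvPolynomial.algebraMap_eq, AlgHom.commutes]
      · have := hmk _ h1
        rw [map_sub, map_mul, sub_eq_zero] at this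
        simp [σ3]
        rw [this, ← MvPolynomial.algebraMap_eq, AlgHom.commutes]
      · simp [σ3]
    have := DFunLike.congr_fun e F
    rw [AlgHom.comp_apply, hσ, map_zero] at this
    exact this
  obtain ⟨m, rfl⟩ := hdvd
  have hne := hirr.ne_zero
  have hl0 : l ≠ 0 := left_ne_zero_of_mul hne
  rcases hirr.isUnit_or_isUnit rfl with hu | hu
  · obtain ⟨r, hr, rfl⟩ := MvPolynomial.isUnit_iff_eq_C_of_isReduced.mp hu
    have := hl.inj_right (MvPolynomial.isHomogeneous_C _ _) hl0
    omega
  · obtain ⟨r, hr, rfl⟩ := MvPolynomial.isUnit_iff_eq_C_of_isReduced.mp hu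
    have := hF.inj_right (hl.mul (MvPolynomial.isHomogeneous_C _ _)) hne
    omega

lemma hm_ne {N : ℕ} {p : k[X]} (hp : p.natDegree ≤ N) {x : K} (hx : Transcendental k x) (h0 : p ≠ 0) :
    (hm N p (MvPolynomial.X 0) (MvPolynomial.X 1) : MvPolynomial (Fin 2) k) ≠ 0 := by
  intro h
  have := phi_hm hp x
  rw [h, map_zero] at this
  rcases mul_eq_zero.mp this.symm with h5 | h5
  · exact pow_ne_zero _ X_ne_zero h5
  · exact h0 (transcendental_iff.mp hx p (by simpa using h5))

lemma indep_of_irred [Infinite k] {t θ : K} (ht : Transcendental k t) {G : (MvPolynomial (Fin 2) k)[X]}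
    (hG : Irreducible G) (hd : G.natDegree = 3) (hr : Phi k t θ G = 0) (p q r : k[X])
    (h : aeval t p + aeval t q * θ + aeval t r * θ ^ 2 = 0) : p = 0 ∧ q = 0 ∧ r = 0 := by
  classical
  obtain ⟨N, hp, hq, hr'⟩ : ∃ N, p.natDegree ≤ N ∧ q.natDegree ≤ N ∧ r.natDegree ≤ N :=
    ⟨p.natDegree + q.natDegree + r.natDegree, by omega, by omega, by omega⟩
  set H : (MvPolynomial (Fin 2) k)[X] := C (hm N r (MvPolynomial.X 0) (MvPolynomial.X 1)) * X ^ 2 +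
    C (hm (N + 1) q (MvPolynomial.X 0) (MvPolynomial.X 1)) * X +
    C (hm (N + 2) p (MvPolynomial.X 0) (MvPolynomial.X 1)) with hH
  have hPhi : Phi k t θ H = 0 := by
    rw [hH]
    simp only [map_add, map_mul, map_pow, Phi_C, Phi_X, phi_hm hr', phi_hm (show q.natDegree ≤ N + 1 by omega),
      phi_hm (show p.natDegree ≤ N + 2 by omega)]
    have := congrArg (fun z => (X ^ (N + 2) * C z : K[X])) h
    simp only [map_add, map_mul, map_pow, map_zero, mul_zero] at this
    linear_combination this
  have hH0 : H = 0 := by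
    by_contra hne
    letI : NormalizedGCDMonoid (MvPolynomial (Fin 2) k) := Classical.choice inferInstance
    have hlt : H.natDegree < G.natDegree := by
      rw [hd, hH]; exact lt_of_le_of_lt natDegree_quadratic_le (by norm_num)
    obtain ⟨u, v, D, hD, e⟩ := gauss_bezout hG hne hlt
    have := congrArg (Phi k t θ) e
    rw [map_add, map_mul, map_mul, hr, hPhi, mul_zero, mul_zero, add_zero, Phi_C] at this
    exact hD (phi_inj ht this.symm)
  have c := cubic_coeffs 0 (hm N r (MvPolynomial.X 0) (MvPolynomial.X 1) : MvPolynomial (Fin 2) k)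
    (hm (N + 1) q (MvPolynomial.X 0) (MvPolynomial.X 1)) (hm (N + 2) p (MvPolynomial.X 0) (MvPolynomial.X 1))
  rw [map_zero, zero_mul, zero_add, ← hH, hH0] at c
  simp only [coeff_zero] at c
  refine ⟨?_, ?_, ?_⟩
  · by_contra h0
    exact hm_ne (show p.natDegree ≤ N + 2 by omega) ht h0 c.1.symm
  · by_contra h0
    exact hm_ne (show q.natDegree ≤ N + 1 by omega) ht h0 c.2.1.symm
  · by_contra h0
    exact hm_ne hr' ht h0 c.2.2.1.symm

/-- degree of the extension -/
lemma finrank_three {t θ : K} {E : IntermediateField k K} (hE : E = IntermediateField.adjoin k ({t} : Set K))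
    (hi : ∀ p q r : k[X], aeval t p + aeval t q * θ + aeval t r * θ ^ 2 = 0 → p = 0 ∧ q = 0 ∧ r = 0)
    {g3 g2 g1 g0 : E} (h3 : g3 ≠ 0)
    (hroot : (g3 : K) * θ ^ 3 + g2 * θ ^ 2 + g1 * θ + g0 = 0)
    (hgen : ∀ L : IntermediateField k K, t ∈ L → θ ∈ L → L = ⊤) :
    Module.finrank E K = 3 := by
  have htE : t ∈ E := by rw [hE]; exact mem_adjoin_simple_self k t
  let P : E[X] := C g3 * X ^ 3 + C g2 * X ^ 2 + C g1 * X + C g0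
  have hPd : P.natDegree = 3 := natDegree_cubic h3
  have hP0 : P ≠ 0 := by rintro h; rw [h] at hPd; simp at hPd
  have hPr : aeval θ P = 0 := by
    simp only [P, map_add, map_mul, map_pow, aeval_X, aeval_C]; exact hroot
  have halg : IsAlgebraic E θ := ⟨P, hP0, hPr⟩
  have hyint : IsIntegral E θ := halg.isIntegral
  have htop : E⟮θ⟯ = ⊤ := by
    have h1 := hgen (E⟮θ⟯.restrictScalars k) (by
      have : (algebraMap E K ⟨t, htE⟩) ∈ E⟮θ⟯ := IntermediateField.algebraMap_mem _ _
      exact this) (by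
      have : θ ∈ E⟮θ⟯ := mem_adjoin_simple_self E θ
      exact this)
    rw [eq_top_iff]
    intro z _
    have : z ∈ E⟮θ⟯.restrictScalars k := by rw [h1]; trivial
    exact this
  have hf : Module.finrank E K = (minpoly E θ).natDegree := by
    rw [← IntermediateField.adjoin.finrank hyint, htop, IntermediateField.finrank_top']
  rw [hf]
  apply le_antisymm
  · rw [← hPd]; exact natDegree_le_of_dvd (minpoly.dvd E θ hPr) hP0
  · by_contra hlt
    set m := minpoly E θ with hm'
    have hm0 : m ≠ 0 := minpoly.ne_zero hyint
    have hmr : aeval θ m = 0 := minpoly.aeval E θ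
    rw [aeval_eq_sum_range' (n := 3) (by omega)] at hmr
    simp only [Finset.sum_range_succ, Finset.sum_range_zero, zero_add, pow_zero, pow_one, Algebra.smul_def, mul_one] at hmr
    have hmem : ∀ e : E, (e : K) ∈ IntermediateField.adjoin k ({t} : Set K) := fun e => hE.le e.2
    obtain ⟨r0, s0, a0, b0⟩ := mem_adjoin_frac (hmem (m.coeff 0))
    obtain ⟨r1, s1, a1, b1⟩ := mem_adjoin_frac (hmem (m.coeff 1))
    obtain ⟨r2, s2, a2, b2⟩ := mem_adjoin_frac (hmem (m.coeff 2))
    have hmr : (m.coeff 0 : K) + m.coeff 1 * θ + m.coeff 2 * θ ^ 2 = 0 := hmr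
    have key := hi (s1 * s2 * r0) (s0 * s2 * r1) (s0 * s1 * r2) (by
      simp only [map_mul, ← b0, ← b1, ← b2]
      linear_combination (aeval t s0 * aeval t s1 * aeval t s2) * hmr)
    have z : ∀ {s : k[X]}, aeval t s ≠ 0 → s ≠ 0 := by rintro s h rfl; simp at h
    have n0 := z a0
    have n1 := z a1
    have n2 := z a2
    have y0 : r0 = 0 := by simpa [n0, n1, n2] using key.1
    have y1 : r1 = 0 := by simpa [n0, n1, n2] using key.2.1
    have y2 : r2 = 0 := by simpa [n0, n1, n2] using key.2.2
    rw [y0, map_zero] at b0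
    rw [y1, map_zero] at b1
    rw [y2, map_zero] at b2
    have c0 : m.coeff 0 = 0 := Subtype.ext ((mul_eq_zero.mp b0).resolve_left a0)
    have c1 : m.coeff 1 = 0 := Subtype.ext ((mul_eq_zero.mp b1).resolve_left a1)
    have c2 : m.coeff 2 = 0 := Subtype.ext ((mul_eq_zero.mp b2).resolve_left a2)
    apply hm0
    ext1 n
    rcases n with _ | _ | _ | n
    · exact c0
    · exact c1
    · exact c2
    · exact coeff_eq_zero_of_natDegree_lt (by omega)

theorem trigonal_of_model [IsAlgClosed k] (hff : ∃ x : K, Transcendental k x ∧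
      FiniteDimensional (IntermediateField.adjoin k ({x} : Set K)) K)
    (hrel : ∀ a : K, IsAlgebraic k a → ∃ c : k, algebraMap k K c = a)
    (h : HasPlaneQuinticModel k K) : Trigonal k K := by
  have hinf : Infinite k := IsAlgClosed.instInfinite
  obtain ⟨F, hF, hirr, hs, -, hnc, x, y, hgen, hxy⟩ := h
  have h2 : MvPolynomial.homogeneousComponent 2 (dehomZ k F) ≠ 0 := by
    rcases hnc with ⟨l1, l2, -, -, n1, n2, e, -⟩ | ⟨l, -, n, e, -⟩
    · rw [e]; exact mul_ne_zero n1 n2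
    · rw [e]; exact pow_ne_zero _ n
  obtain ⟨hd, hc3⟩ := eZ_cubic hF hs h2
  have hirr' : Irreducible (eZ k F) := (MulEquiv.irreducible_iff (eZ k)).mpr hirr
  have hgen' : ∀ L : IntermediateField k K, x ∈ L → y ∈ L → L = ⊤ := by
    intro L h1 h2
    rw [eq_top_iff, ← hgen, IntermediateField.adjoin_le_iff]
    rintro z (rfl | rfl)
    · exact h1
    · exact h2
  have htr : ∀ w : K, (∀ L : IntermediateField k K, w ∈ L → x ∈ L ∧ y ∈ L) → Transcendental k w := by
    intro w hw halg
    obtain ⟨c, rfl⟩ := hrel w halg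
    obtain ⟨h1, h2⟩ := hw ⊥ (IntermediateField.algebraMap_mem _ _)
    have hbot := hgen' ⊥ h1 h2
    obtain ⟨z, hz, -⟩ := hff
    have : z ∈ (⊥ : IntermediateField k K) := by rw [hbot]; trivial
    obtain ⟨c, rfl⟩ := IntermediateField.mem_bot.mp this
    exact hz (isAlgebraic_algebraMap c)
  have hX (i : Fin 3) := MvPolynomial.isHomogeneous_X k i
  have hy : y ≠ 0 := by
    rintro rfl
    refine not_line (w := x) hF hirr (htr x (fun L h => ⟨h, zero_mem L⟩)) 1 0 (MvPolynomial.X 1) (MvPolynomial.X 0) (hX 1)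
      ?_ ?_ ?_
    · simp
    · simp
    · simpa using hxy
  have ht : Transcendental k (x / y) := by
    intro halg
    obtain ⟨c, hc⟩ := hrel _ halg
    have hx : x = algebraMap k K c * y := by rw [hc]; field_simp
    refine not_line (w := y) hF hirr (htr y (fun L h => ⟨by rw [hx]; exact mul_mem (L.algebraMap_mem c) h, h⟩)) c 1
      (MvPolynomial.X 0 - MvPolynomial.C c * MvPolynomial.X 1) (MvPolynomial.X 1) ?_ ?_ ?_ ?_
    · refine (hX 0).sub ?_
      have := (MvPolynomial.isHomogeneous_C (Fin 3) c).mul (hX 1)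
      exact this
    · exact dvd_rfl
    · simp
    · rw [map_one, one_mul, ← hx]; exact hxy
  have hF1 : MvPolynomial.aeval ![x / y, 1, y⁻¹] F = 0 := by
    have := aeval_scale hF y⁻¹ ![x, y, 1]
    rw [← dehom_eq, hxy, mul_zero] at this
    rw [← this]
    congr 2
    ext i; fin_cases i
    · simp; field_simp
    · simp [hy]
    · simp
  have hPhi : Phi k (x / y) y⁻¹ (eZ k F) = 0 := by
    rw [Phi_eZ]
    have := aeval_scale (R := K[X]) hF X ![C (x / y), 1, C y⁻¹]
    have e : MvPolynomial.aeval (![C (x / y), 1, C y⁻¹] : Fin 3 → K[X]) F = 0 := by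
      have : ((Algebra.ofId K K[X]).restrictScalars k).comp (MvPolynomial.aeval ![x / y, 1, y⁻¹]) =
          MvPolynomial.aeval (![C (x / y), 1, C y⁻¹] : Fin 3 → K[X]) := by
        apply MvPolynomial.algHom_ext
        intro i; fin_cases i <;> simp [Algebra.ofId_apply]
      have := DFunLike.congr_fun this F
      rw [AlgHom.comp_apply, hF1, map_zero] at this
      exact this.symm
    rw [e, mul_zero] at this
    rw [← this]
    congr 2
    ext1 i; fin_cases i
    · exact mul_comm _ _
    · simp
    · exact mul_comm _ _
  refine ⟨x / y, ht, ?_⟩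
  set E := IntermediateField.adjoin k ({x / y} : Set K) with hE
  have htE : x / y ∈ E := mem_adjoin_simple_self k _
  let η : MvPolynomial (Fin 2) k →ₐ[k] E := MvPolynomial.aeval ![⟨x / y, htE⟩, 1]
  have hη : ∀ g, ((η g : E) : K) = MvPolynomial.aeval ![x / y, 1] g := by
    intro g
    have : E.val.comp η = MvPolynomial.aeval ![x / y, 1] := by
      apply MvPolynomial.algHom_ext
      intro i; fin_cases i <;> simp [η]
    exact DFunLike.congr_fun this g
  refine finrank_three (t := x / y) (θ := y⁻¹) hE (indep_of_irred ht hirr' hd hPhi)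
    (g3 := η ((eZ k F).coeff 3)) (g2 := η ((eZ k F).coeff 2)) (g1 := η ((eZ k F).coeff 1)) (g0 := η ((eZ k F).coeff 0))
    ?_ ?_ ?_
  · intro h0
    apply hc3
    apply phi_inj ht
    have e := aeval_scale (R := K[X]) (eZ_homog hF 3 2 rfl) X ![C (x / y), 1]
    have e1 : ((Algebra.ofId K K[X]).restrictScalars k).comp (MvPolynomial.aeval ![x / y, 1]) =
          MvPolynomial.aeval (R := k) (![C (x / y), 1] : Fin 2 → K[X]) := by
      apply MvPolynomial.algHom_ext
      intro i; fin_cases i <;> simp [Algebra.ofId_apply]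
    have e2 := DFunLike.congr_fun e1 ((eZ k F).coeff 3)
    rw [AlgHom.comp_apply, ← hη, h0, ZeroMemClass.coe_zero, map_zero] at e2
    rw [← e2, mul_zero] at e
    rw [← e, phi]
    congr 2
    ext1 i; fin_cases i
    · exact mul_comm _ _
    · simp
  · simp only [hη]
    have key : ∀ F : MvPolynomial (Fin 3) k, MvPolynomial.aeval ![x / y, 1, y⁻¹] F =
        (eZ k F).eval₂ (MvPolynomial.aeval (R := k) ![x / y, 1]).toRingHom y⁻¹ := by
      intro F
      have : (MvPolynomial.aeval (R := k) ![x / y, 1, y⁻¹]).toRingHom =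
        (eval₂RingHom (MvPolynomial.aeval (R := k) ![x / y, 1]).toRingHom y⁻¹).comp (eZ k).toRingEquiv.toRingHom := by
        apply MvPolynomial.ringHom_ext
        · intro r
          have : eZ k (MvPolynomial.C r) = C (MvPolynomial.C r) := (eZ k).commutes r
          simp [this]
        · intro i; fin_cases i
          · simp [eZ_X0]
          · simp [eZ_X1]
          · simp [eZ_X2]
      exact DFunLike.congr_fun this F
    have := key F
    rw [hF1, eval₂_eq_sum_range, hd] at this
    simp only [Finset.sum_range_succ, Finset.sum_range_zero, zero_add, pow_zero, pow_one, mul_one,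
      AlgHom.toRingHom_eq_coe, RingHom.coe_coe] at this
    rw [this]; ring
  · intro L h1 h2
    have hy' : y ∈ L := by simpa using inv_mem h2
    refine hgen' L ?_ hy'
    have := mul_mem h1 hy'
    rwa [div_mul_cancel₀ _ hy] at this

end Trig

/-- a smooth projective curve C of genus 5 over an algebraically closed
field k — presented by its function field K, a finitely generated extension of k of
transcendence degree 1 with k algebraically closed in K, whose space of global regular
differentials has dimension 5 — is trigonal (admits a degree-3 map to P¹) if and only if
it can be represented as a plane quintic with precisely one singularity of delta
invariant 1 (a node or an ordinary cusp). -/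
theorem stmt_10 (k K : Type*) [Field k] [IsAlgClosed k] [Field K] [Algebra k K]
    (hff : ∃ x : K, Transcendental k x ∧
      FiniteDimensional (IntermediateField.adjoin k ({x} : Set K)) K)
    (hrel : ∀ a : K, IsAlgebraic k a → ∃ c : k, algebraMap k K c = a)
    (hgenus : HasGenusFive k K) :
    Trigonal k K ↔ HasPlaneQuinticModel k K := by
  exact ⟨fun h => Trig.model_of_trigonal h hgenus, fun h => Trig.trigonal_of_model hff hrel h⟩

end
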